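/- For n ≥ 3, let Z_n be the zig-zag graph: the simple graph on Fin (n+1) in which distinct vertices i and j are adjacent if and only if |i − j| = 1, or |i − j| = 2, or {i, j} = {0, n} (so Z_n is a linear chain of n−1 triangles whose two end vertices are joined by an edge; it has 2n edges and loop number n). Let e₀ be the edge {0, n}. Then the function u ↦ Ψ_{Z_n}(x_u)⁻² is Lebesgue integrable on the positive orthant of functions u : E(Z_n) \ {e₀} → (0, ∞), and its integral equals 4 · (2n−2)!/(n! · (n−1)!) · (1 − (1 − (−1)ⁿ)/2^{2n−3}) · ζ(2n−3), where ζ(m) = ∑_{k ≥ 1} k^{−m}. -/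

import Mathlib

open MeasureTheory
open scoped Classical

/-- The Kirchhoff graph polynomial: the sum over spanning trees `T` of `G` of the
product of `x e` over all edges `e` of `G` not in `T`. -/
noncomputable def kirchhoff {V : Type*} [Fintype V] (G : SimpleGraph V)
    (x : G.edgeSet → ℝ) : ℝ :=
  ∑ T ∈ Finset.univ.filter (fun T : SimpleGraph V => T ≤ G ∧ T.IsTree),
    ∏ e : G.edgeSet, if (e : Sym2 V) ∈ T.edgeSet then 1 else x e

/-- The affine chart `x(e₀) = 1`: extend `u : E \ {e₀} → ℝ` to `E → ℝ` by
sending `e₀` to `1`. -/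
noncomputable def chart {V : Type*} [Fintype V] (G : SimpleGraph V) (e₀ : G.edgeSet)
    (u : {e : G.edgeSet // e ≠ e₀} → ℝ) : G.edgeSet → ℝ :=
  fun e => if h : e = e₀ then 1 else u ⟨e, h⟩

/-- The zig-zag graph `Z_n` on `Fin (n+1)`: distinct vertices `i, j` are
adjacent iff `|i − j| = 1`, or `|i − j| = 2`, or `{i, j} = {0, n}`. -/
def zigzag (n : ℕ) : SimpleGraph (Fin (n + 1)) :=
  SimpleGraph.fromRel (fun i j =>
    ((i : ℤ) - (j : ℤ)).natAbs = 1 ∨ ((i : ℤ) - (j : ℤ)).natAbs = 2 ∨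
      ((i : ℕ) = 0 ∧ (j : ℕ) = n))

open scoped ENNReal

/-- `f` sends each nonzero vertex to a parent; it is a rooted forest towards `0` when some depth
function decreases along it. -/
def HasDepth {n : ℕ} (f : Fin n → Fin (n + 1)) : Prop :=
  ∃ d : Fin (n + 1) → ℕ, ∀ v : Fin n, d (f v) < d v.succ

/-- The row-incidence matrix of the functional graph `f`. -/
def parentMatrix {n : ℕ} (f : Fin n → Fin (n + 1)) : Matrix (Fin n) (Fin n) ℝ :=
  Matrix.of fun v u => (if v = u then 1 else 0) - (if f v = u.succ then 1 else 0)

lemma det_parentMatrix_of_hasDepth {n : ℕ} {f : Fin n → Fin (n + 1)} (h : HasDepth f) :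
    (parentMatrix f).det = 1 := by
  obtain ⟨d, hd⟩ := h
  have key : (parentMatrix f).BlockTriangular (fun v => OrderDual.toDual (d v.succ)) := by
    intro v u huv
    have huv' : d v.succ < d u.succ := huv
    have h1 : v ≠ u := by rintro rfl; exact lt_irrefl _ huv'
    have h2 : f v ≠ u.succ := by
      intro h; have := hd v; rw [h] at this; omega
    simp [parentMatrix, h1, h2]
  rw [key.det]
  refine Finset.prod_eq_one fun k _ => ?_
  have : (parentMatrix f).toSquareBlock (fun v => OrderDual.toDual (d v.succ)) k = 1 := by
    ext ⟨v, hv⟩ ⟨u, hu⟩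
    have h2 : f v ≠ u.succ := by
      intro h; have := hd v; rw [h] at this
      have e : d v.succ = d u.succ := OrderDual.toDual.injective (hv.trans hu.symm)
      omega
    simp [parentMatrix, Matrix.toSquareBlock_def, h2, Matrix.one_apply]
  rw [this, Matrix.det_one]

lemma det_parentMatrix_of_not_hasDepth {n : ℕ} {f : Fin n → Fin (n + 1)} (h : ¬ HasDepth f) :
    (parentMatrix f).det = 0 := by
  set F : Fin (n + 1) → Fin (n + 1) := Fin.cons 0 f with hF
  have hF0 : F 0 = 0 := rfl
  have hFs : ∀ v : Fin n, F v.succ = f v := fun v => rfl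
  have hex : ∃ v, ∀ k, F^[k] v ≠ 0 := by
    by_contra! hc
    apply h
    refine ⟨fun v => Nat.find (hc v), fun v => ?_⟩
    have h1 := Nat.find_spec (hc v.succ)
    have h2 : Nat.find (hc v.succ) ≠ 0 := by
      intro h0
      rw [h0] at h1
      exact Fin.succ_ne_zero v h1
    obtain ⟨k, hk⟩ := Nat.exists_eq_succ_of_ne_zero h2
    rw [hk, Function.iterate_succ_apply, hFs] at h1
    have := Nat.find_min' (hc (f v)) h1
    show Nat.find (hc (f v)) < Nat.find (hc v.succ)
    omega
  obtain ⟨v0, hv0⟩ := hex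
  obtain ⟨w0, rfl⟩ : ∃ w : Fin n, v0 = w.succ :=
    ⟨v0.pred (by simpa using hv0 0), by simp⟩
  let χ : Fin (n + 1) → ℝ := fun v => if ∀ k, F^[k] v ≠ 0 then 1 else 0
  have hχF : ∀ v, χ (F v) = χ v := by
    intro v
    have : (∀ k, F^[k] (F v) ≠ 0) ↔ ∀ k, F^[k] v ≠ 0 := by
      constructor
      · intro h k hk
        have := h k
        rw [← Function.iterate_succ_apply, Function.iterate_succ_apply', hk, hF0] at this
        exact this rfl
      · intro h k
        rw [← Function.iterate_succ_apply]
        exact h _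
    simp only [χ, this]
  have hχ0 : χ 0 = 0 := by
    have : ¬ ∀ k, F^[k] 0 ≠ 0 := fun h => h 0 rfl
    simp only [χ, this, if_false]
  apply Matrix.exists_mulVec_eq_zero_iff.1
  refine ⟨fun u => χ u.succ, ?_, ?_⟩
  · intro h0
    have := congrFun h0 w0
    simp only [χ, Pi.zero_apply] at this
    rw [if_pos hv0] at this
    exact one_ne_zero this
  · ext v
    simp only [Matrix.mulVec, dotProduct, parentMatrix, Matrix.of_apply, sub_mul, ite_mul, one_mul,
      zero_mul, Finset.sum_sub_distrib, Finset.sum_ite_eq, Finset.mem_univ, if_true, Pi.zero_apply]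
    have : ∑ u : Fin n, (if f v = u.succ then χ u.succ else 0) = χ (f v) := by
      have e : ∑ u : Fin (n + 1), (if f v = u then χ u else 0) = χ (f v) := by simp
      rw [Fin.sum_univ_succ] at e
      rw [← e, hχ0]; simp
    rw [this, ← hFs, hχF, sub_self]

/-- The graph of edges joining each nonzero vertex to its parent. -/
def parentGraph {n : ℕ} (f : Fin n → Fin (n + 1)) : SimpleGraph (Fin (n + 1)) :=
  SimpleGraph.fromEdgeSet (Set.range fun v => s(v.succ, f v))

lemma HasDepth.ne {n : ℕ} {f : Fin n → Fin (n + 1)} (h : HasDepth f) (v : Fin n) :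
    v.succ ≠ f v := by
  obtain ⟨d, hd⟩ := h
  intro h; have := hd v; rw [← h] at this; exact lt_irrefl _ this

lemma HasDepth.edgeSet_parentGraph {n : ℕ} {f : Fin n → Fin (n + 1)} (h : HasDepth f) :
    (parentGraph f).edgeSet = Set.range fun v => s(v.succ, f v) := by
  rw [parentGraph, SimpleGraph.edgeSet_fromEdgeSet]
  ext e
  simp only [Set.mem_sdiff, Set.mem_range, and_iff_left_iff_imp]
  rintro ⟨v, rfl⟩
  simpa using h.ne v

lemma HasDepth.adj {n : ℕ} {f : Fin n → Fin (n + 1)} (h : HasDepth f) (v : Fin n) :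
    (parentGraph f).Adj v.succ (f v) := by
  rw [← SimpleGraph.mem_edgeSet, h.edgeSet_parentGraph]
  exact ⟨v, rfl⟩

lemma HasDepth.connected {n : ℕ} {f : Fin n → Fin (n + 1)} (h : HasDepth f) :
    (parentGraph f).Connected := by
  have hr : ∀ v, (parentGraph f).Reachable v 0 := by
    have h' := h
    obtain ⟨d, hd⟩ := h
    intro v
    induction hk : d v using Nat.strong_induction_on generalizing v with
    | _ k ih =>
      rcases Fin.eq_zero_or_eq_succ v with rfl | ⟨w, rfl⟩
      · exact SimpleGraph.Reachable.refl _
      · exact (h'.adj w).reachable.trans (ih _ (hk ▸ hd w) _ rfl)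
  exact ⟨fun u v => (hr u).trans (hr v).symm⟩

lemma HasDepth.isTree {n : ℕ} {f : Fin n → Fin (n + 1)} (h : HasDepth f) :
    (parentGraph f).IsTree ∧ Function.Injective fun v : Fin n => s(v.succ, f v) := by
  have h1 := h.connected.card_vert_le_card_edgeSet_add_one
  have h2 := h.edgeSet_parentGraph
  have h3 : Nat.card (parentGraph f).edgeSet ≤ n := by
    rw [h2]
    simpa using Finite.card_range_le (fun v : Fin n => s(v.succ, f v))
  have h4 : Nat.card (parentGraph f).edgeSet = n := by
    simp only [Nat.card_eq_fintype_card, Fintype.card_fin] at h1 h3 ⊢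
    omega
  refine ⟨?_, ?_⟩
  · rw [SimpleGraph.isTree_iff_connected_and_card]
    refine ⟨h.connected, ?_⟩
    rw [h4]; simp
  · rw [h2] at h4
    have h5 : (Finset.univ.image fun v : Fin n => s(v.succ, f v)).card
        = (Finset.univ : Finset (Fin n)).card := by
      rw [Finset.card_univ, Fintype.card_fin]
      refine Eq.trans ?_ h4
      rw [← Set.image_univ, ← Finset.coe_univ, ← Finset.coe_image, Nat.card_coe_set_eq,
        Set.ncard_coe_finset]
    intro a b hab
    exact Finset.card_image_iff.1 h5 (Finset.mem_coe.2 (Finset.mem_univ a))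
      (Finset.mem_coe.2 (Finset.mem_univ b)) hab

lemma HasDepth.eq_of_parentGraph_eq {n : ℕ} {f g : Fin n → Fin (n + 1)} (hf : HasDepth f)
    (hg : HasDepth g) (h : parentGraph f = parentGraph g) : f = g := by
  have hf' := hf
  obtain ⟨d, hd⟩ := hf
  funext v
  induction hk : d v.succ using Nat.strong_induction_on generalizing v with
  | _ k ih =>
    have hadj := hf'.adj v
    rw [h, ← SimpleGraph.mem_edgeSet, hg.edgeSet_parentGraph] at hadj
    obtain ⟨u, hu⟩ := hadj
    simp only [Sym2.eq_iff] at hu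
    rcases hu with ⟨h1, h2⟩ | ⟨h1, h2⟩
    · rw [Fin.succ_inj] at h1
      subst h1; exact h2.symm
    · have h3 := ih (d u.succ) (by rw [← hk, h1]; exact hd v) u rfl
      have h4 := hd u
      have h5 := hd v
      rw [h3, h2] at h4
      rw [← h1] at h5
      omega

lemma exists_hasDepth_of_isTree {n : ℕ} {T : SimpleGraph (Fin (n + 1))} (hT : T.IsTree) :
    ∃ f : Fin n → Fin (n + 1), HasDepth f ∧ parentGraph f = T := by
  have hc := hT.1
  have hstep : ∀ v : Fin n, ∃ u, T.Adj v.succ u ∧ T.dist u 0 < T.dist v.succ 0 := by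
    intro v
    obtain ⟨p, hp⟩ := hc.exists_walk_length_eq_dist v.succ 0
    cases p with
    | cons hadj q =>
      refine ⟨_, hadj, ?_⟩
      rw [← hp, SimpleGraph.Walk.length_cons]
      exact Nat.lt_succ_of_le (SimpleGraph.dist_le q)
  choose f hf1 hf2 using hstep
  have hd : HasDepth f := ⟨fun u => T.dist u 0, hf2⟩
  refine ⟨f, hd, ?_⟩
  have hle : parentGraph f ≤ T := by
    rw [← SimpleGraph.edgeSet_subset_edgeSet, hd.edgeSet_parentGraph]
    rintro _ ⟨v, rfl⟩
    exact hf1 v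
  have := SimpleGraph.isTree_iff_minimal_connected.1 hT
  exact le_antisymm hle (this.2 hd.connected hle)

/-- The Laplacian with the row and column of vertex `0` removed. -/
def reducedLaplacian {n : ℕ} (y : Sym2 (Fin (n + 1)) → ℝ) : Matrix (Fin n) (Fin n) ℝ :=
  Matrix.of fun v u => (if v = u then ∑ x, y s(v.succ, x) else 0) - y s(v.succ, u.succ)

/-- The matrix-tree theorem. -/
theorem det_reducedLaplacian {n : ℕ} (y : Sym2 (Fin (n + 1)) → ℝ) :
    (reducedLaplacian y).det =
      ∑ T ∈ Finset.univ.filter (fun T : SimpleGraph (Fin (n + 1)) => T.IsTree),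
        ∏ e ∈ T.edgeFinset, y e := by
  have hL : reducedLaplacian y = fun v : Fin n => ∑ x : Fin (n + 1), y s(v.succ, x) •
      (fun u : Fin n => (if v = u then (1 : ℝ) else 0) - (if x = u.succ then 1 else 0)) := by
    ext v u
    simp only [reducedLaplacian, Matrix.of_apply, Finset.sum_apply, Pi.smul_apply, smul_eq_mul,
      mul_sub, mul_ite, mul_one, mul_zero, Finset.sum_sub_distrib, Finset.sum_ite_eq',
      Finset.mem_univ, if_true]
    congr 1
    split_ifs <;> simp
  have hdet : (reducedLaplacian y).det
      = ∑ f : Fin n → Fin (n + 1), (∏ v, y s(v.succ, f v)) * (parentMatrix f).det := by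
    rw [hL]
    show Matrix.detRowAlternating.toMultilinearMap _ = _
    rw [MultilinearMap.map_sum]
    refine Finset.sum_congr rfl fun f _ => ?_
    rw [MultilinearMap.map_smul_univ]
    rfl
  have hite : ∀ f : Fin n → Fin (n + 1), (∏ v, y s(v.succ, f v)) * (parentMatrix f).det
      = if HasDepth f then ∏ v, y s(v.succ, f v) else 0 := by
    intro f
    split_ifs with h
    · rw [det_parentMatrix_of_hasDepth h, mul_one]
    · rw [det_parentMatrix_of_not_hasDepth h, mul_zero]
  rw [hdet, Finset.sum_congr rfl fun f _ => hite f, ← Finset.sum_filter]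
  refine Finset.sum_bij (fun f _ => parentGraph f) ?_ ?_ ?_ ?_
  · intro f hf
    simpa using (HasDepth.isTree (by simpa using hf)).1
  · intro f hf g hg h
    exact HasDepth.eq_of_parentGraph_eq (by simpa using hf) (by simpa using hg) h
  · intro T hT
    obtain ⟨f, hf, rfl⟩ := exists_hasDepth_of_isTree (by simpa using hT)
    exact ⟨f, by simpa using hf, rfl⟩
  · intro f hf
    have hf : HasDepth f := by simpa using hf
    have : (parentGraph f).edgeFinset = Finset.univ.image fun v : Fin n => s(v.succ, f v) := by
      ext e
      rw [SimpleGraph.mem_edgeFinset, hf.edgeSet_parentGraph]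
      simp
    rw [this, Finset.prod_image fun a _ b _ h => hf.isTree.2 h]

/-- The source of an edge of the zig-zag graph: chords on the left, path edges on the right. -/
def zzSrc (m : ℕ) : Fin (m + 1) ⊕ Fin (m + 1) → Fin (m + 2) :=
  Sum.elim (Fin.cons 0 fun c : Fin m => c.castSucc.castSucc) Fin.castSucc

/-- The target of an edge of the zig-zag graph. -/
def zzTgt (m : ℕ) : Fin (m + 1) ⊕ Fin (m + 1) → Fin (m + 2) :=
  Sum.elim (Fin.cons (Fin.last _) fun c : Fin m => c.succ.succ) Fin.succ

/-- The edges of the zig-zag graph. -/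
def zzEdge (m : ℕ) (j : Fin (m + 1) ⊕ Fin (m + 1)) : Sym2 (Fin (m + 2)) :=
  s(zzSrc m j, zzTgt m j)

lemma zzSrc_ne_zzTgt (m : ℕ) (j : Fin (m + 1) ⊕ Fin (m + 1)) : zzSrc m j ≠ zzTgt m j := by
  rcases j with j | j
  · refine Fin.cases ?_ (fun c => ?_) j <;> simp [zzSrc, zzTgt, Fin.ext_iff]
    omega
  · simp [zzSrc, zzTgt, Fin.ext_iff]

lemma zzEdge_injective {m : ℕ} (hm : 2 ≤ m) : Function.Injective (zzEdge m) := by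
  intro i j h
  rcases i with i | i <;> rcases j with j | j
  · revert h
    refine Fin.cases ?_ (fun c => ?_) i <;> refine Fin.cases ?_ (fun d => ?_) j <;>
      simp only [zzEdge, zzSrc, zzTgt, Sum.elim_inl, Fin.cons_zero, Fin.cons_succ, Sym2.eq_iff,
        Fin.ext_iff, Fin.val_succ, Fin.val_castSucc, Fin.val_zero, Fin.val_last,
        Sum.inl.injEq, implies_true] <;> omega
  · revert h
    refine Fin.cases ?_ (fun c => ?_) i <;>
      simp only [zzEdge, zzSrc, zzTgt, Sum.elim_inl, Sum.elim_inr, Fin.cons_zero, Fin.cons_succ,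
        Sym2.eq_iff, Fin.ext_iff, Fin.val_succ, Fin.val_castSucc, Fin.val_zero, Fin.val_last,
        reduceCtorEq] <;> omega
  · revert h
    refine Fin.cases ?_ (fun c => ?_) j <;>
      simp only [zzEdge, zzSrc, zzTgt, Sum.elim_inl, Sum.elim_inr, Fin.cons_zero, Fin.cons_succ,
        Sym2.eq_iff, Fin.ext_iff, Fin.val_succ, Fin.val_castSucc, Fin.val_zero, Fin.val_last,
        reduceCtorEq] <;> omega
  · revert h
    simp only [zzEdge, zzSrc, zzTgt, Sum.elim_inr, Sym2.eq_iff, Fin.ext_iff, Fin.val_succ,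
      Fin.val_castSucc, Sum.inr.injEq]
    omega

lemma zzEdge_mem {m : ℕ} (j : Fin (m + 1) ⊕ Fin (m + 1)) :
    zzEdge m j ∈ (zigzag (m + 1)).edgeSet := by
  rw [zzEdge, SimpleGraph.mem_edgeSet, zigzag, SimpleGraph.fromRel_adj]
  refine ⟨zzSrc_ne_zzTgt m j, ?_⟩
  rcases j with j | j
  · refine Fin.cases ?_ (fun c => ?_) j <;> simp [zzSrc, zzTgt]
    omega
  · simp [zzSrc, zzTgt]

lemma exists_zzEdge {m : ℕ} {e : Sym2 (Fin (m + 2))} (he : e ∈ (zigzag (m + 1)).edgeSet) :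
    ∃ j, zzEdge m j = e := by
  induction e using Sym2.ind with
  | _ a b =>
  have key : ∀ a b : Fin (m + 2), a < b → (zigzag (m + 1)).Adj a b →
      ∃ j, zzEdge m j = s(a, b) := by
    intro a b hab h
    rw [zigzag, SimpleGraph.fromRel_adj] at h
    have h' : (b : ℕ) = a + 1 ∨ (b : ℕ) = a + 2 ∨ ((a : ℕ) = 0 ∧ (b : ℕ) = m + 1) := by
      have := h.2
      have := Fin.lt_def.1 hab
      omega
    have hb := b.2
    rcases h' with h' | h' | h'
    · refine ⟨Sum.inr ⟨a, by omega⟩, ?_⟩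
      simp [zzEdge, zzSrc, zzTgt, Fin.ext_iff, h']
    · refine ⟨Sum.inl (Fin.succ ⟨a, by omega⟩), ?_⟩
      simp only [zzEdge, zzSrc, zzTgt, Sum.elim_inl, Fin.cons_succ, Sym2.eq_iff, Fin.ext_iff,
        Fin.val_succ, Fin.val_castSucc]
      exact Or.inl ⟨trivial, by omega⟩
    · refine ⟨Sum.inl 0, ?_⟩
      simp [zzEdge, zzSrc, zzTgt, Fin.ext_iff, h'.1, h'.2]
  rw [SimpleGraph.mem_edgeSet] at he
  rcases lt_trichotomy a b with h | h | h
  · exact key a b h he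
  · exact absurd h he.ne
  · obtain ⟨j, hj⟩ := key b a h he.symm
    exact ⟨j, hj.trans Sym2.eq_swap⟩

/-- The edges of the zig-zag graph, enumerated. -/
noncomputable def zzEquiv {m : ℕ} (hm : 2 ≤ m) :
    Fin (m + 1) ⊕ Fin (m + 1) ≃ (zigzag (m + 1)).edgeSet :=
  Equiv.ofBijective (fun j => ⟨zzEdge m j, zzEdge_mem j⟩)
    ⟨fun _ _ h => zzEdge_injective hm (congrArg Subtype.val h),
      fun e => (exists_zzEdge e.2).imp fun _ hj => Subtype.ext hj⟩

lemma coe_zzEquiv {m : ℕ} (hm : 2 ≤ m) (j : Fin (m + 1) ⊕ Fin (m + 1)) :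
    (zzEquiv hm j : Sym2 (Fin (m + 2))) = zzEdge m j := rfl

/-- The signed incidence of vertex `v + 1` in the pair `(a, b)`. -/
def incid {n : ℕ} (a b : Fin (n + 1)) (v : Fin n) : ℝ :=
  (if b = v.succ then 1 else 0) - (if a = v.succ then 1 else 0)

lemma reducedLaplacian_sum {n : ℕ} {ι : Type*} [Fintype ι] (a b : ι → Fin (n + 1))
    (hab : ∀ j, a j ≠ b j) (w : ι → ℝ) (v u : Fin n) :
    reducedLaplacian (fun e => ∑ j, if s(a j, b j) = e then w j else 0) v u =
      ∑ j, w j * (incid (a j) (b j) v * incid (a j) (b j) u) := by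
  have h1 : ∀ j, ∑ x, (if s(a j, b j) = s(v.succ, x) then w j else 0)
      = w j * ((if b j = v.succ then 1 else 0) + (if a j = v.succ then 1 else 0)) := by
    intro j
    have : ∀ x, (if s(a j, b j) = s(v.succ, x) then w j else 0) =
        (if b j = v.succ then (if a j = x then w j else 0) else 0) +
        (if a j = v.succ then (if b j = x then w j else 0) else 0) := by
      intro x
      have hj := hab j
      by_cases h1 : a j = v.succ <;> by_cases h2 : b j = v.succ <;>
        by_cases h3 : a j = x <;> by_cases h4 : b j = x <;> simp_all
    simp only [this, Finset.sum_add_distrib]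
    split_ifs <;> simp [mul_add]
  simp only [reducedLaplacian, Matrix.of_apply]
  rw [Finset.sum_comm, Finset.sum_congr rfl fun j _ => h1 j]
  by_cases hvu : v = u
  · subst hvu
    rw [if_pos rfl, ← Finset.sum_sub_distrib]
    refine Finset.sum_congr rfl fun j _ => ?_
    have hj := hab j
    by_cases h1 : a j = v.succ <;> by_cases h2 : b j = v.succ <;>
      simp_all [incid]
  · rw [if_neg hvu, zero_sub, ← Finset.sum_neg_distrib]
    refine Finset.sum_congr rfl fun j _ => ?_
    have hj := hab j
    have hvu' : v.succ ≠ u.succ := fun h => hvu (Fin.succ_injective _ h)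
    simp only [incid, Sym2.eq_iff]
    by_cases h1 : a j = v.succ <;> by_cases h2 : b j = v.succ <;>
      by_cases h3 : a j = u.succ <;> by_cases h4 : b j = u.succ <;> simp_all

/-- Expression of the chords in terms of the path: the row of path edge `i`. -/
def zzMat (m : ℕ) : Matrix (Fin (m + 1)) (Fin (m + 1)) ℝ :=
  Matrix.of fun i => Fin.cons 1 fun c : Fin m =>
    -((if i = c.castSucc then 1 else 0) + (if i = c.succ then 1 else 0))

/-- The incidence matrix of the path. -/
def pathMat (m : ℕ) : Matrix (Fin (m + 1)) (Fin (m + 1)) ℝ :=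
  Matrix.of fun v i => incid i.castSucc i.succ v

lemma det_pathMat (m : ℕ) : (pathMat m).det = 1 := by
  rw [Matrix.det_of_isUpperTriangular]
  · refine Finset.prod_eq_one fun i _ => ?_
    simp [pathMat, incid, Fin.ext_iff]
  · intro v u huv
    have : u < v := huv
    simp only [pathMat, incid, Matrix.of_apply, Fin.ext_iff, Fin.val_succ, Fin.val_castSucc]
    have := Fin.lt_def.1 this
    rw [if_neg (by omega), if_neg (by omega), sub_self]

lemma pathMat_mul_zzMat (m : ℕ) (v c : Fin (m + 1)) :
    (pathMat m * zzMat m) v c =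
      (if c = 0 then 1 else -1) * incid (zzSrc m (Sum.inl c)) (zzTgt m (Sum.inl c)) v := by
  rw [Matrix.mul_apply]
  refine Fin.cases ?_ (fun d => ?_) c
  · have h1 := Fin.sum_univ_castSucc fun w : Fin (m + 2) => if w = v.succ then (1 : ℝ) else 0
    have h2 := Fin.sum_univ_succ fun w : Fin (m + 2) => if w = v.succ then (1 : ℝ) else 0
    simp only [pathMat, zzMat, Matrix.of_apply, Fin.cons_zero, mul_one, incid, zzSrc, zzTgt,
      Sum.elim_inl, if_true, one_mul, Finset.sum_sub_distrib]
    linarith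
  · simp only [pathMat, zzMat, Matrix.of_apply, Fin.cons_succ, mul_neg, mul_add, mul_ite, mul_one,
      mul_zero, Finset.sum_neg_distrib, Finset.sum_add_distrib, Finset.sum_ite_eq',
      Finset.mem_univ, if_true, incid, zzSrc, zzTgt, Sum.elim_inl, Fin.succ_ne_zero, if_false,
      Fin.succ_castSucc]
    ring

/-- The loop matrix of the zig-zag graph. -/
def loopMat (m : ℕ) (x : Fin (m + 1) ⊕ Fin (m + 1) → ℝ) : Matrix (Fin (m + 1)) (Fin (m + 1)) ℝ :=
  Matrix.diagonal (fun c => x (Sum.inl c)) +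
    (zzMat m).transpose * Matrix.diagonal (fun i => x (Sum.inr i)) * zzMat m

lemma prod_mul_det_reducedLaplacian (m : ℕ) (x : Fin (m + 1) ⊕ Fin (m + 1) → ℝ)
    (hx : ∀ j, 0 < x j) :
    (∏ j, x j) * (reducedLaplacian
      (fun e => ∑ j, if zzEdge m j = e then (x j)⁻¹ else 0)).det = (loopMat m x).det := by
  set D := pathMat m
  set N := zzMat m
  set XC := Matrix.diagonal fun c => x (Sum.inl c) with hXC
  set XP := Matrix.diagonal fun c => x (Sum.inr c) with hXP
  set YC := Matrix.diagonal fun c => (x (Sum.inl c))⁻¹ with hYC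
  set YP := Matrix.diagonal fun c => (x (Sum.inr c))⁻¹ with hYP
  have hC : XC * YC = 1 := by
    rw [hXC, hYC, Matrix.diagonal_mul_diagonal, ← Matrix.diagonal_one]
    congr 1; funext c; exact mul_inv_cancel₀ (hx _).ne'
  have hP : XP * YP = 1 := by
    rw [hXP, hYP, Matrix.diagonal_mul_diagonal, ← Matrix.diagonal_one]
    congr 1; funext c; exact mul_inv_cancel₀ (hx _).ne'
  have hL : reducedLaplacian (fun e => ∑ j, if zzEdge m j = e then (x j)⁻¹ else 0)
      = D * (YP + N * YC * N.transpose) * D.transpose := by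
    have h2 : D * (YP + N * YC * N.transpose) * D.transpose =
        (D * YP) * D.transpose + ((D * N) * YC) * (D * N).transpose := by
      rw [Matrix.transpose_mul]; simp only [mul_add, add_mul, mul_assoc]
    ext v u
    rw [h2]
    refine (reducedLaplacian_sum _ _ (zzSrc_ne_zzTgt m) _ v u).trans ?_
    rw [Fintype.sum_sum_type, add_comm, Matrix.add_apply]
    congr 1
    · rw [Matrix.mul_apply]
      refine Finset.sum_congr rfl fun i _ => ?_
      rw [hYP, Matrix.mul_diagonal, Matrix.transpose_apply]
      simp only [D, pathMat, Matrix.of_apply, zzSrc, zzTgt, Sum.elim_inr]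
      ring
    · rw [Matrix.mul_apply]
      refine Finset.sum_congr rfl fun c _ => ?_
      rw [hYC, Matrix.mul_diagonal, Matrix.transpose_apply, pathMat_mul_zzMat, pathMat_mul_zzMat]
      split_ifs <;> ring
  have hD : D.det = 1 := det_pathMat m
  have hprod : (∏ j, x j) = XC.det * XP.det := by
    rw [Fintype.prod_sum_type, hXC, hXP, Matrix.det_diagonal, Matrix.det_diagonal]
  have h3 : XP * (YP + N * YC * N.transpose) = 1 + (XP * N * YC) * N.transpose := by
    rw [mul_add, hP]; simp only [mul_assoc]
  have h4 : loopMat m x = (1 + N.transpose * (XP * N * YC)) * XC := by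
    have hC' : YC * XC = 1 := mul_eq_one_comm.1 hC
    rw [add_mul, one_mul, mul_assoc, mul_assoc, hC', mul_one]
    simp only [loopMat, mul_assoc, N, XC, XP]
  rw [hL, Matrix.det_mul, Matrix.det_mul, Matrix.det_transpose, hD, one_mul, mul_one, hprod,
    mul_assoc, ← Matrix.det_mul, h3, Matrix.det_one_add_mul_comm, h4, Matrix.det_mul, mul_comm]

lemma kirchhoff_eq_prod_mul {n : ℕ} (G : SimpleGraph (Fin (n + 1))) (x : G.edgeSet → ℝ)
    (hx : ∀ e, 0 < x e) (y : Sym2 (Fin (n + 1)) → ℝ)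
    (hy1 : ∀ e (he : e ∈ G.edgeSet), y e = (x ⟨e, he⟩)⁻¹) (hy2 : ∀ e, e ∉ G.edgeSet → y e = 0) :
    kirchhoff G x = (∏ e, x e) * (reducedLaplacian y).det := by
  rw [det_reducedLaplacian, kirchhoff, Finset.mul_sum, Finset.sum_filter, Finset.sum_filter]
  refine Finset.sum_congr (by ext; simp) fun T _ => ?_
  by_cases hT : T.IsTree
  swap
  · rw [if_neg (fun h => hT h.2), if_neg hT]
  by_cases hle : T ≤ G
  · rw [if_pos ⟨hle, hT⟩, if_pos hT]
    have h5 : ∏ e ∈ T.edgeFinset, y e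
        = ∏ e : G.edgeSet, if (e : Sym2 _) ∈ T.edgeSet then (x e)⁻¹ else 1 := by
      rw [← Finset.prod_filter]
      symm
      refine Finset.prod_bij (fun e _ => (e : Sym2 _)) ?_ ?_ ?_ ?_
      · intro e he
        simpa using he
      · intro a _ b _ h; exact Subtype.ext h
      · intro e he
        rw [SimpleGraph.mem_edgeFinset] at he
        exact ⟨⟨e, SimpleGraph.edgeSet_subset_edgeSet.2 hle he⟩, by simpa using he, rfl⟩
      · intro e _
        exact (hy1 e e.2).symm
    rw [h5, ← Finset.prod_mul_distrib]
    refine Finset.prod_congr rfl fun e _ => ?_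
    split_ifs
    · rw [mul_inv_cancel₀ (hx e).ne']
    · rw [mul_one]
  · rw [if_neg (fun h => hle h.1), if_pos hT]
    obtain ⟨e, he1, he2⟩ : ∃ e ∈ T.edgeSet, e ∉ G.edgeSet := by
      by_contra! h
      exact hle (SimpleGraph.edgeSet_subset_edgeSet.1 h)
    rw [Finset.prod_eq_zero (SimpleGraph.mem_edgeFinset.2 he1) (hy2 e he2), mul_zero]

/-- The Kirchhoff polynomial of the zig-zag graph as a determinant over loops. -/
theorem kirchhoff_zigzag {m : ℕ} (hm : 2 ≤ m) (x : (zigzag (m + 1)).edgeSet → ℝ)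
    (hx : ∀ e, 0 < x e) :
    kirchhoff (zigzag (m + 1)) x = (loopMat m fun j => x (zzEquiv hm j)).det := by
  rw [← prod_mul_det_reducedLaplacian m _ (fun j => hx _), (zzEquiv hm).prod_comp x]
  refine kirchhoff_eq_prod_mul _ x hx _ ?_ ?_
  · intro e he
    obtain ⟨j, hj⟩ := (zzEquiv hm).surjective ⟨e, he⟩
    have hj' : zzEdge m j = e := congrArg Subtype.val hj
    rw [Finset.sum_eq_single j]
    · rw [if_pos hj', hj]
    · intro i _ hij
      rw [if_neg]
      intro h
      exact hij (zzEdge_injective hm (h.trans hj'.symm))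
    · simp
  · intro e he
    refine Finset.sum_eq_zero fun j _ => if_neg ?_
    rintro rfl
    exact he (zzEdge_mem j)

/-- Four-dimensional Euclidean space. -/
abbrev R4 := EuclideanSpace ℝ (Fin 4)

lemma lintegral_exp_neg_mul_Ioi {a : ℝ} (ha : 0 ≤ a) :
    ∫⁻ u in Set.Ioi (0 : ℝ), ENNReal.ofReal (Real.exp (-(u * a))) = (ENNReal.ofReal a)⁻¹ := by
  rcases ha.eq_or_lt with rfl | ha
  · simp
  · have h1 : ∫ u in Set.Ioi (0 : ℝ), Real.exp (-(u * a)) = a⁻¹ := by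
      have := integral_exp_neg_Ioi 0
      have h := integral_comp_mul_right_Ioi (fun u => Real.exp (-u)) 0 ha
      simp only [zero_mul] at h
      rw [h, this]; simp
    have h2 : IntegrableOn (fun u : ℝ => Real.exp (-(u * a))) (Set.Ioi 0) := by
      have := exp_neg_integrableOn_Ioi 0 ha
      refine this.congr_fun (fun u _ => ?_) measurableSet_Ioi
      show Real.exp (-a * u) = Real.exp (-(u * a))
      congr 1; ring
    rw [← ofReal_integral_eq_lintegral_ofReal h2 (Filter.Eventually.of_forall fun _ =>
      (Real.exp_pos _).le),
      h1, ENNReal.ofReal_inv_of_pos ha]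

lemma lintegral_pi_fin_prod {n : ℕ} {α : Type*} [MeasurableSpace α] (μ : Fin n → Measure α)
    [∀ i, SigmaFinite (μ i)] {f : Fin n → α → ℝ≥0∞} (hf : ∀ i, Measurable (f i)) :
    ∫⁻ x, ∏ i, f i (x i) ∂(Measure.pi μ) = ∏ i, ∫⁻ x, f i x ∂(μ i) := by
  induction n with
  | zero => simp
  | succ n ih =>
    have h := (measurePreserving_piFinSuccAbove μ 0).symm
    rw [← h.lintegral_comp_emb (MeasurableEquiv.measurableEmbedding _)]
    simp_rw [MeasurableEquiv.piFinSuccAbove_symm_apply, Fin.insertNthEquiv,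
            Fin.prod_univ_succ, Fin.insertNth_zero, Equiv.coe_fn_mk, Fin.cons_succ,
            Fin.zero_succAbove, cast_eq, Fin.cons_zero]
    rw [lintegral_prod_mul (f := f 0) (g := fun y : Fin n → α => ∏ i : Fin n, f i.succ (y i)),
      ih (fun i => μ i.succ) (fun i => hf i.succ)]
    · exact (hf 0).aemeasurable
    · exact (Finset.measurable_prod _ fun i _ =>
        (hf i.succ).comp (measurable_pi_apply i)).aemeasurable

lemma lintegral_pi_prod {ι α : Type*} [Fintype ι] [MeasurableSpace α] (μ : ι → Measure α)
    [∀ i, SigmaFinite (μ i)] {f : ι → α → ℝ≥0∞} (hf : ∀ i, Measurable (f i)) :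
    ∫⁻ x, ∏ i, f i (x i) ∂(Measure.pi μ) = ∏ i, ∫⁻ x, f i x ∂(μ i) := by
  let e := (Fintype.equivFin ι).symm
  rw [← (measurePreserving_piCongrLeft μ e).lintegral_comp_emb
    (MeasurableEquiv.measurableEmbedding _)]
  simp_rw [← e.prod_comp, MeasurableEquiv.coe_piCongrLeft, Equiv.piCongrLeft_apply_apply]
  exact lintegral_pi_fin_prod (fun i => μ (e i)) (fun i => hf (e i))

lemma lintegral_gaussian_R4 {b : ℝ} (hb : 0 < b) :
    ∫⁻ k : R4, ENNReal.ofReal (Real.exp (-(b * ‖k‖ ^ 2))) =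
      ENNReal.ofReal (Real.pi ^ 2 / b ^ 2) := by
  have h := GaussianFourier.integral_rexp_neg_mul_sq_norm (V := R4) hb
  have hi : Integrable fun v : R4 => Real.exp (-b * ‖v‖ ^ 2) := by
    by_contra hc
    rw [integral_undef hc] at h
    have : 0 < (Real.pi / b) ^ (Module.finrank ℝ R4 / 2 : ℝ) := by positivity
    linarith
  simp_rw [← neg_mul]
  rw [← ofReal_integral_eq_lintegral_ofReal hi (Filter.Eventually.of_forall fun _ =>
    (Real.exp_pos _).le), h]
  congr 1
  rw [finrank_euclideanSpace_fin, ← div_pow, ← Real.rpow_natCast]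
  norm_num

/-- A matrix acting on tuples of vectors. -/
noncomputable def tupleMap {n : ℕ} (B : Matrix (Fin n) (Fin n) ℝ) :
    (Fin n → R4) →ₗ[ℝ] (Fin n → R4) where
  toFun k i := ∑ j, B i j • k j
  map_add' k l := by
    funext i; simp [Finset.sum_add_distrib]
  map_smul' c k := by
    funext i; simp [Finset.smul_sum, smul_comm c]

lemma det_tupleMap {n : ℕ} (B : Matrix (Fin n) (Fin n) ℝ) :
    LinearMap.det (tupleMap B) = B.det ^ 4 := by
  let e : (Fin n → R4) ≃ₗ[ℝ] (Fin 4 → Fin n → ℝ) :=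
    { toFun := fun k a i => k i a
      invFun := fun g i => WithLp.toLp 2 fun a => g a i
      map_add' := fun k l => rfl
      map_smul' := fun c k => rfl
      left_inv := fun k => rfl
      right_inv := fun g => rfl }
  rw [← LinearMap.det_conj _ e]
  have : (e : (Fin n → R4) →ₗ[ℝ] _) ∘ₗ tupleMap B ∘ₗ (e.symm : _ →ₗ[ℝ] (Fin n → R4))
      = LinearMap.pi fun a : Fin 4 => (Matrix.toLin' B).comp (LinearMap.proj a) := by
    refine LinearMap.ext fun g => ?_
    funext a i
    have : (∑ j, B i j • (WithLp.toLp 2 fun a => g a j : R4)) a = ∑ j, B i j * g a j := by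
      simp
    exact this
  rw [this, LinearMap.det_pi]
  simp

lemma lintegral_gaussian_tuple {n : ℕ} {A : Matrix (Fin n) (Fin n) ℝ} (hA : A.PosDef) :
    ∫⁻ k : Fin n → R4, ENNReal.ofReal (Real.exp (-(∑ i, ∑ j, A i j * inner ℝ (k i) (k j)))) =
      ENNReal.ofReal (Real.pi ^ (2 * n) / A.det ^ 2) := by
  open scoped MatrixOrder ComplexOrder in
  obtain ⟨B, hBt, hBA⟩ : ∃ B : Matrix (Fin n) (Fin n) ℝ, B.transpose = B ∧ B * B = A := by
    have h0 : 0 ≤ A := hA.posSemidef.nonneg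
    refine ⟨CFC.sqrt A, ?_, CFC.sqrt_mul_sqrt_self A h0⟩
    have := (CFC.sqrt_nonneg A).isSelfAdjoint
    have h2 : (CFC.sqrt A).conjTranspose = CFC.sqrt A := this
    rwa [Matrix.conjTranspose_eq_transpose_of_trivial] at h2
  have hdet : B.det ^ 2 = A.det := by rw [← hBA, Matrix.det_mul, sq]
  have hApos := hA.det_pos
  have hB0 : B.det ≠ 0 := by
    intro h; rw [h] at hdet; simp at hdet; exact hApos.ne hdet
  have hq : ∀ k : Fin n → R4, ∑ i, ∑ j, A i j * inner ℝ (k i) (k j)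
      = ∑ i, ‖tupleMap B k i‖ ^ 2 := by
    intro k
    simp_rw [← real_inner_self_eq_norm_sq]
    simp only [tupleMap, LinearMap.coe_mk, AddHom.coe_mk, sum_inner, inner_sum, inner_smul_left,
      inner_smul_right, RCLike.conj_to_real, ← hBA, Matrix.mul_apply, Finset.sum_mul]
    rw [Finset.sum_congr rfl fun i _ => Finset.sum_comm, Finset.sum_comm]
    refine Finset.sum_congr rfl fun l _ => ?_
    refine Finset.sum_congr rfl fun i _ => ?_
    rw [Finset.mul_sum]
    refine Finset.sum_congr rfl fun j _ => ?_
    rw [real_inner_comm]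
    have : B i l = B l i := by conv_lhs => rw [← hBt, Matrix.transpose_apply]
    rw [this]; ring
  have hdt : LinearMap.det (tupleMap B) ≠ 0 := by rw [det_tupleMap]; exact pow_ne_zero _ hB0
  have hmap := Measure.map_linearMap_addHaar_eq_smul_addHaar (volume : Measure (Fin n → R4)) hdt
  have hcont : Continuous (tupleMap B) := LinearMap.continuous_of_finiteDimensional _
  have hm : Measurable fun k : Fin n → R4 => ENNReal.ofReal (Real.exp (-(∑ i, ‖k i‖ ^ 2))) := by
    fun_prop
  simp_rw [hq]
  have h1 : ∫⁻ k : Fin n → R4, ENNReal.ofReal (Real.exp (-(∑ i, ‖tupleMap B k i‖ ^ 2)))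
      = ∫⁻ k : Fin n → R4, ENNReal.ofReal (Real.exp (-(∑ i, ‖k i‖ ^ 2)))
          ∂(Measure.map (tupleMap B) volume) := by
    rw [lintegral_map hm hcont.measurable]
  rw [h1, hmap, lintegral_smul_measure]
  have h2 : ∫⁻ k : Fin n → R4, ENNReal.ofReal (Real.exp (-(∑ i, ‖k i‖ ^ 2)))
      = ENNReal.ofReal (Real.pi ^ 2) ^ n := by
    have : ∀ k : Fin n → R4, ENNReal.ofReal (Real.exp (-(∑ i, ‖k i‖ ^ 2)))
        = ∏ i, ENNReal.ofReal (Real.exp (-(1 * ‖k i‖ ^ 2))) := by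
      intro k
      rw [← ENNReal.ofReal_prod_of_nonneg (fun i _ => (Real.exp_pos _).le), ← Real.exp_sum]
      simp
    simp_rw [this]
    rw [volume_pi, lintegral_pi_prod (fun _ : Fin n => (volume : Measure R4))
      (f := fun _ k => ENNReal.ofReal (Real.exp (-(1 * ‖k‖ ^ 2)))) (fun i => by fun_prop)]
    simp only [lintegral_gaussian_R4 one_pos, Finset.prod_const]
    simp
  rw [h2, det_tupleMap, ← ENNReal.ofReal_pow (by positivity), smul_eq_mul,
    ← ENNReal.ofReal_mul (abs_nonneg _)]
  congr 1
  rw [show B.det ^ 4 = A.det ^ 2 by rw [← hdet]; ring, abs_of_nonneg (by positivity), pow_mul]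
  ring

lemma loopMat_quadratic {m : ℕ} (x : Fin (m + 1) ⊕ Fin (m + 1) → ℝ) {E : Type*}
    [NormedAddCommGroup E] [InnerProductSpace ℝ E] (k : Fin (m + 1) → E) :
    ∑ i, ∑ j, loopMat m x i j * inner ℝ (k i) (k j) =
      ∑ c, x (Sum.inl c) * ‖k c‖ ^ 2 + ∑ i, x (Sum.inr i) * ‖∑ c, zzMat m i c • k c‖ ^ 2 := by
  have h1 : ∀ i j, loopMat m x i j * inner ℝ (k i) (k j) =
      (if i = j then x (Sum.inl i) * inner ℝ (k i) (k j) else 0) +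
        ∑ l, x (Sum.inr l) * (zzMat m l i * zzMat m l j * inner ℝ (k i) (k j)) := by
    intro i j
    simp only [loopMat, Matrix.add_apply, Matrix.diagonal_apply, Matrix.mul_apply (N := zzMat m),
      Matrix.mul_diagonal, Matrix.transpose_apply, add_mul, Finset.sum_mul]
    congr 1
    · split_ifs <;> simp
    · exact Finset.sum_congr rfl fun l _ => by ring
  simp_rw [h1, Finset.sum_add_distrib]
  congr 1
  · simp
  · rw [Finset.sum_congr rfl fun i _ => Finset.sum_comm, Finset.sum_comm]
    refine Finset.sum_congr rfl fun l _ => ?_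
    rw [← real_inner_self_eq_norm_sq, sum_inner, Finset.mul_sum]
    refine Finset.sum_congr rfl fun i _ => ?_
    rw [inner_sum, Finset.mul_sum]
    refine Finset.sum_congr rfl fun j _ => ?_
    rw [inner_smul_left, inner_smul_right]
    simp only [RCLike.conj_to_real]
    ring

lemma loopMat_posDef {m : ℕ} {x : Fin (m + 1) ⊕ Fin (m + 1) → ℝ} (hx : ∀ j, 0 < x j) :
    (loopMat m x).PosDef := by
  refine Matrix.PosDef.add_posSemidef (Matrix.PosDef.diagonal fun c => hx _) ?_
  have := (Matrix.PosSemidef.diagonal (n := Fin (m + 1)) (d := fun i => x (Sum.inr i))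
    (fun i => (hx _).le)).conjTranspose_mul_mul_same (zzMat m)
  rwa [Matrix.conjTranspose_eq_transpose_of_trivial] at this

/-- The kernel `‖x‖⁻ᵏ`, infinite at the origin for `k ≠ 0`. -/
noncomputable def nk (k : ℕ) (x : R4) : ℝ≥0∞ := (‖x‖ₑ ^ k)⁻¹

/-- The transfer operator of the zig-zag. -/
noncomputable def opT (p : R4) (φ : R4 → ℝ≥0∞) (x : R4) : ℝ≥0∞ :=
  ∫⁻ y, nk 2 (x - y) * nk 2 y * φ (p - y)

@[fun_prop]
lemma measurable_nk (k : ℕ) : Measurable (nk k) := by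
  unfold nk
  fun_prop

lemma lintegral_exp_neg_mul_norm_sq (v : R4) :
    ∫⁻ u in Set.Ioi (0 : ℝ), ENNReal.ofReal (Real.exp (-(u * ‖v‖ ^ 2))) = nk 2 v := by
  rw [lintegral_exp_neg_mul_Ioi (by positivity), nk, ENNReal.ofReal_pow (norm_nonneg _),
    ofReal_norm]

lemma lintegral_fin_cons {E : Type*} [MeasureSpace E] [SigmaFinite (volume : Measure E)] {m : ℕ}
    {f : (Fin (m + 1) → E) → ℝ≥0∞} (hf : Measurable f) :
    ∫⁻ k, f k = ∫⁻ p, ∫⁻ Y, f (Fin.cons p Y) := by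
  have h := (volume_preserving_piFinSuccAbove (fun _ : Fin (m + 1) => E) 0).symm
  rw [← h.lintegral_comp_emb (MeasurableEquiv.measurableEmbedding _), Measure.volume_eq_prod,
    lintegral_prod]
  · refine lintegral_congr fun p => lintegral_congr fun Y => ?_
    congr 1
    simp [MeasurableEquiv.piFinSuccAbove_symm_apply, Fin.insertNthEquiv]
  · exact (hf.comp (MeasurableEquiv.measurable _)).aemeasurable

lemma measurable_fin_cons {m : ℕ} {α : Type*} [MeasurableSpace α] {f : α → R4}
    {g : α → Fin m → R4} (hf : Measurable f) (hg : Measurable g) :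
    Measurable fun a => (Fin.cons (f a) (g a) : Fin (m + 1) → R4) := by
  refine measurable_pi_lambda _ fun i => ?_
  refine Fin.cases ?_ (fun j => ?_) i
  · simpa using hf
  · have := (measurable_pi_apply j).comp hg
    simpa [Function.comp_def] using this

lemma measurable_fin_snoc {m : ℕ} {α : Type*} [MeasurableSpace α] {f : α → R4}
    {g : α → Fin m → R4} (hf : Measurable f) (hg : Measurable g) :
    Measurable fun a => (Fin.snoc (g a) (f a) : Fin (m + 1) → R4) := by
  refine measurable_pi_lambda _ fun i => ?_
  refine Fin.lastCases ?_ (fun j => ?_) i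
  · simpa using hf
  · have := (measurable_pi_apply j).comp hg
    simpa [Function.comp_def] using this

lemma lintegral_zigzag_chain (p : R4) (m : ℕ) (x : R4) :
    ∫⁻ Y : Fin m → R4, (∏ c, nk 2 (Y c)) *
      ∏ i : Fin (m + 1), nk 2 ((Fin.cons x (fun c => p - Y c) : Fin (m + 1) → R4) i -
        (Fin.snoc Y 0 : Fin (m + 1) → R4) i) = (opT p)^[m] (nk 2) x := by
  induction m generalizing x with
  | zero => simp [Fin.snoc, volume_pi]
  | succ m ih =>
    rw [lintegral_fin_cons, Function.iterate_succ_apply', opT]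
    · refine lintegral_congr fun y => ?_
      rw [← ih (p - y), ← lintegral_const_mul]
      · refine lintegral_congr fun Y => ?_
        rw [Fin.prod_univ_succ, Fin.prod_univ_succ (n := m + 1)]
        simp only [Fin.cons_zero, Fin.cons_succ]
        have h0 : (Fin.snoc (Fin.cons y Y : Fin (m + 1) → R4) 0 : Fin (m + 2) → R4) 0 = y := by
          rw [← Fin.cons_snoc_eq_snoc_cons]; rfl
        have hs : ∀ i : Fin (m + 1),
            (Fin.snoc (Fin.cons y Y : Fin (m + 1) → R4) 0 : Fin (m + 2) → R4) i.succ
            = (Fin.snoc Y 0 : Fin (m + 1) → R4) i := by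
          intro i; rw [← Fin.cons_snoc_eq_snoc_cons]; rfl
        have hc : (fun c => p - (Fin.cons y Y : Fin (m + 1) → R4) c) =
            Fin.cons (p - y) (fun c => p - Y c) := by
          funext c
          refine Fin.cases ?_ (fun j => ?_) c <;> simp
        have hc' : ∀ c, p - (Fin.cons y Y : Fin (m + 1) → R4) c =
            (Fin.cons (p - y) (fun c => p - Y c) : Fin (m + 1) → R4) c :=
          fun c => congrFun hc c
        simp only [h0, hs, hc']
        ring
      · have h1 := measurable_fin_cons (m := m) (f := fun _ : Fin m → R4 => p - y)
          (g := fun Y c => p - Y c) (by fun_prop) (by fun_prop)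
        have h2 := measurable_fin_snoc (m := m) (f := fun _ : Fin m → R4 => 0)
          (g := fun Y => Y) (by fun_prop) (by fun_prop)
        refine Measurable.mul (by fun_prop) (Finset.measurable_prod _ fun i _ => ?_)
        exact (measurable_nk 2).comp (((measurable_pi_apply i).comp h1).sub
          ((measurable_pi_apply i).comp h2))
    · have h1 := measurable_fin_cons (m := m + 1) (f := fun _ : Fin (m + 1) → R4 => x)
          (g := fun Y c => p - Y c) (by fun_prop) (by fun_prop)
      have h2 := measurable_fin_snoc (m := m + 1) (f := fun _ : Fin (m + 1) → R4 => 0)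
          (g := fun Y => Y) (by fun_prop) (by fun_prop)
      refine Measurable.mul (by fun_prop) (Finset.measurable_prod _ fun i _ => ?_)
      exact (measurable_nk 2).comp (((measurable_pi_apply i).comp h1).sub
          ((measurable_pi_apply i).comp h2))

lemma zzMat_apply {m : ℕ} (p : R4) (Y : Fin m → R4) (i : Fin (m + 1)) :
    ∑ c, zzMat m i c • (Fin.cons p Y : Fin (m + 1) → R4) c =
      (Fin.cons p (fun c => p - Y c) : Fin (m + 1) → R4) i -
        (Fin.snoc Y 0 : Fin (m + 1) → R4) i := by
  rw [Fin.sum_univ_succ]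
  simp only [zzMat, Matrix.of_apply, Fin.cons_zero, Fin.cons_succ, one_smul, neg_smul, add_smul,
    ite_smul, zero_smul, Finset.sum_neg_distrib, Finset.sum_add_distrib]
  have h1 : (Fin.cons p (fun c => p - Y c) : Fin (m + 1) → R4) i
      = p - ∑ c : Fin m, if i = c.succ then Y c else 0 := by
    refine Fin.cases ?_ (fun j => ?_) i
    · have : ∀ c : Fin m, (0 : Fin (m + 1)) ≠ c.succ := fun c => (Fin.succ_ne_zero c).symm
      simp [this]
    · simp [Fin.succ_inj]
  have h2 : (Fin.snoc Y 0 : Fin (m + 1) → R4) i =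
      ∑ c : Fin m, if i = c.castSucc then Y c else 0 := by
    refine Fin.lastCases ?_ (fun j => ?_) i
    · have : ∀ c : Fin m, Fin.last m ≠ c.castSucc := fun c => (Fin.castSucc_lt_last c).ne'
      simp [this]
    · simp [Fin.castSucc_inj]
  rw [h1, h2]
  abel

/-- The momentum flowing through each edge. -/
noncomputable def edgeVec {m : ℕ} (k : Fin (m + 1) → R4) : Fin (m + 1) ⊕ Fin (m + 1) → R4 :=
  Sum.elim k fun i => ∑ c, zzMat m i c • k c

lemma measurable_edgeVec {m : ℕ} (j : Fin (m + 1) ⊕ Fin (m + 1)) :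
    Measurable fun k : Fin (m + 1) → R4 => edgeVec k j := by
  rcases j with j | j <;> simp only [edgeVec, Sum.elim_inl, Sum.elim_inr] <;> fun_prop

lemma lintegral_loopMat {m : ℕ} {x : Fin (m + 1) ⊕ Fin (m + 1) → ℝ} (hx : ∀ j, 0 < x j) :
    ENNReal.ofReal (Real.pi ^ (2 * (m + 1))) * ENNReal.ofReal ((loopMat m x).det⁻¹ ^ 2) =
      ∫⁻ k : Fin (m + 1) → R4, ∏ j, ENNReal.ofReal (Real.exp (-(x j * ‖edgeVec k j‖ ^ 2))) := by
  have h := lintegral_gaussian_tuple (loopMat_posDef hx)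
  rw [← ENNReal.ofReal_mul (by positivity), inv_pow, ← div_eq_mul_inv, ← h]
  refine lintegral_congr fun k => ?_
  rw [← ENNReal.ofReal_prod_of_nonneg (fun i _ => (Real.exp_pos _).le), ← Real.exp_sum,
    Finset.sum_neg_distrib, loopMat_quadratic, Fintype.sum_sum_type]
  rfl

theorem lintegral_kirchhoff_zigzag {m : ℕ} (hm : 2 ≤ m) (e₀ : (zigzag (m + 1)).edgeSet)
    (he₀ : e₀ = zzEquiv hm (Sum.inl 0)) :
    ENNReal.ofReal (Real.pi ^ (2 * (m + 1))) *
      ∫⁻ u in {u : {e : (zigzag (m + 1)).edgeSet // e ≠ e₀} → ℝ | ∀ e, 0 < u e},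
        ENNReal.ofReal ((kirchhoff (zigzag (m + 1)) (chart (zigzag (m + 1)) e₀ u))⁻¹ ^ 2) =
      ∫⁻ p : R4, ENNReal.ofReal (Real.exp (-‖p‖ ^ 2)) * (opT p)^[m] (nk 2) p := by
  set I := {e : (zigzag (m + 1)).edgeSet // e ≠ e₀}
  have hset : {u : I → ℝ | ∀ e, 0 < u e} = Set.univ.pi fun _ => Set.Ioi 0 := by
    ext u; simp
  have hms : MeasurableSet {u : I → ℝ | ∀ e, 0 < u e} := by
    rw [hset]; exact MeasurableSet.univ_pi fun _ => measurableSet_Ioi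
  have hpos : ∀ u ∈ {u : I → ℝ | ∀ e, 0 < u e}, ∀ e, 0 < chart (zigzag (m + 1)) e₀ u e := by
    intro u hu e
    unfold chart
    split_ifs
    · exact one_pos
    · exact hu _
  rw [← lintegral_const_mul' _ _ ENNReal.ofReal_ne_top]
  have h1 : ∀ u ∈ {u : I → ℝ | ∀ e, 0 < u e},
      ENNReal.ofReal (Real.pi ^ (2 * (m + 1))) * ENNReal.ofReal
        ((kirchhoff (zigzag (m + 1)) (chart (zigzag (m + 1)) e₀ u))⁻¹ ^ 2) =
      ∫⁻ k : Fin (m + 1) → R4, ENNReal.ofReal (Real.exp (-‖k 0‖ ^ 2)) *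
        ∏ e : I, ENNReal.ofReal (Real.exp (-(u e * ‖edgeVec k ((zzEquiv hm).symm e)‖ ^ 2))) := by
    intro u hu
    rw [kirchhoff_zigzag hm _ (hpos u hu), lintegral_loopMat (fun j => hpos u hu _)]
    refine lintegral_congr fun k => ?_
    rw [← (zzEquiv hm).symm.prod_comp, Fintype.prod_eq_mul_prod_subtype_ne _ e₀]
    simp only [Equiv.apply_symm_apply]
    congr 1
    · have : (zzEquiv hm).symm e₀ = Sum.inl 0 := by rw [he₀, Equiv.symm_apply_apply]
      rw [this]
      simp [chart, edgeVec]
    · refine Finset.prod_congr rfl fun e _ => ?_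
      have : chart (zigzag (m + 1)) e₀ u e = u e := by
        rw [chart, dif_neg e.2]
      rw [this]
  rw [setLIntegral_congr_fun hms h1, hset, volume_pi, Measure.restrict_pi_pi]
  rw [lintegral_lintegral_swap]
  · have h2 : ∀ k : Fin (m + 1) → R4, ∫⁻ u : I → ℝ, ENNReal.ofReal (Real.exp (-‖k 0‖ ^ 2)) *
        ∏ e : I, ENNReal.ofReal (Real.exp (-(u e * ‖edgeVec k ((zzEquiv hm).symm e)‖ ^ 2)))
          ∂(Measure.pi fun _ => volume.restrict (Set.Ioi 0)) =
        ENNReal.ofReal (Real.exp (-‖k 0‖ ^ 2)) * ((∏ c : Fin m, nk 2 (k c.succ)) *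
          ∏ i : Fin (m + 1), nk 2 (∑ c, zzMat m i c • k c)) := by
      intro k
      rw [lintegral_const_mul' _ _ ENNReal.ofReal_ne_top]
      congr 1
      rw [lintegral_pi_prod (fun _ : I => volume.restrict (Set.Ioi (0 : ℝ)))
        (f := fun (e : I) v =>
          ENNReal.ofReal (Real.exp (-(v * ‖edgeVec k ((zzEquiv hm).symm e)‖ ^ 2))))
        (fun e => by fun_prop)]
      rw [Finset.prod_congr rfl fun e _ => lintegral_exp_neg_mul_norm_sq _]
      have h3 := Fintype.prod_eq_mul_prod_subtype_ne (fun e : (zigzag (m + 1)).edgeSet =>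
        if e = e₀ then 1 else nk 2 (edgeVec k ((zzEquiv hm).symm e))) e₀
      rw [if_pos rfl, one_mul] at h3
      have h4 : ∏ e : I, nk 2 (edgeVec k ((zzEquiv hm).symm e)) = ∏ e : I,
          if (e : (zigzag (m + 1)).edgeSet) = e₀ then 1
            else nk 2 (edgeVec k ((zzEquiv hm).symm e)) :=
        Finset.prod_congr rfl fun e _ => by rw [if_neg e.2]
      rw [h4, ← h3, ← (zzEquiv hm).prod_comp, Fintype.prod_sum_type, Fin.prod_univ_succ]
      simp [he₀, edgeVec]
    refine (lintegral_congr h2).trans ?_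
    rw [lintegral_fin_cons]
    · refine lintegral_congr fun p => ?_
      rw [← lintegral_zigzag_chain, ← lintegral_const_mul' _ _ ENNReal.ofReal_ne_top]
      refine lintegral_congr fun Y => ?_
      simp only [Fin.cons_zero, Fin.cons_succ, zzMat_apply]
    · fun_prop
  · refine Measurable.aemeasurable ?_
    refine Measurable.mul (by fun_prop) (Finset.measurable_prod _ fun e _ => ?_)
    have h5 : Measurable fun z : (I → ℝ) × (Fin (m + 1) → R4) =>
        ‖edgeVec z.2 ((zzEquiv hm).symm e)‖ :=
      ((measurable_edgeVec ((zzEquiv hm).symm e)).comp measurable_snd).norm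
    have h6 : Measurable fun z : (I → ℝ) × (Fin (m + 1) → R4) => z.1 e :=
      (measurable_pi_apply e).comp measurable_fst
    exact (Real.measurable_exp.comp ((h6.mul (h5.pow_const 2)).neg)).ennreal_ofReal

lemma nk_of_ne_zero (k : ℕ) {x : R4} (hx : x ≠ 0) : nk k x = ENNReal.ofReal ((‖x‖ ^ k)⁻¹) := by
  have : 0 < ‖x‖ := norm_pos_iff.2 hx
  rw [nk, ENNReal.ofReal_inv_of_pos (by positivity), ENNReal.ofReal_pow this.le, ofReal_norm]

lemma nk_sub_comm (k : ℕ) (x y : R4) : nk k (x - y) = nk k (y - x) := by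
  rw [nk, nk, ← ofReal_norm, ← ofReal_norm, norm_sub_rev]

lemma nk_linearIsometry (k : ℕ) (U : R4 ≃ₗᵢ[ℝ] R4) (x : R4) : nk k (U x) = nk k x := by
  rw [nk, nk, ← ofReal_norm, ← ofReal_norm, U.norm_map]

lemma nk_smul (k : ℕ) {r : ℝ} (hr : 0 < r) (x : R4) :
    nk k (r • x) = ENNReal.ofReal ((r ^ k)⁻¹) * nk k x := by
  rw [nk, nk, enorm_smul, mul_pow, ENNReal.mul_inv, ENNReal.ofReal_inv_of_pos (by positivity),
    ENNReal.ofReal_pow hr.le, Real.enorm_of_nonneg hr.le]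
  · left
    rw [Real.enorm_of_nonneg hr.le]
    positivity
  · left
    rw [Real.enorm_of_nonneg hr.le]
    exact ENNReal.pow_ne_top ENNReal.ofReal_ne_top

lemma lintegral_linearIsometry (U : R4 ≃ₗᵢ[ℝ] R4) (f : R4 → ℝ≥0∞) :
    ∫⁻ y, f (U y) = ∫⁻ y, f y :=
  U.measurePreserving.lintegral_comp_emb U.toHomeomorph.measurableEmbedding f

lemma lintegral_comp_smul_R4 {r : ℝ} (hr : 0 < r) (f : R4 → ℝ≥0∞) :
    ENNReal.ofReal (r ^ 4) * ∫⁻ y, f (r • y) = ∫⁻ y, f y := by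
  have h := Measure.map_addHaar_smul (volume : Measure R4) hr.ne'
  have h2 : ∫⁻ y, f (r • y) = ∫⁻ y, f y ∂(Measure.map (fun y : R4 => r • y) volume) :=
    ((Homeomorph.smulOfNeZero r hr.ne').measurableEmbedding.lintegral_map f).symm
  rw [h2, h, lintegral_smul_measure, smul_eq_mul, ← mul_assoc, ← ENNReal.ofReal_mul (by positivity)]
  simp only [finrank_euclideanSpace, Fintype.card_fin]
  rw [abs_of_pos (by positivity), mul_inv_cancel₀ (by positivity), ENNReal.ofReal_one, one_mul]

lemma lintegral_inversion {r : ℝ} (hr : 0 < r) (f : R4 → ℝ≥0∞) :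
    ∫⁻ u, f u = ∫⁻ v : R4, ENNReal.ofReal ((r / ‖v‖) ^ 8) *
      f (EuclideanGeometry.inversion 0 r v) := by
  have h := lintegral_image_eq_lintegral_abs_det_fderiv_mul (volume : Measure R4)
    (s := {0}ᶜ) (f := EuclideanGeometry.inversion (0 : R4) r) (measurableSet_singleton _).compl
    (fun x hx => (EuclideanGeometry.hasFDerivAt_inversion (R := r) hx).hasFDerivWithinAt)
    (EuclideanGeometry.inversion_injective _ hr.ne').injOn f
  have him : EuclideanGeometry.inversion (0 : R4) r '' {0}ᶜ = {0}ᶜ := by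
    ext u
    constructor
    · rintro ⟨v, hv, rfl⟩
      simpa [EuclideanGeometry.inversion_eq_center hr.ne'] using hv
    · intro hu
      exact ⟨_, by simpa [EuclideanGeometry.inversion_eq_center hr.ne'] using hu,
        EuclideanGeometry.inversion_inversion _ hr.ne' u⟩
  have hr0 : (volume : Measure R4).restrict {0}ᶜ = volume :=
    Measure.restrict_eq_self_of_ae_mem (by simp [ae_iff])
  rw [him, hr0] at h
  rw [h]
  refine lintegral_congr fun v => ?_
  congr 2
  rw [dist_zero_right]
  rw [ContinuousLinearMap.det, ContinuousLinearMap.toLinearMap_smul, LinearMap.det_smul, abs_mul]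
  have : |LinearMap.det ((ℝ ∙ (v - 0))ᗮ.reflection : R4 →L[ℝ] R4).toLinearMap| = 1 := by
    have := Submodule.det_reflection (𝕜 := ℝ) (ℝ ∙ (v - 0))ᗮ
    erw [this]
    simp
  rw [this, mul_one, abs_of_nonneg (by positivity)]
  simp [← pow_mul]

lemma ae_ne_R4 (x : R4) : ∀ᵐ v : R4, v ≠ x := by simp [ae_iff]

/-- The conformal star identity in four dimensions. -/
lemma lintegral_star {x z : R4} (hx : x ≠ 0) (hz : z ≠ 0) :
    ∫⁻ u, nk 2 (x - u) * nk 2 u * nk 3 (u - z) =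
      nk 1 z * ∫⁻ u, nk 3 (x - u) * nk 1 u * nk 2 (u - z) := by
  have nx : 0 < ‖x‖ := norm_pos_iff.2 hx
  have nz : 0 < ‖z‖ := norm_pos_iff.2 hz
  set r := √(‖x‖ * ‖z‖)
  have hr : 0 < r := by positivity
  have hr2 : r ^ 2 = ‖x‖ * ‖z‖ := Real.sq_sqrt (by positivity)
  set x' := EuclideanGeometry.inversion 0 r x
  set z' := EuclideanGeometry.inversion 0 r z
  have hx' : x = EuclideanGeometry.inversion 0 r x' :=
      (EuclideanGeometry.inversion_inversion _ hr.ne' x).symm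
  have hz' : z = EuclideanGeometry.inversion 0 r z' :=
      (EuclideanGeometry.inversion_inversion _ hr.ne' z).symm
  have nx' : ‖x'‖ = ‖z‖ := by
    rw [← dist_zero_right, EuclideanGeometry.dist_inversion_center, hr2, dist_zero_right]
    field_simp
  have nz' : ‖z'‖ = ‖x‖ := by
    rw [← dist_zero_right, EuclideanGeometry.dist_inversion_center, hr2, dist_zero_right]
    field_simp
  have hx0' : x' ≠ 0 := norm_pos_iff.1 (nx' ▸ nz)
  have hz0' : z' ≠ 0 := norm_pos_iff.1 (nz' ▸ nx)
  set U := (ℝ ∙ (x' - z)).orthogonal.reflection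
  have hUx : U x' = z := Submodule.reflection_sub nx'
  have hUz : U z' = x := by
    have e1 : z' = (‖x‖ / ‖z‖) • z := by
      simp only [z', EuclideanGeometry.inversion, vsub_eq_sub, vadd_eq_add, sub_zero, add_zero,
        dist_zero_right, div_pow, hr2]
      congr 1
      field_simp
    have e2 : x' = (‖z‖ / ‖x‖) • x := by
      simp only [x', EuclideanGeometry.inversion, vsub_eq_sub, vadd_eq_add, sub_zero, add_zero,
        dist_zero_right, div_pow, hr2]
      congr 1
      field_simp
    have h1 : U z = x' := by
      rw [← hUx]; exact Submodule.reflection_reflection _ _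
    rw [e1, map_smul, h1, e2, smul_smul]
    field_simp
    simp
  rw [lintegral_inversion hr, ← lintegral_const_mul' _ _ (by
    rw [nk_of_ne_zero _ hz]; exact ENNReal.ofReal_ne_top)]
  rw [← lintegral_linearIsometry U fun u => nk 1 z * (nk 3 (x - u) * nk 1 u * nk 2 (u - z))]
  refine lintegral_congr_ae ?_
  filter_upwards [ae_ne_R4 0, ae_ne_R4 x', ae_ne_R4 z'] with v v0 vx vz
  have nv : 0 < ‖v‖ := norm_pos_iff.2 v0
  set w := EuclideanGeometry.inversion 0 r v
  have d0 : ‖w‖ = r ^ 2 / ‖v‖ := by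
    rw [← dist_zero_right, EuclideanGeometry.dist_inversion_center, dist_zero_right]
  have d1 : ‖x - w‖ = r ^ 2 / (‖z‖ * ‖v‖) * ‖x' - v‖ := by
    rw [hx', ← dist_eq_norm, EuclideanGeometry.dist_inversion_inversion hx0' v0,
      dist_zero_right, dist_zero_right, nx', dist_eq_norm]
  have d2 : ‖w - z‖ = r ^ 2 / (‖x‖ * ‖v‖) * ‖z' - v‖ := by
    rw [norm_sub_rev, hz', ← dist_eq_norm, EuclideanGeometry.dist_inversion_inversion hz0' v0,
      dist_zero_right, dist_zero_right, nz', dist_eq_norm]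
  have p1 : 0 < ‖x' - v‖ := norm_pos_iff.2 (sub_ne_zero.2 vx.symm)
  have p2 : 0 < ‖z' - v‖ := norm_pos_iff.2 (sub_ne_zero.2 vz.symm)
  have h1 : x - w ≠ 0 := norm_pos_iff.1 (by rw [d1]; positivity)
  have h2 : w - z ≠ 0 := norm_pos_iff.1 (by rw [d2]; positivity)
  have h0 : w ≠ 0 := norm_pos_iff.1 (by rw [d0]; positivity)
  have e1 : x - U v = U (z' - v) := by rw [map_sub, hUz]
  have e2 : U v - z = U (v - x') := by rw [map_sub, hUx]
  rw [e1, e2, nk_linearIsometry, nk_linearIsometry, nk_linearIsometry, nk_of_ne_zero _ h1,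
    nk_of_ne_zero _ h2, nk_of_ne_zero _ h0, nk_of_ne_zero _ hz, nk_of_ne_zero _ v0,
    nk_of_ne_zero _ (sub_ne_zero.2 vx), nk_of_ne_zero _ (sub_ne_zero.2 vz.symm), norm_sub_rev v x',
    d0, d1, d2]
  repeat rw [← ENNReal.ofReal_mul (by positivity)]
  congr 1
  have h8 : (r / ‖v‖) ^ 8 = (r ^ 2) ^ 4 / ‖v‖ ^ 8 := by rw [div_pow, ← pow_mul]
  rw [h8, hr2]
  field_simp

/-- The symmetrised transfer operator. -/
noncomputable def opT0 (p : R4) (φ : R4 → ℝ≥0∞) (x : R4) : ℝ≥0∞ :=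
  ∫⁻ y, nk 2 (x - y) * (nk 1 y * nk 1 (p - y)) * φ (p - y)

/-- The intertwiner between `opT` and `opT0`. -/
noncomputable def opI (φ : R4 → ℝ≥0∞) (x : R4) : ℝ≥0∞ :=
  ∫⁻ y, nk 3 (x - y) * nk 1 y * φ y

lemma measurable_opT0 {p : R4} {φ : R4 → ℝ≥0∞} (hφ : Measurable φ) : Measurable (opT0 p φ) := by
  unfold opT0
  refine Measurable.lintegral_prod_right' (f := fun z : R4 × R4 =>
    nk 2 (z.1 - z.2) * (nk 1 z.2 * nk 1 (p - z.2)) * φ (p - z.2)) ?_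
  fun_prop

lemma measurable_opT0_iterate {p : R4} {φ : R4 → ℝ≥0∞} (hφ : Measurable φ) (k : ℕ) :
    Measurable ((opT0 p)^[k] φ) := by
  induction k with
  | zero => exact hφ
  | succ k ih => rw [Function.iterate_succ_apply']; exact measurable_opT0 ih

lemma lintegral_sub_left_R4 (p : R4) (f : R4 → ℝ≥0∞) : ∫⁻ y, f (p - y) = ∫⁻ y, f y :=
  lintegral_sub_left_eq_self f p

lemma opT_congr {p : R4} {φ ψ : R4 → ℝ≥0∞} (h : ∀ x ≠ 0, φ x = ψ x) (x : R4) :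
    opT p φ x = opT p ψ x := by
  refine lintegral_congr_ae ?_
  filter_upwards [ae_ne_R4 p] with y hy
  rw [h _ (sub_ne_zero.2 hy.symm)]

lemma opT_opI {p : R4} {φ : R4 → ℝ≥0∞} (hφ : Measurable φ) {x : R4} (hx : x ≠ 0) :
    opT p (opI φ) x = opI (opT0 p φ) x := by
  have h1 : opT p (opI φ) x = ∫⁻ y, ∫⁻ z, nk 2 (x - y) * nk 2 y * nk 3 (y - z) *
      (nk 1 (p - z) * φ (p - z)) := by
    refine lintegral_congr_ae ?_
    filter_upwards [ae_ne_R4 0, ae_ne_R4 x] with y hy hyx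
    rw [opI, ← lintegral_sub_left_R4 p, ← lintegral_const_mul']
    · refine lintegral_congr fun z => ?_
      rw [show p - y - (p - z) = z - y by abel, nk_sub_comm 3 z y]
      ring
    · rw [nk_of_ne_zero _ hy, nk_of_ne_zero _ (sub_ne_zero.2 hyx.symm)]
      exact ENNReal.mul_ne_top ENNReal.ofReal_ne_top ENNReal.ofReal_ne_top
  have h2 : opI (opT0 p φ) x = ∫⁻ y, ∫⁻ z, nk 3 (x - y) * nk 1 y * nk 2 (y - z) *
      (nk 1 z * (nk 1 (p - z) * φ (p - z))) := by
    refine lintegral_congr_ae ?_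
    filter_upwards [ae_ne_R4 0, ae_ne_R4 x] with y hy hyx
    rw [opT0, ← lintegral_const_mul']
    · refine lintegral_congr fun z => ?_
      ring
    · rw [nk_of_ne_zero _ hy, nk_of_ne_zero _ (sub_ne_zero.2 hyx.symm)]
      exact ENNReal.mul_ne_top ENNReal.ofReal_ne_top ENNReal.ofReal_ne_top
  rw [h1, h2, lintegral_lintegral_swap (by fun_prop)]
  conv_rhs => rw [lintegral_lintegral_swap (by fun_prop)]
  refine lintegral_congr_ae ?_
  filter_upwards [ae_ne_R4 0] with z hz
  rw [lintegral_mul_const _ (by fun_prop), lintegral_mul_const _ (by fun_prop),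
    lintegral_star hx hz]
  ring

lemma opT_iterate_opI {p : R4} {φ : R4 → ℝ≥0∞} (hφ : Measurable φ) (k : ℕ) :
    ∀ x ≠ 0, (opT p)^[k] (opI φ) x = opI ((opT0 p)^[k] φ) x := by
  induction k with
  | zero => intro x _; rfl
  | succ k ih =>
    intro x hx
    rw [Function.iterate_succ_apply', Function.iterate_succ_apply', opT_congr ih,
      opT_opI (measurable_opT0_iterate hφ k) hx]

lemma opT_const_mul {p : R4} {c : ℝ≥0∞} (hc : c ≠ ∞) {φ : R4 → ℝ≥0∞} (x : R4) :
    opT p (fun y => c * φ y) x = c * opT p φ x := by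
  rw [opT, opT, ← lintegral_const_mul' _ _ hc]
  exact lintegral_congr fun y => by ring

lemma opT_iterate_const_mul {p : R4} {c : ℝ≥0∞} (hc : c ≠ ∞) {φ : R4 → ℝ≥0∞} (k : ℕ) :
    (opT p)^[k] (fun y => c * φ y) = fun x => c * (opT p)^[k] φ x := by
  induction k with
  | zero => rfl
  | succ k ih =>
    funext x
    rw [Function.iterate_succ_apply', ih, opT_const_mul hc, Function.iterate_succ_apply']

lemma opT_iterate_congr {p : R4} {φ ψ : R4 → ℝ≥0∞} (h : ∀ x ≠ 0, φ x = ψ x) (k : ℕ) :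
    ∀ x ≠ 0, (opT p)^[k] φ x = (opT p)^[k] ψ x := by
  induction k with
  | zero => exact h
  | succ k ih =>
    intro x _
    rw [Function.iterate_succ_apply', Function.iterate_succ_apply', opT_congr ih]

lemma lintegral_pow_mul_exp {b : ℝ} (hb : 0 < b) (k : ℕ) :
    ∫⁻ s in Set.Ioi (0 : ℝ), ENNReal.ofReal (s ^ k * Real.exp (-(b * s ^ 2))) =
      ENNReal.ofReal (b ^ (-((k : ℝ) + 1) / 2) * (1 / 2) * Real.Gamma (((k : ℝ) + 1) / 2)) := by
  have hk : (-1 : ℝ) < k := by linarith [(Nat.cast_nonneg k : (0 : ℝ) ≤ k)]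
  rw [← integral_rpow_mul_exp_neg_mul_rpow two_pos hk hb,
    ofReal_integral_eq_lintegral_ofReal (integrableOn_rpow_mul_exp_neg_mul_rpow hk two_pos hb)]
  · refine lintegral_congr fun s => ?_
    simp [neg_mul]
  · filter_upwards [self_mem_ae_restrict measurableSet_Ioi] with s hs
    have : (0 : ℝ) < s := hs
    positivity

lemma lintegral_sq_mul_exp {b : ℝ} (hb : 0 < b) :
    ∫⁻ s in Set.Ioi (0 : ℝ), ENNReal.ofReal (s ^ 2 * Real.exp (-(b ^ 2 * s ^ 2))) =
      ENNReal.ofReal (√Real.pi / 4 * (b ^ 3)⁻¹) := by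
  rw [lintegral_pow_mul_exp (by positivity)]
  congr 1
  have h1 : Real.Gamma (((2 : ℕ) + 1 : ℝ) / 2) = √Real.pi / 2 := by
    rw [show (((2 : ℕ) + 1 : ℝ) / 2) = 1 / 2 + 1 by norm_num, Real.Gamma_add_one (by norm_num),
      Real.Gamma_one_half_eq]
    ring
  have h2 : (b ^ 2) ^ (-(((2 : ℕ) : ℝ) + 1) / 2) = (b ^ 3)⁻¹ := by
    rw [← Real.rpow_natCast b 2, ← Real.rpow_mul hb.le, ← Real.rpow_natCast b 3,
      ← Real.rpow_neg hb.le]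
    norm_num
  rw [h1, h2]
  ring

lemma lintegral_mul_exp {b : ℝ} (hb : 0 < b) :
    ∫⁻ s in Set.Ioi (0 : ℝ), ENNReal.ofReal (s * Real.exp (-(b * s ^ 2))) =
      ENNReal.ofReal (b⁻¹ / 2) := by
  have h := lintegral_pow_mul_exp hb 1
  simp only [pow_one] at h
  rw [h]
  congr 1
  rw [show -(((1 : ℕ) : ℝ) + 1) / 2 = -1 by norm_num, show (((1 : ℕ) : ℝ) + 1) / 2 = 1 by norm_num,
    Real.Gamma_one, Real.rpow_neg_one]
  ring

lemma lintegral_Ioi_comp_mul {s : ℝ} (hs : 0 < s) (f : ℝ → ℝ≥0∞) :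
    ENNReal.ofReal s * ∫⁻ t in Set.Ioi (0 : ℝ), f (s * t) = ∫⁻ t in Set.Ioi (0 : ℝ), f t := by
  have h := lintegral_image_eq_lintegral_abs_deriv_mul (s := Set.Ioi (0 : ℝ)) (f := fun t => s * t)
    (f' := fun _ => s) measurableSet_Ioi
    (fun t _ => by simpa using ((hasDerivAt_id t).const_mul s).hasDerivWithinAt)
    (fun a _ b _ hab => mul_left_cancel₀ hs.ne' hab) f
  rw [Set.image_const_mul_Ioi_zero hs] at h
  rw [h, lintegral_const_mul' _ _ ENNReal.ofReal_ne_top, abs_of_pos hs]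

lemma nk_three {y : R4} (hy : y ≠ 0) :
    nk 3 y = ENNReal.ofReal (4 / √Real.pi) *
      ∫⁻ s in Set.Ioi (0 : ℝ), ENNReal.ofReal (s ^ 2 * Real.exp (-(s ^ 2 * ‖y‖ ^ 2))) := by
  have ny : 0 < ‖y‖ := norm_pos_iff.2 hy
  have h := lintegral_sq_mul_exp ny
  simp_rw [mul_comm (‖y‖ ^ 2)] at h
  rw [h, ← ENNReal.ofReal_mul (by positivity), nk_of_ne_zero _ hy]
  congr 1
  have : √Real.pi ≠ 0 := by positivity
  field_simp

lemma lintegral_gaussian_two {s t : ℝ} (hs : 0 < s) (ht : 0 < t) (x : R4) :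
    ∫⁻ y : R4, ENNReal.ofReal (Real.exp (-(s * ‖x - y‖ ^ 2 + t * ‖y‖ ^ 2))) =
      ENNReal.ofReal (Real.pi ^ 2 / (s + t) ^ 2 * Real.exp (-(s * t / (s + t) * ‖x‖ ^ 2))) := by
  have h : ∀ y : R4, s * ‖x - y‖ ^ 2 + t * ‖y‖ ^ 2 =
      (s + t) * ‖y - (s / (s + t)) • x‖ ^ 2 + s * t / (s + t) * ‖x‖ ^ 2 := by
    intro y
    rw [norm_sub_sq_real, norm_sub_sq_real, norm_smul, inner_smul_right, real_inner_comm, mul_pow,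
      Real.norm_eq_abs, sq_abs]
    field_simp
    ring
  simp_rw [h, neg_add, Real.exp_add]
  simp_rw [ENNReal.ofReal_mul (Real.exp_pos _).le]
  rw [lintegral_mul_const _ (by fun_prop),
    lintegral_sub_right_eq_self (fun y => ENNReal.ofReal (Real.exp (-((s + t) * ‖y‖ ^ 2)))),
    lintegral_gaussian_R4 (by positivity), ← ENNReal.ofReal_mul (by positivity)]

lemma lintegral_inv_one_add_sq :
    ∫⁻ t in Set.Ioi (0 : ℝ), ENNReal.ofReal ((1 + t ^ 2)⁻¹) = ENNReal.ofReal (Real.pi / 2) := by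
  rw [← ofReal_integral_eq_lintegral_ofReal integrable_inv_one_add_sq.integrableOn
    (Filter.Eventually.of_forall fun t => by positivity), integral_Ioi_inv_one_add_sq]
  simp

lemma opI_nk_two {x : R4} (hx : x ≠ 0) :
    opI (nk 2) x = ENNReal.ofReal (4 * Real.pi ^ 2) * nk 2 x := by
  have nx : 0 < ‖x‖ := norm_pos_iff.2 hx
  have hpi := Real.pi_pos
  set c := ENNReal.ofReal (4 / √Real.pi)
  have h1 : opI (nk 2) x = c * (c * ∫⁻ y : R4, ∫⁻ s in Set.Ioi (0 : ℝ), ∫⁻ t in Set.Ioi (0 : ℝ),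
      ENNReal.ofReal (s ^ 2 * Real.exp (-(s ^ 2 * ‖x - y‖ ^ 2))) *
      ENNReal.ofReal (t ^ 2 * Real.exp (-(t ^ 2 * ‖y‖ ^ 2)))) := by
    rw [← lintegral_const_mul' _ _ ENNReal.ofReal_ne_top,
      ← lintegral_const_mul' _ _ ENNReal.ofReal_ne_top]
    refine lintegral_congr_ae ?_
    filter_upwards [ae_ne_R4 0, ae_ne_R4 x] with y hy hyx
    have h3 : nk 1 y * nk 2 y = nk 3 y := by
      have : 0 < ‖y‖ := norm_pos_iff.2 hy
      rw [nk_of_ne_zero _ hy, nk_of_ne_zero _ hy, nk_of_ne_zero _ hy,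
        ← ENNReal.ofReal_mul (by positivity)]
      congr 1
      field_simp
    rw [mul_assoc, h3, nk_three hy, nk_three (sub_ne_zero.2 hyx.symm)]
    simp_rw [lintegral_const_mul' _ _ ENNReal.ofReal_ne_top]
    rw [lintegral_mul_const _ (by fun_prop)]
    ring
  have h2 : ∀ s ∈ Set.Ioi (0 : ℝ), ∫⁻ t in Set.Ioi (0 : ℝ), ∫⁻ y : R4,
      ENNReal.ofReal (s ^ 2 * Real.exp (-(s ^ 2 * ‖x - y‖ ^ 2))) *
      ENNReal.ofReal (t ^ 2 * Real.exp (-(t ^ 2 * ‖y‖ ^ 2))) =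
      ∫⁻ t in Set.Ioi (0 : ℝ), ENNReal.ofReal (Real.pi ^ 2 * t ^ 2 / (1 + t ^ 2) ^ 2) *
        ENNReal.ofReal (s * Real.exp (-((t ^ 2 / (1 + t ^ 2) * ‖x‖ ^ 2) * s ^ 2))) := by
    intro s hs
    replace hs : 0 < s := hs
    rw [← lintegral_Ioi_comp_mul hs, ← lintegral_const_mul' _ _ ENNReal.ofReal_ne_top]
    refine setLIntegral_congr_fun measurableSet_Ioi fun t ht => ?_
    replace ht : 0 < t := ht
    have h := lintegral_gaussian_two (s := s ^ 2) (t := (s * t) ^ 2)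
      (by positivity) (by positivity) x
    have h' : ∀ y : R4, ENNReal.ofReal (s ^ 2 * Real.exp (-(s ^ 2 * ‖x - y‖ ^ 2))) *
        ENNReal.ofReal ((s * t) ^ 2 * Real.exp (-((s * t) ^ 2 * ‖y‖ ^ 2))) =
        ENNReal.ofReal (s ^ 2 * (s * t) ^ 2) *
          ENNReal.ofReal (Real.exp (-(s ^ 2 * ‖x - y‖ ^ 2 + (s * t) ^ 2 * ‖y‖ ^ 2))) := by
      intro y
      rw [← ENNReal.ofReal_mul (by positivity), ← ENNReal.ofReal_mul (by positivity), neg_add,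
        Real.exp_add]
      congr 1
      ring
    simp only [h']
    rw [lintegral_const_mul' _ _ ENNReal.ofReal_ne_top, h, ← ENNReal.ofReal_mul (by positivity),
      ← ENNReal.ofReal_mul (by positivity), ← ENNReal.ofReal_mul (by positivity)]
    congr 1
    have e1 : s ^ 2 * (s * t) ^ 2 / (s ^ 2 + (s * t) ^ 2) * ‖x‖ ^ 2 =
        t ^ 2 / (1 + t ^ 2) * ‖x‖ ^ 2 * s ^ 2 := by
      have : s ^ 2 + (s * t) ^ 2 = s ^ 2 * (1 + t ^ 2) := by ring
      rw [this]
      field_simp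
    rw [e1]
    have : s ^ 2 + (s * t) ^ 2 = s ^ 2 * (1 + t ^ 2) := by ring
    rw [this]
    field_simp
  have h3 : ∀ t ∈ Set.Ioi (0 : ℝ), ∫⁻ s in Set.Ioi (0 : ℝ),
      ENNReal.ofReal (Real.pi ^ 2 * t ^ 2 / (1 + t ^ 2) ^ 2) *
        ENNReal.ofReal (s * Real.exp (-((t ^ 2 / (1 + t ^ 2) * ‖x‖ ^ 2) * s ^ 2))) =
      ENNReal.ofReal (Real.pi ^ 2 / 2 * (‖x‖ ^ 2)⁻¹) * ENNReal.ofReal ((1 + t ^ 2)⁻¹) := by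
    intro t ht
    replace ht : 0 < t := ht
    rw [lintegral_const_mul' _ _ ENNReal.ofReal_ne_top, lintegral_mul_exp (by positivity),
      ← ENNReal.ofReal_mul (by positivity), ← ENNReal.ofReal_mul (by positivity)]
    congr 1
    field_simp
  rw [h1, lintegral_lintegral_swap (by
    refine Measurable.aemeasurable ?_
    refine Measurable.lintegral_prod_right' (f := fun z : (R4 × ℝ) × ℝ =>
      ENNReal.ofReal (z.1.2 ^ 2 * Real.exp (-(z.1.2 ^ 2 * ‖x - z.1.1‖ ^ 2))) *
      ENNReal.ofReal (z.2 ^ 2 * Real.exp (-(z.2 ^ 2 * ‖z.1.1‖ ^ 2)))) ?_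
    fun_prop)]
  have h4 : ∀ s : ℝ, ∫⁻ y : R4, ∫⁻ t in Set.Ioi (0 : ℝ),
      ENNReal.ofReal (s ^ 2 * Real.exp (-(s ^ 2 * ‖x - y‖ ^ 2))) *
      ENNReal.ofReal (t ^ 2 * Real.exp (-(t ^ 2 * ‖y‖ ^ 2))) =
      ∫⁻ t in Set.Ioi (0 : ℝ), ∫⁻ y : R4,
      ENNReal.ofReal (s ^ 2 * Real.exp (-(s ^ 2 * ‖x - y‖ ^ 2))) *
      ENNReal.ofReal (t ^ 2 * Real.exp (-(t ^ 2 * ‖y‖ ^ 2))) :=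
    fun s => lintegral_lintegral_swap (by fun_prop)
  simp_rw [h4]
  rw [setLIntegral_congr_fun measurableSet_Ioi h2, lintegral_lintegral_swap (by fun_prop),
    setLIntegral_congr_fun measurableSet_Ioi h3, lintegral_const_mul' _ _ ENNReal.ofReal_ne_top,
    lintegral_inv_one_add_sq, nk_of_ne_zero _ hx]
  repeat rw [← ENNReal.ofReal_mul (by positivity)]
  congr 1
  have h5 : √Real.pi ^ 2 = Real.pi := Real.sq_sqrt hpi.le
  field_simp
  rw [h5]
  ring

lemma opT_iterate_smul_isometry (U : R4 ≃ₗᵢ[ℝ] R4) {r : ℝ} (hr : 0 < r) (e : R4) (k : ℕ) (x : R4) :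
    (opT (r • U e))^[k] (nk 2) (r • U x) = ENNReal.ofReal ((r ^ 2)⁻¹) * (opT e)^[k] (nk 2) x := by
  induction k generalizing x with
  | zero => simp only [Function.iterate_zero, id_eq]; rw [nk_smul _ hr, nk_linearIsometry]
  | succ k ih =>
    rw [Function.iterate_succ_apply', Function.iterate_succ_apply', opT, opT,
      ← lintegral_comp_smul_R4 hr, ← lintegral_linearIsometry U,
      ← lintegral_const_mul' _ _ ENNReal.ofReal_ne_top,
      ← lintegral_const_mul' _ _ ENNReal.ofReal_ne_top]
    refine lintegral_congr fun y => ?_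
    rw [← smul_sub, ← smul_sub, ← map_sub, ← map_sub, ih, nk_smul _ hr, nk_smul _ hr,
      nk_linearIsometry, nk_linearIsometry]
    have h : ENNReal.ofReal (r ^ 4) * (ENNReal.ofReal ((r ^ 2)⁻¹) * ENNReal.ofReal ((r ^ 2)⁻¹)) =
        1 := by
      rw [← ENNReal.ofReal_mul (by positivity), ← ENNReal.ofReal_mul (by positivity),
        ← ENNReal.ofReal_one]
      congr 1
      field_simp
    calc _ = ENNReal.ofReal (r ^ 4) * (ENNReal.ofReal ((r ^ 2)⁻¹) * ENNReal.ofReal ((r ^ 2)⁻¹)) *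
        (ENNReal.ofReal ((r ^ 2)⁻¹) *
          (nk 2 (x - y) * nk 2 y * (opT e)^[k] (nk 2) (e - y))) := by ring
      _ = _ := by rw [h, one_mul]

lemma opT_iterate_self {e p : R4} (he : ‖e‖ = 1) (hp : p ≠ 0) (k : ℕ) :
    (opT p)^[k] (nk 2) p = nk 2 p * (opT e)^[k] (nk 2) e := by
  have np : 0 < ‖p‖ := norm_pos_iff.2 hp
  have h1 : ‖e‖ = ‖(‖p‖⁻¹ • p : R4)‖ := by
    rw [he, norm_smul, norm_inv, norm_norm, inv_mul_cancel₀ np.ne']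
  set U := (ℝ ∙ (e - ‖p‖⁻¹ • p)).orthogonal.reflection
  have hU : U e = ‖p‖⁻¹ • p := Submodule.reflection_sub h1
  have h2 : ‖p‖ • U e = p := by rw [hU, smul_inv_smul₀ np.ne']
  have h := opT_iterate_smul_isometry U np e k e
  rw [h2] at h
  rw [h, nk_of_ne_zero _ hp]

lemma lintegral_exp_mul_nk_two :
    ∫⁻ p : R4, ENNReal.ofReal (Real.exp (-‖p‖ ^ 2)) * nk 2 p = ENNReal.ofReal (Real.pi ^ 2) := by
  have h1 : ∀ p : R4, ENNReal.ofReal (Real.exp (-‖p‖ ^ 2)) * nk 2 p =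
      ∫⁻ a in Set.Ioi (0 : ℝ), ENNReal.ofReal (Real.exp (-((1 + a) * ‖p‖ ^ 2))) := by
    intro p
    rw [← lintegral_exp_neg_mul_norm_sq, ← lintegral_const_mul' _ _ ENNReal.ofReal_ne_top]
    refine lintegral_congr fun a => ?_
    rw [← ENNReal.ofReal_mul (Real.exp_pos _).le, ← Real.exp_add]
    congr 2
    ring
  simp_rw [h1]
  rw [lintegral_lintegral_swap (by fun_prop)]
  have h2 : ∀ a ∈ Set.Ioi (0 : ℝ), ∫⁻ p : R4, ENNReal.ofReal (Real.exp (-((1 + a) * ‖p‖ ^ 2))) =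
      ENNReal.ofReal (Real.pi ^ 2) * ENNReal.ofReal (((1 + a) ^ 2)⁻¹) := by
    intro a ha
    replace ha : 0 < a := ha
    rw [lintegral_gaussian_R4 (by positivity), ← ENNReal.ofReal_mul (by positivity), div_eq_mul_inv]
  rw [setLIntegral_congr_fun measurableSet_Ioi h2, lintegral_const_mul' _ _ ENNReal.ofReal_ne_top]
  have hd : ∀ a ∈ Set.Ici (0 : ℝ), HasDerivAt (fun a : ℝ => -(1 + a)⁻¹) (((1 + a) ^ 2)⁻¹) a := by
    intro a ha
    have ha : (0 : ℝ) ≤ a := ha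
    have h : HasDerivAt (fun a : ℝ => -(1 + a)⁻¹) (-(-1 / (1 + a) ^ 2)) a :=
      (((hasDerivAt_id a).const_add 1).inv (by simp only [id]; positivity)).neg
    rwa [neg_div, neg_neg, one_div] at h
  have hn : ∀ a ∈ Set.Ioi (0 : ℝ), 0 ≤ ((1 + a) ^ 2)⁻¹ := fun a _ => by positivity
  have ht : Filter.Tendsto (fun a : ℝ => -(1 + a)⁻¹) Filter.atTop (nhds 0) := by
    have : Filter.Tendsto (fun a : ℝ => 1 + a) Filter.atTop Filter.atTop :=
      Filter.tendsto_atTop_add_const_left _ _ Filter.tendsto_id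
    simpa using this.inv_tendsto_atTop.neg
  rw [← ofReal_integral_eq_lintegral_ofReal (integrableOn_Ioi_deriv_of_nonneg' hd hn ht)
    ((ae_restrict_iff' measurableSet_Ioi).2 (Filter.Eventually.of_forall hn)),
    integral_Ioi_of_hasDerivAt_of_nonneg' hd hn ht]
  simp

lemma lintegral_exp_mul_opT_iterate {e : R4} (he : ‖e‖ = 1) (m : ℕ) :
    ENNReal.ofReal 4 * ∫⁻ p : R4, ENNReal.ofReal (Real.exp (-‖p‖ ^ 2)) * (opT p)^[m] (nk 2) p =
      ∫⁻ y, nk 3 (e - y) * nk 1 y * (opT0 e)^[m] (nk 2) y := by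
  have h1 : ∫⁻ p : R4, ENNReal.ofReal (Real.exp (-‖p‖ ^ 2)) * (opT p)^[m] (nk 2) p =
      ENNReal.ofReal (Real.pi ^ 2) * (opT e)^[m] (nk 2) e := by
    rw [← lintegral_exp_mul_nk_two, ← lintegral_mul_const _ (by fun_prop)]
    refine lintegral_congr_ae ?_
    filter_upwards [ae_ne_R4 0] with p hp
    rw [opT_iterate_self he hp, mul_assoc]
  have he0 : e ≠ 0 := norm_pos_iff.1 (by rw [he]; exact one_pos)
  have h2 := opT_iterate_opI (p := e) (measurable_nk 2) m e he0
  rw [opT_iterate_congr (fun x hx => opI_nk_two hx) m e he0,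
    opT_iterate_const_mul ENNReal.ofReal_ne_top] at h2
  rw [h1, ← mul_assoc, ← ENNReal.ofReal_mul (by norm_num)]
  exact h2

/-- Distance to the axis spanned by the first basis vector. -/
noncomputable def rad (y : R4) : ℝ := √(y 1 ^ 2 + (y 2 ^ 2 + y 3 ^ 2))

@[fun_prop]
lemma measurable_rad : Measurable rad := by unfold rad; fun_prop

lemma lintegral_R4_eq {f : R4 → ℝ≥0∞} (hf : Measurable f) :
    ∫⁻ y, f y = ∫⁻ a : ℝ, ∫⁻ b : ℝ, ∫⁻ c : ℝ × ℝ, f !₂[a, b, c.1, c.2] := by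
  have hm : Measurable fun y : Fin 4 → ℝ => f (WithLp.toLp 2 y) :=
    hf.comp (MeasurableEquiv.toLp 2 (Fin 4 → ℝ)).measurable
  rw [← (PiLp.volume_preserving_toLp (Fin 4)).lintegral_comp_emb
    (MeasurableEquiv.toLp 2 (Fin 4 → ℝ)).measurableEmbedding, lintegral_fin_cons hm]
  refine lintegral_congr fun a => ?_
  have hm2 : Measurable fun Y : Fin 3 → ℝ => f (WithLp.toLp 2 (Fin.cons a Y : Fin 4 → ℝ)) := by
    refine hm.comp (measurable_pi_lambda _ fun i => ?_)
    refine Fin.cases ?_ (fun j => ?_) i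
    · simp
    · simpa using measurable_pi_apply j
  rw [lintegral_fin_cons hm2]
  refine lintegral_congr fun b => ?_
  rw [← (volume_preserving_finTwoArrow ℝ).symm.lintegral_comp_emb
    (MeasurableEquiv.measurableEmbedding _)]
  refine lintegral_congr fun c => ?_
  congr 2

lemma lintegral_polar_radial {g : ℝ → ℝ≥0∞} (hg : Measurable g) :
    ∫⁻ c : ℝ × ℝ, g (c.1 ^ 2 + c.2 ^ 2) =
      ENNReal.ofReal (2 * Real.pi) * ∫⁻ r in Set.Ioi (0 : ℝ), ENNReal.ofReal r * g (r ^ 2) := by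
  rw [← lintegral_comp_polarCoord_symm, polarCoord_target, Measure.volume_eq_prod,
    ← Measure.prod_restrict, lintegral_prod]
  · rw [← lintegral_const_mul' _ _ ENNReal.ofReal_ne_top]
    refine lintegral_congr fun r => ?_
    have : ∀ φ : ℝ, ENNReal.ofReal r • g
        ((polarCoord.symm (r, φ)).1 ^ 2 + (polarCoord.symm (r, φ)).2 ^ 2)
        = ENNReal.ofReal r * g (r ^ 2) := by
      intro φ
      rw [polarCoord_symm_apply, smul_eq_mul]
      congr 2
      simp only
      linear_combination r ^ 2 * Real.sin_sq_add_cos_sq φ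
    simp only [this, lintegral_const, Measure.restrict_apply_univ, Real.volume_Ioo]
    rw [mul_comm]
    congr 2
    ring
  · refine Measurable.aemeasurable ?_
    have := continuous_polarCoord_symm.measurable
    fun_prop

lemma lintegral_sqrt_add_sq (b : ℝ) (g : ℝ → ℝ≥0∞) :
    ∫⁻ r in Set.Ioi (0 : ℝ), ENNReal.ofReal r * g √(b ^ 2 + r ^ 2) =
      ∫⁻ ρ in Set.Ioi |b|, ENNReal.ofReal ρ * g ρ := by
  have hd : ∀ r ∈ Set.Ioi (0 : ℝ), HasDerivWithinAt (fun r => √(b ^ 2 + r ^ 2))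
      (r / √(b ^ 2 + r ^ 2)) (Set.Ioi 0) r := by
    intro r hr
    replace hr : 0 < r := hr
    have h := (((hasDerivAt_id r).pow 2).const_add (b ^ 2)).sqrt
      (by simp only [id, Pi.pow_apply]; positivity)
    refine HasDerivAt.hasDerivWithinAt ?_
    convert! h using 1
    simp only [id, Pi.pow_apply]
    field_simp
    ring
  have hi : Set.InjOn (fun r => √(b ^ 2 + r ^ 2)) (Set.Ioi 0) := by
    intro r hr s hs h
    replace hr : 0 < r := hr
    replace hs : 0 < s := hs
    have h2 := (Real.sqrt_inj (by positivity) (by positivity)).1 h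
    have h3 : r ^ 2 = s ^ 2 := by linarith
    exact (pow_left_inj₀ hr.le hs.le two_ne_zero).1 h3
  have him : (fun r => √(b ^ 2 + r ^ 2)) '' Set.Ioi 0 = Set.Ioi |b| := by
    ext ρ
    constructor
    · rintro ⟨r, hr, rfl⟩
      replace hr : 0 < r := hr
      exact Real.lt_sqrt_of_sq_lt (by rw [sq_abs]; nlinarith)
    · intro hρ
      have hρ : |b| < ρ := hρ
      have h0 : 0 < ρ := (abs_nonneg b).trans_lt hρ
      have h1 : b ^ 2 < ρ ^ 2 := by
        rw [← sq_abs b]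
        exact pow_lt_pow_left₀ hρ (abs_nonneg _) two_ne_zero
      refine ⟨√(ρ ^ 2 - b ^ 2), Real.sqrt_pos.2 (by linarith), ?_⟩
      simp only
      rw [Real.sq_sqrt (by linarith), add_sub_cancel, Real.sqrt_sq h0.le]
  rw [← him, lintegral_image_eq_lintegral_abs_deriv_mul measurableSet_Ioi hd hi]
  refine setLIntegral_congr_fun measurableSet_Ioi fun r hr => ?_
  replace hr : 0 < r := hr
  rw [← mul_assoc, ← ENNReal.ofReal_mul (abs_nonneg _), abs_of_nonneg (by positivity)]
  congr 2
  field_simp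

lemma lintegral_Ioi_abs_swap {g : ℝ → ℝ → ℝ≥0∞} (hg : Measurable (Function.uncurry g)) :
    ∫⁻ b : ℝ, ∫⁻ ρ in Set.Ioi |b|, g b ρ =
      ∫⁻ ρ in Set.Ioi (0 : ℝ), ∫⁻ b in Set.Ioo (-ρ) ρ, g b ρ := by
  have h1 : ∀ b : ℝ, ∫⁻ ρ in Set.Ioi |b|, g b ρ =
      ∫⁻ ρ in Set.Ioi (0 : ℝ), {p : ℝ × ℝ | |p.1| < p.2}.indicator (Function.uncurry g) (b, ρ) := by
    intro b
    rw [← lintegral_indicator measurableSet_Ioi, ← lintegral_indicator measurableSet_Ioi]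
    refine lintegral_congr fun ρ => ?_
    by_cases h : |b| < ρ
    · have h0 : 0 < ρ := (abs_nonneg b).trans_lt h
      simp [Set.indicator, h, h0, Function.uncurry]
    · simp [Set.indicator, h]
  have h2 : ∀ ρ : ℝ, ∫⁻ b in Set.Ioo (-ρ) ρ, g b ρ =
      ∫⁻ b, {p : ℝ × ℝ | |p.1| < p.2}.indicator (Function.uncurry g) (b, ρ) := by
    intro ρ
    rw [← lintegral_indicator measurableSet_Ioo]
    refine lintegral_congr fun b => ?_
    simp [Set.indicator, abs_lt, Function.uncurry]
  simp_rw [h1, h2]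
  refine lintegral_lintegral_swap (Measurable.aemeasurable ?_)
  exact hg.indicator (measurableSet_lt (by fun_prop) (by fun_prop))

/-- Integration of functions of `y 0`, `y 1` and `rad y` (Archimedes' hat-box theorem). -/
lemma lintegral_hatbox {F : ℝ → ℝ → ℝ → ℝ≥0∞}
    (hF : Measurable fun z : ℝ × ℝ × ℝ => F z.1 z.2.1 z.2.2) :
    ∫⁻ y : R4, F (y 0) (y 1) (rad y) = ENNReal.ofReal (2 * Real.pi) *
      ∫⁻ a : ℝ, ∫⁻ ρ in Set.Ioi (0 : ℝ), ENNReal.ofReal ρ * ∫⁻ t in Set.Ioo (-ρ) ρ, F a t ρ := by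
  have hF' : ∀ {α : Type} [MeasurableSpace α] {f g h : α → ℝ}, Measurable f → Measurable g →
      Measurable h → Measurable fun x => F (f x) (g x) (h x) := fun hf hg hh =>
    hF.comp (hf.prodMk (hg.prodMk hh))
  rw [lintegral_R4_eq (hF' (by fun_prop) (by fun_prop) (by fun_prop)),
    ← lintegral_const_mul' _ _ ENNReal.ofReal_ne_top]
  refine lintegral_congr fun a => ?_
  have h1 : ∀ b : ℝ, ∫⁻ c : ℝ × ℝ, F ((!₂[a, b, c.1, c.2] : R4) 0) ((!₂[a, b, c.1, c.2] : R4) 1)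
      (rad !₂[a, b, c.1, c.2]) = ENNReal.ofReal (2 * Real.pi) *
        ∫⁻ ρ in Set.Ioi |b|, ENNReal.ofReal ρ * F a b ρ := by
    intro b
    rw [← lintegral_sqrt_add_sq b (F a b),
      ← lintegral_polar_radial (g := fun s => F a b √(b ^ 2 + s))
        (hF' (by fun_prop) (by fun_prop) (by fun_prop))]
    rfl
  simp_rw [h1]
  rw [lintegral_const_mul' _ _ ENNReal.ofReal_ne_top, lintegral_Ioi_abs_swap]
  · congr 1
    refine lintegral_congr fun ρ => ?_
    rw [lintegral_const_mul' _ _ ENNReal.ofReal_ne_top]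
  · exact Measurable.mul (by fun_prop) (hF' (by fun_prop) (by fun_prop) (by fun_prop))

/-- Elliptic coordinates on the upper half plane, with foci `0` and `1`. -/
noncomputable def ellip (p : ℝ × ℝ) : ℝ × ℝ :=
  ((1 + Real.cosh p.1 * Real.cos p.2) / 2, Real.sinh p.1 * Real.sin p.2 / 2)

/-- The derivative of `ellip`. -/
noncomputable def ellipDeriv (p : ℝ × ℝ) : ℝ × ℝ →L[ℝ] ℝ × ℝ :=
  (Matrix.toLin (.finTwoProd ℝ) (.finTwoProd ℝ)
    !![Real.sinh p.1 * Real.cos p.2 / 2, -(Real.cosh p.1 * Real.sin p.2 / 2);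
      Real.cosh p.1 * Real.sin p.2 / 2, Real.sinh p.1 * Real.cos p.2 / 2]).toContinuousLinearMap

lemma hasFDerivAt_ellip (p : ℝ × ℝ) : HasFDerivAt ellip (ellipDeriv p) p := by
  unfold ellipDeriv
  rw [Matrix.toLin_finTwoProd_toContinuousLinearMap]
  have hc := (Real.hasDerivAt_cosh p.1).comp_hasFDerivAt p (hasFDerivAt_fst (𝕜 := ℝ) (p := p))
  have hs := (Real.hasDerivAt_sinh p.1).comp_hasFDerivAt p (hasFDerivAt_fst (𝕜 := ℝ) (p := p))
  have hc' := (Real.hasDerivAt_cos p.2).comp_hasFDerivAt p (hasFDerivAt_snd (𝕜 := ℝ) (p := p))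
  have hs' := (Real.hasDerivAt_sin p.2).comp_hasFDerivAt p (hasFDerivAt_snd (𝕜 := ℝ) (p := p))
  have h := (((hc.mul hc').const_add 1).mul_const (2 : ℝ)⁻¹).prodMk
    ((hs.mul hs').mul_const (2 : ℝ)⁻¹)
  refine h.congr_fderiv ?_
  ext <;> simp <;> ring

lemma det_ellipDeriv (p : ℝ × ℝ) :
    (ellipDeriv p).det = (Real.cosh p.1 ^ 2 - Real.cos p.2 ^ 2) / 4 := by
  unfold ellipDeriv
  simp only [LinearMap.det_toContinuousLinearMap, LinearMap.det_toLin, Matrix.det_fin_two_of]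
  linear_combination (-(Real.cos p.2 ^ 2) / 4) * Real.cosh_sq_sub_sinh_sq p.1 +
    Real.cosh p.1 ^ 2 / 4 * Real.sin_sq_add_cos_sq p.2

lemma ellip_injOn : Set.InjOn ellip (Set.Ioi 0 ×ˢ Set.Ioo 0 Real.pi) := by
  rintro ⟨σ, θ⟩ ⟨hσ, hθ⟩ ⟨σ', θ'⟩ ⟨hσ', hθ'⟩ h
  simp only [Set.mem_Ioi, Set.mem_Ioo] at hσ hθ hσ' hθ'
  simp only [ellip, Prod.mk.injEq] at h
  have h1 : Real.cosh σ * Real.cos θ = Real.cosh σ' * Real.cos θ' := by linarith [h.1]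
  have h2 : Real.sinh σ * Real.sin θ = Real.sinh σ' * Real.sin θ' := by linarith [h.2]
  have e1 := Real.cosh_sq σ
  have e2 := Real.cosh_sq σ'
  have e3 := Real.sin_sq_add_cos_sq θ
  have e4 := Real.sin_sq_add_cos_sq θ'
  have p1 := Real.one_lt_cosh.2 hσ.ne'
  have p2 := Real.one_lt_cosh.2 hσ'.ne'
  have q1 := Real.cos_le_one θ
  have q2 := Real.cos_le_one θ'
  have q3 := Real.neg_one_le_cos θ
  have q4 := Real.neg_one_le_cos θ'
  have key : ∀ s t : ℝ, (Real.sinh s * Real.sin t) ^ 2 + (Real.cosh s * Real.cos t) ^ 2 + 1 =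
      Real.cosh s ^ 2 + Real.cos t ^ 2 := fun s t => by
    linear_combination (-(Real.sin t ^ 2)) * Real.cosh_sq s +
      (Real.cosh s ^ 2 - 1) * Real.sin_sq_add_cos_sq t
  have k : Real.cosh σ ^ 2 + Real.cos θ ^ 2 = Real.cosh σ' ^ 2 + Real.cos θ' ^ 2 := by
    rw [← key, ← key, h1, h2]
  have s1 : Real.cosh σ + Real.cos θ = Real.cosh σ' + Real.cos θ' :=
    (pow_left_inj₀ (by linarith) (by linarith) two_ne_zero).1 (by linear_combination k + 2 * h1)
  have s2 : Real.cosh σ - Real.cos θ = Real.cosh σ' - Real.cos θ' :=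
    (pow_left_inj₀ (by linarith) (by linarith) two_ne_zero).1 (by linear_combination k - 2 * h1)
  refine Prod.ext (Real.cosh_injOn hσ.le hσ'.le (by linarith)) ?_
  exact Real.injOn_cos ⟨hθ.1.le, hθ.2.le⟩ ⟨hθ'.1.le, hθ'.2.le⟩ (by linarith)

lemma ellip_image : ellip '' (Set.Ioi 0 ×ˢ Set.Ioo 0 Real.pi) = Set.univ ×ˢ Set.Ioi 0 := by
  ext ⟨a, ρ⟩
  constructor
  · rintro ⟨⟨σ, θ⟩, ⟨hσ, hθ⟩, h⟩
    simp only [Set.mem_Ioi, Set.mem_Ioo] at hσ hθ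
    rw [← h]
    have := Real.sinh_pos_iff.2 hσ
    have := Real.sin_pos_of_mem_Ioo hθ
    exact ⟨trivial, show 0 < Real.sinh σ * Real.sin θ / 2 by positivity⟩
  · rintro ⟨-, hρ⟩
    have hρ : 0 < ρ := hρ
    have hR2 := Real.sq_sqrt (show 0 ≤ a ^ 2 + ρ ^ 2 by positivity)
    have hS2 := Real.sq_sqrt (show 0 ≤ (1 - a) ^ 2 + ρ ^ 2 by positivity)
    have hR : |a| < √(a ^ 2 + ρ ^ 2) := Real.lt_sqrt_of_sq_lt (by rw [sq_abs]; nlinarith)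
    have hS : |1 - a| < √((1 - a) ^ 2 + ρ ^ 2) :=
      Real.lt_sqrt_of_sq_lt (by rw [sq_abs]; nlinarith)
    set R := √(a ^ 2 + ρ ^ 2)
    set S := √((1 - a) ^ 2 + ρ ^ 2)
    obtain ⟨hR1, hR1'⟩ := abs_lt.1 hR
    obtain ⟨hS1, hS1'⟩ := abs_lt.1 hS
    have d1 : R - S < 1 := by nlinarith
    have d2 : -1 < R - S := by nlinarith
    have hc : 1 < R + S := by linarith
    refine ⟨(Real.arcosh (R + S), Real.arccos (R - S)), ⟨Real.arcosh_pos hc,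
      Real.arccos_pos.2 d1, ?_⟩, ?_⟩
    · exact lt_of_le_of_ne (Real.arccos_le_pi _) (fun h => by
        rw [Real.arccos_eq_pi] at h; linarith)
    · simp only [ellip, Real.cosh_arcosh hc.le, Real.sinh_arcosh hc.le,
        Real.cos_arccos d2.le d1.le, Real.sin_arccos]
      refine Prod.ext ?_ ?_
      · simp only
        linear_combination (hR2 - hS2) / 2
      · simp only
        rw [← Real.sqrt_mul (by nlinarith),
          show ((R + S) ^ 2 - 1) * (1 - (R - S) ^ 2) = (2 * ρ) ^ 2 by
            linear_combination (2 - R ^ 2 + 2 * S ^ 2 - (a ^ 2 + ρ ^ 2)) * hR2 +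
              (2 + 2 * (a ^ 2 + ρ ^ 2) - S ^ 2 - ((1 - a) ^ 2 + ρ ^ 2)) * hS2,
          Real.sqrt_sq (by positivity)]
        ring

lemma lintegral_ellip {g : ℝ → ℝ → ℝ≥0∞} (hg : Measurable (Function.uncurry g)) :
    ∫⁻ a : ℝ, ∫⁻ ρ in Set.Ioi (0 : ℝ), g a ρ =
      ∫⁻ σ in Set.Ioi (0 : ℝ), ∫⁻ θ in Set.Ioo 0 Real.pi,
        ENNReal.ofReal ((Real.cosh σ ^ 2 - Real.cos θ ^ 2) / 4) *
          g ((1 + Real.cosh σ * Real.cos θ) / 2) (Real.sinh σ * Real.sin θ / 2) := by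
  have h := lintegral_image_eq_lintegral_abs_det_fderiv_mul (volume : Measure (ℝ × ℝ))
    (measurableSet_Ioi.prod measurableSet_Ioo)
    (fun p _ => (hasFDerivAt_ellip p).hasFDerivWithinAt) ellip_injOn (Function.uncurry g)
  rw [ellip_image, Measure.volume_eq_prod, ← Measure.prod_restrict, Measure.restrict_univ,
    lintegral_prod _ hg.aemeasurable, ← Measure.prod_restrict, lintegral_prod] at h
  · refine h.trans ?_
    refine lintegral_congr fun σ => lintegral_congr fun θ => ?_
    rw [det_ellipDeriv, abs_of_nonneg]
    · rfl
    · have := Real.one_le_cosh σ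
      have := Real.cos_sq_le_one θ
      simp only
      nlinarith
  · simp only [det_ellipDeriv]
    refine Measurable.aemeasurable (Measurable.mul (by fun_prop) (hg.comp ?_))
    unfold ellip
    fun_prop

lemma norm_sq_R4 (y : R4) : ‖y‖ ^ 2 = y 0 ^ 2 + rad y ^ 2 := by
  rw [rad, Real.sq_sqrt (by positivity), EuclideanSpace.real_norm_sq_eq, Fin.sum_univ_four]
  ring

/-- The first basis vector of `R4`. -/
noncomputable def pole : R4 := !₂[1, 0, 0, 0]

/-- The point at height `a` and distance `ρ` from the axis, in a fixed half plane. -/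
noncomputable def axisPt (a ρ : ℝ) : R4 := !₂[a, ρ, 0, 0]

/-- Functions invariant under the rotations fixing the axis. -/
def Axial (φ : R4 → ℝ≥0∞) : Prop :=
  ∀ U : R4 ≃ₗᵢ[ℝ] R4, U pole = pole → ∀ x, φ (U x) = φ x

lemma norm_pole : ‖pole‖ = 1 := by
  rw [pole, EuclideanSpace.norm_eq, Fin.sum_univ_four]; simp

lemma axial_nk (k : ℕ) : Axial (nk k) := fun U _ x => nk_linearIsometry k U x

lemma axial_opT0 {φ : R4 → ℝ≥0∞} (hφ : Axial φ) : Axial (opT0 pole φ) := by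
  intro U hU x
  unfold opT0
  rw [← lintegral_linearIsometry U]
  refine lintegral_congr fun y => ?_
  have h1 : pole - U y = U (pole - y) := by rw [map_sub, hU]
  rw [← map_sub, h1, nk_linearIsometry, nk_linearIsometry, nk_linearIsometry, hφ U hU]

lemma axial_opT0_iterate {φ : R4 → ℝ≥0∞} (hφ : Axial φ) (k : ℕ) :
    Axial ((opT0 pole)^[k] φ) := by
  induction k with
  | zero => exact hφ
  | succ k ih => rw [Function.iterate_succ_apply']; exact axial_opT0 ih

lemma Axial.eq_axisPt {φ : R4 → ℝ≥0∞} (hφ : Axial φ) (x : R4) :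
    φ x = φ (axisPt (x 0) (rad x)) := by
  set w := axisPt (x 0) (rad x)
  have hn : ‖x‖ = ‖w‖ := by
    refine (pow_left_inj₀ (norm_nonneg _) (norm_nonneg _) two_ne_zero).1 ?_
    rw [norm_sq_R4, EuclideanSpace.real_norm_sq_eq, Fin.sum_univ_four]
    simp [w, axisPt]
  have h1 := Submodule.reflection_sub hn
  have h2 : (Submodule.reflection (ℝ ∙ (x - w))ᗮ) pole = pole := by
    refine Submodule.reflection_mem_subspace_eq_self ?_
    rw [Submodule.mem_orthogonal_singleton_iff_inner_right, PiLp.inner_apply, Fin.sum_univ_four]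
    simp [w, axisPt, pole]
  rw [← hφ _ h2 x, h1]

lemma nk_eq_inv_ofReal (k : ℕ) (x : R4) : nk k x = (ENNReal.ofReal (‖x‖ ^ k))⁻¹ := by
  rw [nk, ← ofReal_norm, ENNReal.ofReal_pow (norm_nonneg _)]

lemma norm_axisPt_sub_sq (a r : ℝ) (y : R4) :
    ‖axisPt a r - y‖ ^ 2 = (a - y 0) ^ 2 + r ^ 2 + rad y ^ 2 - 2 * r * y 1 := by
  rw [rad, Real.sq_sqrt (by positivity), EuclideanSpace.real_norm_sq_eq, Fin.sum_univ_four]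
  simp [axisPt]
  ring

lemma norm_R4 (y : R4) : ‖y‖ = √(y 0 ^ 2 + rad y ^ 2) := by
  rw [← norm_sq_R4, Real.sqrt_sq (norm_nonneg _)]

lemma pole_sub_zero (y : R4) : (pole - y) 0 = 1 - y 0 := by simp [pole]

lemma rad_pole_sub (y : R4) : rad (pole - y) = rad y := by simp [pole, rad]

lemma lintegral_Ioo_inv_sub {A r ρ : ℝ} (hr : 0 < r) (hρ : 0 < ρ) (hA : 0 < A - 2 * r * ρ) :
    ∫⁻ t in Set.Ioo (-ρ) ρ, (ENNReal.ofReal (A - 2 * r * t))⁻¹ =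
      ENNReal.ofReal r⁻¹ * ENNReal.ofReal (Real.log ((A + 2 * r * ρ) / (A - 2 * r * ρ)) / 2) := by
  have hpos : ∀ t ∈ Set.Icc (-ρ) ρ, 0 < A - 2 * r * t := by
    intro t ht
    have := mul_le_mul_of_nonneg_left ht.2 (by positivity : 0 ≤ 2 * r)
    linarith
  have hle : -ρ ≤ ρ := by linarith
  have hd : ∀ t ∈ Set.uIcc (-ρ) ρ, HasDerivAt (fun t => -(2 * r)⁻¹ * Real.log (A - 2 * r * t))
      (A - 2 * r * t)⁻¹ t := by
    intro t ht
    rw [Set.uIcc_of_le hle] at ht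
    have h := ((((hasDerivAt_id t).const_mul (2 * r)).const_sub A).log (hpos t ht).ne').const_mul
      (-(2 * r)⁻¹)
    refine h.congr_deriv ?_
    simp only [id]
    have := hpos t ht
    field_simp
  have hi : IntervalIntegrable (fun t => (A - 2 * r * t)⁻¹) volume (-ρ) ρ := by
    refine ContinuousOn.intervalIntegrable ?_
    rw [Set.uIcc_of_le hle]
    exact ContinuousOn.inv₀ (by fun_prop) fun t ht => (hpos t ht).ne'
  have e1 : ∫⁻ t in Set.Ioo (-ρ) ρ, (ENNReal.ofReal (A - 2 * r * t))⁻¹ =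
      ∫⁻ t in Set.Ioc (-ρ) ρ, ENNReal.ofReal (A - 2 * r * t)⁻¹ := by
    rw [setLIntegral_congr Ioo_ae_eq_Ioc]
    refine setLIntegral_congr_fun measurableSet_Ioc fun t ht => ?_
    rw [ENNReal.ofReal_inv_of_pos (hpos t ⟨ht.1.le, ht.2⟩)]
  rw [e1, ← ofReal_integral_eq_lintegral_ofReal hi.1
    ((ae_restrict_iff' measurableSet_Ioc).2 (Filter.Eventually.of_forall fun t ht =>
      (inv_pos.2 (hpos t ⟨ht.1.le, ht.2⟩)).le)), ← intervalIntegral.integral_of_le hle,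
    intervalIntegral.integral_eq_sub_of_hasDerivAt hd hi, ← ENNReal.ofReal_mul (by positivity),
    Real.log_div (by nlinarith) hA.ne']
  congr 1
  rw [show A - 2 * r * -ρ = A + 2 * r * ρ by ring]
  field_simp
  ring

/-- The odd part of the Poisson kernel of the half strip. -/
noncomputable def poissonDiff (τ θ θ' : ℝ) : ℝ :=
  (Real.sinh τ / (Real.cosh τ - Real.cos (θ - θ')) -
    Real.sinh τ / (Real.cosh τ - Real.cos (θ + θ'))) / 4

lemma cos_lt_cosh {τ : ℝ} (hτ : τ ≠ 0) (θ : ℝ) : Real.cos θ < Real.cosh τ :=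
  (Real.cos_le_one θ).trans_lt (Real.one_lt_cosh.2 hτ)

lemma poissonDiff_nonneg {τ θ θ' : ℝ} (hτ : 0 < τ) (hθ : θ ∈ Set.Ioo 0 Real.pi)
    (hθ' : θ' ∈ Set.Ioo 0 Real.pi) : 0 ≤ poissonDiff τ θ θ' := by
  have h1 := cos_lt_cosh hτ.ne' (θ - θ')
  have h2 : Real.cos (θ + θ') ≤ Real.cos (θ - θ') := by
    rw [Real.cos_add, Real.cos_sub]
    have := mul_pos (Real.sin_pos_of_mem_Ioo hθ) (Real.sin_pos_of_mem_Ioo hθ')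
    linarith
  have h3 := Real.sinh_pos_iff.2 hτ
  have : Real.sinh τ / (Real.cosh τ - Real.cos (θ + θ')) ≤
    Real.sinh τ / (Real.cosh τ - Real.cos (θ - θ')) :=
    div_le_div_of_nonneg_left h3.le (by linarith) (by linarith)
  unfold poissonDiff
  linarith

lemma lintegral_poissonDiff {a b θ θ' : ℝ} (ha : 0 < a) (hab : a ≤ b) (hθ : θ ∈ Set.Ioo 0 Real.pi)
    (hθ' : θ' ∈ Set.Ioo 0 Real.pi) :
    2 * ∫⁻ τ in Set.Ioo a b, ENNReal.ofReal (poissonDiff τ θ θ') =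
      ENNReal.ofReal (Real.log ((Real.cosh b - Real.cos (θ - θ')) *
        (Real.cosh a - Real.cos (θ + θ')) / ((Real.cosh b - Real.cos (θ + θ')) *
        (Real.cosh a - Real.cos (θ - θ')))) / 2) := by
  have hd : ∀ τ ∈ Set.uIcc a b, HasDerivAt (fun τ => (Real.log (Real.cosh τ - Real.cos (θ - θ')) -
      Real.log (Real.cosh τ - Real.cos (θ + θ'))) / 4) (poissonDiff τ θ θ') τ := by
    intro τ ht
    rw [Set.uIcc_of_le hab] at ht
    have h0 : τ ≠ 0 := (ha.trans_le ht.1).ne'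
    exact ((((Real.hasDerivAt_cosh τ).sub_const _).log (sub_pos.2 (cos_lt_cosh h0 _)).ne').sub
      (((Real.hasDerivAt_cosh τ).sub_const _).log (sub_pos.2 (cos_lt_cosh h0 _)).ne')).div_const 4
  have hi : IntervalIntegrable (fun τ => poissonDiff τ θ θ') volume a b := by
    refine ContinuousOn.intervalIntegrable ?_
    rw [Set.uIcc_of_le hab]
    unfold poissonDiff
    refine ContinuousOn.div_const (ContinuousOn.sub (ContinuousOn.div (by fun_prop)
        (by fun_prop) ?_)
      (ContinuousOn.div (by fun_prop) (by fun_prop) ?_)) 4 <;>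
    exact fun τ ht => (sub_pos.2 (cos_lt_cosh (ha.trans_le ht.1).ne' _)).ne'
  rw [setLIntegral_congr Ioo_ae_eq_Ioc, ← ofReal_integral_eq_lintegral_ofReal hi.1
    ((ae_restrict_iff' measurableSet_Ioc).2 (Filter.Eventually.of_forall fun t ht =>
      poissonDiff_nonneg (ha.trans ht.1) hθ hθ')), ← intervalIntegral.integral_of_le hab,
    intervalIntegral.integral_eq_sub_of_hasDerivAt hd hi,
    show (2 : ℝ≥0∞) = ENNReal.ofReal 2 by simp, ← ENNReal.ofReal_mul (by norm_num)]
  have p1 := fun c => (sub_pos.2 (cos_lt_cosh ha.ne' c)).ne'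
  have p2 := fun c => (sub_pos.2 (cos_lt_cosh (ha.trans_le hab).ne' c)).ne'
  rw [Real.log_div (mul_ne_zero (p2 _) (p1 _)) (mul_ne_zero (p2 _) (p1 _)),
    Real.log_mul (p2 _) (p1 _), Real.log_mul (p2 _) (p1 _)]
  congr 1
  ring

lemma ellip_dist_sq (σ θ σ' θ' : ℝ) :
    ((1 + Real.cosh σ * Real.cos θ) / 2 - (1 + Real.cosh σ' * Real.cos θ') / 2) ^ 2 +
      (Real.sinh σ * Real.sin θ / 2) ^ 2 + (Real.sinh σ' * Real.sin θ' / 2) ^ 2 -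
      2 * (Real.sinh σ * Real.sin θ / 2) * (Real.sinh σ' * Real.sin θ' / 2) =
    (Real.cosh (σ + σ') - Real.cos (θ + θ')) * (Real.cosh (σ - σ') - Real.cos (θ - θ')) / 4 := by
  rw [Real.cosh_add, Real.cosh_sub, Real.cos_add, Real.cos_sub]
  have u : Real.sinh σ ^ 2 + Real.sin θ' ^ 2 = Real.cosh σ ^ 2 - Real.cos θ' ^ 2 := by
    linear_combination Real.sin_sq_add_cos_sq θ' - Real.cosh_sq σ
  have w : Real.sinh σ' ^ 2 + Real.sin θ ^ 2 = Real.cosh σ' ^ 2 - Real.cos θ ^ 2 := by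
    linear_combination Real.sin_sq_add_cos_sq θ - Real.cosh_sq σ'
  linear_combination (Real.sinh σ' ^ 2 + Real.sin θ ^ 2) / 4 * u +
    (Real.cosh σ ^ 2 - Real.cos θ' ^ 2) / 4 * w

lemma ellip_dist_sq' (σ θ σ' θ' : ℝ) :
    ((1 + Real.cosh σ * Real.cos θ) / 2 - (1 + Real.cosh σ' * Real.cos θ') / 2) ^ 2 +
      (Real.sinh σ * Real.sin θ / 2) ^ 2 + (Real.sinh σ' * Real.sin θ' / 2) ^ 2 +
      2 * (Real.sinh σ * Real.sin θ / 2) * (Real.sinh σ' * Real.sin θ' / 2) =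
    (Real.cosh (σ + σ') - Real.cos (θ - θ')) * (Real.cosh (σ - σ') - Real.cos (θ + θ')) / 4 := by
  have h := ellip_dist_sq σ θ σ' (-θ')
  rw [Real.cos_neg, Real.sin_neg, ← sub_eq_add_neg, sub_neg_eq_add] at h
  rw [← h]
  ring

lemma sqrt_ellip_add {σ : ℝ} (θ : ℝ) :
    √(((1 + Real.cosh σ * Real.cos θ) / 2) ^ 2 + (Real.sinh σ * Real.sin θ / 2) ^ 2) =
      (Real.cosh σ + Real.cos θ) / 2 := by
  rw [show ((1 + Real.cosh σ * Real.cos θ) / 2) ^ 2 + (Real.sinh σ * Real.sin θ / 2) ^ 2 =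
    ((Real.cosh σ + Real.cos θ) / 2) ^ 2 by
      linear_combination (-(Real.sin θ ^ 2) / 4) * Real.cosh_sq σ +
        (Real.cosh σ ^ 2 - 1) / 4 * Real.sin_sq_add_cos_sq θ]
  refine Real.sqrt_sq ?_
  have := Real.one_le_cosh σ
  have := Real.neg_one_le_cos θ
  linarith

lemma sqrt_ellip_sub {σ : ℝ} (θ : ℝ) :
    √((1 - (1 + Real.cosh σ * Real.cos θ) / 2) ^ 2 + (Real.sinh σ * Real.sin θ / 2) ^ 2) =
      (Real.cosh σ - Real.cos θ) / 2 := by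
  have h := sqrt_ellip_add (σ := σ) (Real.pi - θ)
  rw [Real.cos_pi_sub, Real.sin_pi_sub] at h
  rw [← sub_eq_add_neg] at h
  rw [← h]
  ring_nf

lemma measurable_lintegral_Ioo {α : Type*} [MeasurableSpace α] {u v : α → ℝ} {f : α → ℝ → ℝ≥0∞}
    (hu : Measurable u) (hv : Measurable v) (hf : Measurable (Function.uncurry f)) :
    Measurable fun x => ∫⁻ t in Set.Ioo (u x) (v x), f x t := by
  have h : ∀ x, ∫⁻ t in Set.Ioo (u x) (v x), f x t =
      ∫⁻ t, {p : α × ℝ | u p.1 < p.2 ∧ p.2 < v p.1}.indicator (Function.uncurry f) (x, t) := by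
    intro x
    rw [← lintegral_indicator measurableSet_Ioo]
    rfl
  simp_rw [h]
  have hs : MeasurableSet {p : α × ℝ | u p.1 < p.2 ∧ p.2 < v p.1} :=
    (measurableSet_lt (hu.comp measurable_fst) measurable_snd).inter
      (measurableSet_lt measurable_snd (hv.comp measurable_fst))
  exact Measurable.lintegral_prod_right' (hf.indicator hs)

lemma lintegral_axial {H : ℝ → ℝ → ℝ → ℝ≥0∞}
    (hH : Measurable fun z : ℝ × ℝ × ℝ => H z.1 z.2.1 z.2.2) :
    ∫⁻ y : R4, H (y 0) (y 1) (rad y) = ENNReal.ofReal (2 * Real.pi) *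
      ∫⁻ σ in Set.Ioi (0 : ℝ), ∫⁻ θ in Set.Ioo 0 Real.pi,
        ENNReal.ofReal ((Real.cosh σ ^ 2 - Real.cos θ ^ 2) / 4) *
          (ENNReal.ofReal (Real.sinh σ * Real.sin θ / 2) *
            ∫⁻ t in Set.Ioo (-(Real.sinh σ * Real.sin θ / 2)) (Real.sinh σ * Real.sin θ / 2),
              H ((1 + Real.cosh σ * Real.cos θ) / 2) t (Real.sinh σ * Real.sin θ / 2)) := by
  rw [lintegral_hatbox hH, lintegral_ellip
    (g := fun a ρ => ENNReal.ofReal ρ * ∫⁻ t in Set.Ioo (-ρ) ρ, H a t ρ)]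
  refine Measurable.mul (by fun_prop) ?_
  exact measurable_lintegral_Ioo (α := ℝ × ℝ) (u := fun p => -p.2) (v := fun p => p.2)
    (f := fun p t => H p.1 t p.2) (by fun_prop) (by fun_prop)
    (hH.comp (by fun_prop : Measurable fun q : (ℝ × ℝ) × ℝ => (q.1.1, q.2, q.1.2)))

/-- `F` represents the axial function `φ` in elliptic coordinates. -/
def StripRep (φ : R4 → ℝ≥0∞) (F : ℝ → ℝ → ℝ≥0∞) : Prop :=
  ∀ σ > 0, ∀ θ ∈ Set.Ioo 0 Real.pi,
    φ (axisPt ((1 + Real.cosh σ * Real.cos θ) / 2) (Real.sinh σ * Real.sin θ / 2)) =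
      ENNReal.ofReal (Real.sinh σ * Real.sin θ / 2)⁻¹ * F σ θ

lemma ae_restrict_ne (s : Set ℝ) (x : ℝ) : ∀ᵐ y ∂(volume.restrict s), y ≠ x :=
  ae_restrict_of_ae (by simp [ae_iff])

lemma measurable_axisPt {α : Type*} [MeasurableSpace α] {u v : α → ℝ} (hu : Measurable u)
    (hv : Measurable v) : Measurable fun x => axisPt (u x) (v x) := by
  unfold axisPt
  have : Continuous fun p : ℝ × ℝ => (!₂[p.1, p.2, 0, 0] : R4) := by fun_prop
  exact this.measurable.comp (hu.prodMk hv)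

lemma stripRep_opT0 {φ : R4 → ℝ≥0∞} {F : ℝ → ℝ → ℝ≥0∞} (hm : Measurable φ) (hφ : Axial φ)
    (hF : StripRep φ F) : StripRep (opT0 pole φ) fun σ θ => ENNReal.ofReal (4 * Real.pi) *
      ∫⁻ σ' in Set.Ioi (0 : ℝ), ∫⁻ θ' in Set.Ioo 0 Real.pi,
        (∫⁻ τ in Set.Ioo |σ - σ'| (σ + σ'), ENNReal.ofReal (poissonDiff τ θ θ')) *
          F σ' (Real.pi - θ') := by
  intro σ hσ θ hθ
  set a := (1 + Real.cosh σ * Real.cos θ) / 2 with ha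
  set r := Real.sinh σ * Real.sin θ / 2 with hr
  have hr0 : 0 < r := by
    have := Real.sinh_pos_iff.2 hσ
    have := Real.sin_pos_of_mem_Ioo hθ
    positivity
  set H : ℝ → ℝ → ℝ → ℝ≥0∞ := fun b t ρ =>
    (ENNReal.ofReal ((a - b) ^ 2 + r ^ 2 + ρ ^ 2 - 2 * r * t))⁻¹ *
      ((ENNReal.ofReal √(b ^ 2 + ρ ^ 2))⁻¹ * (ENNReal.ofReal √((1 - b) ^ 2 + ρ ^ 2))⁻¹) *
      φ (axisPt (1 - b) ρ) with hH
  have h1 : ∀ y, nk 2 (axisPt a r - y) * (nk 1 y * nk 1 (pole - y)) * φ (pole - y) =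
      H (y 0) (y 1) (rad y) := by
    intro y
    simp only [hH, nk_eq_inv_ofReal, pow_one]
    rw [norm_axisPt_sub_sq, norm_R4, norm_R4 (pole - y), hφ.eq_axisPt (pole - y), pole_sub_zero,
      rad_pole_sub]
  have hmeas : Measurable fun z : ℝ × ℝ × ℝ => H z.1 z.2.1 z.2.2 := by
    simp only [hH]
    refine Measurable.mul (by fun_prop) (hm.comp (measurable_axisPt (by fun_prop) (by fun_prop)))
  refine ((lintegral_congr h1).trans (lintegral_axial hmeas)).trans ?_
  have hfac : ∀ X : ℝ≥0∞, ENNReal.ofReal r⁻¹ * (ENNReal.ofReal (4 * Real.pi) * X) =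
      ENNReal.ofReal (2 * Real.pi) * (ENNReal.ofReal r⁻¹ * ENNReal.ofReal 2 * X) := by
    intro X
    rw [show 4 * Real.pi = 2 * Real.pi * 2 by ring,
      ENNReal.ofReal_mul (p := 2 * Real.pi) (by positivity)]
    ring
  rw [hfac]
  congr 1
  rw [← lintegral_const_mul' _ _ (ENNReal.mul_ne_top ENNReal.ofReal_ne_top ENNReal.ofReal_ne_top)]
  refine lintegral_congr_ae ?_
  filter_upwards [ae_restrict_mem measurableSet_Ioi, ae_restrict_ne _ σ] with σ' hσ' hne
  replace hσ' : 0 < σ' := hσ'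
  rw [← lintegral_const_mul' _ _ (ENNReal.mul_ne_top ENNReal.ofReal_ne_top ENNReal.ofReal_ne_top)]
  refine setLIntegral_congr_fun measurableSet_Ioo fun θ' hθ' => ?_
  simp only [hH]
  set b := (1 + Real.cosh σ' * Real.cos θ') / 2 with hb
  set ρ := Real.sinh σ' * Real.sin θ' / 2 with hρ
  have hρ0 : 0 < ρ := by
    have := Real.sinh_pos_iff.2 hσ'
    have := Real.sin_pos_of_mem_Ioo hθ'
    positivity
  have hθ'' : Real.pi - θ' ∈ Set.Ioo 0 Real.pi := ⟨by linarith [hθ'.2], by linarith [hθ'.1]⟩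
  have hφ' := hF σ' hσ' (Real.pi - θ') hθ''
  rw [Real.cos_pi_sub, Real.sin_pi_sub, show (1 + Real.cosh σ' * -Real.cos θ') / 2 = 1 - b by
    rw [hb]; ring, ← hρ] at hφ'
  rw [hφ', hb, hρ, sqrt_ellip_add, sqrt_ellip_sub, ← hb, ← hρ]
  have hc1 : 0 < (Real.cosh σ' + Real.cos θ') / 2 := by
    have := Real.one_lt_cosh.2 hσ'.ne'
    have := Real.neg_one_le_cos θ'
    linarith
  have hc2 : 0 < (Real.cosh σ' - Real.cos θ') / 2 := by
    have := Real.one_lt_cosh.2 hσ'.ne'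
    have := Real.cos_le_one θ'
    linarith
  rw [lintegral_mul_const _ (by fun_prop), lintegral_mul_const _ (by fun_prop)]
  have hd1 := ellip_dist_sq σ θ σ' θ'
  have hd2 := ellip_dist_sq' σ θ σ' θ'
  rw [← ha, ← hr, ← hb, ← hρ] at hd1 hd2
  have hs : 0 < |σ - σ'| := abs_pos.2 (sub_ne_zero.2 hne.symm)
  have hA : 0 < (a - b) ^ 2 + r ^ 2 + ρ ^ 2 - 2 * r * ρ := by
    rw [hd1]
    exact div_pos (mul_pos (sub_pos.2 (cos_lt_cosh (by positivity) _))
      (sub_pos.2 (cos_lt_cosh (sub_ne_zero.2 hne.symm) _))) (by norm_num)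
  have hgreen := lintegral_poissonDiff hs (b := σ + σ') (by rw [abs_le]; constructor <;> linarith)
    hθ hθ'
  rw [Real.cosh_abs] at hgreen
  rw [lintegral_Ioo_inv_sub hr0 hρ0 hA, hd1, hd2, div_div_div_cancel_right₀ (by norm_num), ← hgreen,
    show (2 : ℝ≥0∞) = ENNReal.ofReal 2 by simp]
  have hjac : ENNReal.ofReal ((Real.cosh σ' ^ 2 - Real.cos θ' ^ 2) / 4) =
      ENNReal.ofReal ((Real.cosh σ' + Real.cos θ') / 2) *
        ENNReal.ofReal ((Real.cosh σ' - Real.cos θ') / 2) := by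
    rw [← ENNReal.ofReal_mul hc1.le]
    congr 1
    ring
  have e1 := ENNReal.mul_inv_cancel (ENNReal.ofReal_pos.2 hc1).ne' ENNReal.ofReal_ne_top
  have e2 := ENNReal.mul_inv_cancel (ENNReal.ofReal_pos.2 hc2).ne' ENNReal.ofReal_ne_top
  have e3 : ENNReal.ofReal ρ * ENNReal.ofReal ρ⁻¹ = 1 := by
    rw [← ENNReal.ofReal_mul hρ0.le, mul_inv_cancel₀ hρ0.ne', ENNReal.ofReal_one]
  rw [hjac]
  generalize ENNReal.ofReal ((Real.cosh σ' + Real.cos θ') / 2) = c₁ at *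
  generalize ENNReal.ofReal ((Real.cosh σ' - Real.cos θ') / 2) = c₂ at *
  generalize ENNReal.ofReal ρ = c₃ at *
  generalize ENNReal.ofReal ρ⁻¹ = c₄ at *
  calc _ = (c₁ * c₁⁻¹) * (c₂ * c₂⁻¹) * (c₃ * c₄) * (ENNReal.ofReal 2 * ENNReal.ofReal r⁻¹ *
        ((∫⁻ τ in Set.Ioo |σ - σ'| (σ + σ'), ENNReal.ofReal (poissonDiff τ θ θ')) *
          F σ' (Real.pi - θ'))) := by ring
    _ = _ := by rw [e1, e2, e3]; ring

/-- The axial image of the kernel `‖x‖⁻²` in elliptic coordinates, with sign `ε`. -/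
noncomputable def stripB (ε τ θ : ℝ) : ℝ :=
  2 * Real.sinh τ * Real.sin θ / (Real.cosh τ - ε * Real.cos θ) ^ 2

lemma stripB_nonneg {ε τ θ : ℝ} (hτ : 0 < τ) (hθ : θ ∈ Set.Ioo 0 Real.pi) : 0 ≤ stripB ε τ θ := by
  have := Real.sinh_pos_iff.2 hτ
  have := Real.sin_pos_of_mem_Ioo hθ
  unfold stripB
  positivity

@[fun_prop]
lemma measurable_stripB {α : Type*} [MeasurableSpace α] {ε : ℝ} {u v : α → ℝ} (hu : Measurable u)
    (hv : Measurable v) : Measurable fun x => stripB ε (u x) (v x) := by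
  unfold stripB
  fun_prop

lemma stripB_pi_sub (ε τ θ : ℝ) : stripB ε τ (Real.pi - θ) = stripB (-ε) τ θ := by
  unfold stripB
  rw [Real.sin_pi_sub, Real.cos_pi_sub]
  ring_nf

lemma stripRep_nk_two : StripRep (nk 2) fun σ θ => ENNReal.ofReal (stripB (-1) σ θ) := by
  intro σ hσ θ hθ
  have h1 := Real.sinh_pos_iff.2 hσ
  have h2 := Real.sin_pos_of_mem_Ioo hθ
  have h3 := Real.one_lt_cosh.2 hσ.ne'
  have h4 := Real.neg_one_le_cos θ
  have h5 : 0 < Real.cosh σ + Real.cos θ := by linarith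
  have hr : rad (axisPt ((1 + Real.cosh σ * Real.cos θ) / 2) (Real.sinh σ * Real.sin θ / 2)) =
      Real.sinh σ * Real.sin θ / 2 := by
    have h : rad (axisPt ((1 + Real.cosh σ * Real.cos θ) / 2) (Real.sinh σ * Real.sin θ / 2)) =
        √((Real.sinh σ * Real.sin θ / 2) ^ 2) := by simp [rad, axisPt]
    rw [h, Real.sqrt_sq (by positivity)]
  rw [nk_eq_inv_ofReal, norm_R4, hr, show (axisPt ((1 + Real.cosh σ * Real.cos θ) / 2)
    (Real.sinh σ * Real.sin θ / 2)) 0 = (1 + Real.cosh σ * Real.cos θ) / 2 by simp [axisPt],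
    sqrt_ellip_add, ← ENNReal.ofReal_inv_of_pos (by positivity),
    ← ENNReal.ofReal_mul (by positivity)]
  congr 1
  unfold stripB
  rw [show Real.cosh σ - -1 * Real.cos θ = Real.cosh σ + Real.cos θ by ring]
  field_simp

lemma lintegral_stripRep {φ : R4 → ℝ≥0∞} {F : ℝ → ℝ → ℝ≥0∞} (hm : Measurable φ) (hφ : Axial φ)
    (hF : StripRep φ F) : ∫⁻ y, nk 3 (pole - y) * nk 1 y * φ y = ENNReal.ofReal (4 * Real.pi) *
      ∫⁻ σ in Set.Ioi (0 : ℝ), ∫⁻ θ in Set.Ioo 0 Real.pi,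
        ENNReal.ofReal (stripB 1 σ θ) * F σ θ := by
  set H : ℝ → ℝ → ℝ → ℝ≥0∞ := fun b _ ρ => (ENNReal.ofReal (√((1 - b) ^ 2 + ρ ^ 2) ^ 3))⁻¹ *
    (ENNReal.ofReal √(b ^ 2 + ρ ^ 2))⁻¹ * φ (axisPt b ρ) with hH
  have h1 : ∀ y, nk 3 (pole - y) * nk 1 y * φ y = H (y 0) (y 1) (rad y) := by
    intro y
    simp only [hH, nk_eq_inv_ofReal, pow_one]
    rw [norm_R4, norm_R4 y, hφ.eq_axisPt y, pole_sub_zero, rad_pole_sub]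
  have hmeas : Measurable fun z : ℝ × ℝ × ℝ => H z.1 z.2.1 z.2.2 := by
    simp only [hH]
    refine Measurable.mul (by fun_prop) (hm.comp (measurable_axisPt (by fun_prop) (by fun_prop)))
  refine ((lintegral_congr h1).trans (lintegral_axial hmeas)).trans ?_
  rw [show 4 * Real.pi = 2 * Real.pi * 2 by ring, ENNReal.ofReal_mul (p := 2 * Real.pi)
    (by positivity), mul_assoc]
  congr 1
  rw [← lintegral_const_mul' _ _ ENNReal.ofReal_ne_top]
  refine setLIntegral_congr_fun measurableSet_Ioi fun σ hσ => ?_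
  replace hσ : 0 < σ := hσ
  rw [← lintegral_const_mul' _ _ ENNReal.ofReal_ne_top]
  refine setLIntegral_congr_fun measurableSet_Ioo fun θ hθ => ?_
  have h1 := Real.sinh_pos_iff.2 hσ
  have h2 := Real.sin_pos_of_mem_Ioo hθ
  have h3 := Real.one_lt_cosh.2 hσ.ne'
  have h4 := Real.neg_one_le_cos θ
  have h4' := Real.cos_le_one θ
  have h5 : 0 < Real.cosh σ + Real.cos θ := by linarith
  have h6 : 0 < Real.cosh σ - Real.cos θ := by linarith
  simp only [hH]
  rw [hF σ hσ θ hθ, sqrt_ellip_add, sqrt_ellip_sub, setLIntegral_const, Real.volume_Ioo,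
    ← ENNReal.ofReal_inv_of_pos (by positivity), ← ENNReal.ofReal_inv_of_pos (by positivity)]
  rw [show (Real.cosh σ ^ 2 - Real.cos θ ^ 2) / 4 =
    (Real.cosh σ + Real.cos θ) / 2 * ((Real.cosh σ - Real.cos θ) / 2) by ring]
  have hB : (Real.cosh σ + Real.cos θ) / 2 * ((Real.cosh σ - Real.cos θ) / 2) *
      (Real.sinh σ * Real.sin θ / 2) * (((Real.cosh σ - Real.cos θ) / 2) ^ 3)⁻¹ *
      ((Real.cosh σ + Real.cos θ) / 2)⁻¹ * (Real.sinh σ * Real.sin θ / 2)⁻¹ *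
      (Real.sinh σ * Real.sin θ / 2 - -(Real.sinh σ * Real.sin θ / 2)) = 2 * stripB 1 σ θ := by
    unfold stripB
    rw [one_mul]
    field_simp
    ring
  have hB' := congrArg ENNReal.ofReal hB
  rw [ENNReal.ofReal_mul (p := 2) (by norm_num), ENNReal.ofReal_mul (by positivity),
    ENNReal.ofReal_mul (by positivity), ENNReal.ofReal_mul (by positivity),
    ENNReal.ofReal_mul (by positivity), ENNReal.ofReal_mul (by positivity)] at hB'
  rw [← mul_assoc (ENNReal.ofReal 2), ← hB']
  ring

lemma hasSum_poisson {τ : ℝ} (hτ : 0 < τ) (α : ℝ) :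
    HasSum (fun n : ℕ => Real.exp (-(n * τ)) * Real.cos (n * α))
      ((Real.sinh τ / (Real.cosh τ - Real.cos α) + 1) / 2) := by
  set z : ℂ := Complex.exp (-τ + α * Complex.I) with hz
  set E := Real.exp (-τ) with hE
  have hE1 : E < 1 := by rw [hE, Real.exp_lt_one_iff]; linarith
  have hE0 : 0 < E := Real.exp_pos _
  have hzn : ‖z‖ < 1 := by rw [hz, Complex.norm_exp]; simpa using hτ
  have h := Complex.hasSum_re (hasSum_geometric_of_norm_lt_one hzn)
  have hre : z.re = E * Real.cos α := by rw [hz, Complex.exp_re]; simp [hE]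
  have him : z.im = E * Real.sin α := by rw [hz, Complex.exp_im]; simp [hE]
  convert! h using 1
  · funext n
    rw [hz, ← Complex.exp_nat_mul, Complex.exp_re]
    simp
  · have hs := Real.sin_sq_add_cos_sq α
    have hns : Complex.normSq (1 - z) = 1 + E ^ 2 - 2 * E * Real.cos α := by
      rw [Complex.normSq_apply]
      simp only [Complex.sub_re, Complex.sub_im, Complex.one_re, Complex.one_im, hre, him]
      linear_combination E ^ 2 * hs
    have hc := cos_lt_cosh hτ.ne' α
    have e1 : Real.exp τ = E⁻¹ := by rw [hE, Real.exp_neg, inv_inv]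
    rw [Real.cosh_eq, e1, ← hE] at hc
    rw [Complex.inv_re, hns, Real.cosh_eq, Real.sinh_eq, e1, ← hE, Complex.sub_re, hre,
      Complex.one_re]
    have hD : 0 < 1 + E ^ 2 - 2 * E * Real.cos α := by
      have : 1 + E ^ 2 - 2 * E * Real.cos α = 2 * E * ((E⁻¹ + E) / 2 - Real.cos α) := by
        field_simp
      rw [this]
      exact mul_pos (by positivity) (by linarith)
    have hD' : (E⁻¹ + E) / 2 - Real.cos α ≠ 0 := by linarith
    have hq : (E⁻¹ - E) / 2 / ((E⁻¹ + E) / 2 - Real.cos α) =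
        (1 - E ^ 2) / (1 + E ^ 2 - 2 * E * Real.cos α) := by
      rw [div_eq_div_iff hD' hD.ne']
      field_simp
    rw [hq]
    set D := 1 + E ^ 2 - 2 * E * Real.cos α with hD_def
    field_simp
    rw [hD_def]
    ring

lemma hasSum_poissonDiff {τ : ℝ} (hτ : 0 < τ) (θ θ' : ℝ) :
    HasSum (fun n : ℕ => (Real.exp (-(n * τ)) * Real.sin (n * θ)) * Real.sin (n * θ'))
      (poissonDiff τ θ θ') := by
  have h := ((hasSum_poisson hτ (θ - θ')).sub (hasSum_poisson hτ (θ + θ'))).div_const 2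
  convert! h using 1
  · funext n
    rw [mul_sub, mul_add, Real.cos_sub, Real.cos_add]
    ring
  · unfold poissonDiff
    ring

lemma hasSum_stripB {ε τ : ℝ} (hε : ε ^ 2 = 1) (hτ : 0 < τ) (θ : ℝ) :
    HasSum (fun n : ℕ => (4 * n * ε ^ (n + 1) * Real.exp (-(n * τ))) * Real.sin (n * θ))
      (stripB ε τ θ) := by
  set z : ℂ := ε * Complex.exp (-τ + θ * Complex.I) with hz
  set E := Real.exp (-τ) with hE
  have hE1 : E < 1 := by rw [hE, Real.exp_lt_one_iff]; linarith
  have hE0 : 0 < E := Real.exp_pos _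
  have hεa : |ε| = 1 :=
    (pow_left_inj₀ (abs_nonneg ε) zero_le_one two_ne_zero).1 (by rw [sq_abs, hε, one_pow])
  have hzn : ‖z‖ < 1 := by
    rw [hz, norm_mul, Complex.norm_exp, Complex.norm_real, Real.norm_eq_abs, hεa]; simpa using hτ
  have h := (Complex.hasSum_im (hasSum_coe_mul_geometric_of_norm_lt_one hzn)).mul_left (4 * ε)
  have hre : z.re = ε * (E * Real.cos θ) := by
    rw [hz, Complex.re_ofReal_mul, Complex.exp_re]; simp [hE]
  have him : z.im = ε * (E * Real.sin θ) := by
    rw [hz, Complex.im_ofReal_mul, Complex.exp_im]; simp [hE]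
  convert! h using 1
  · funext n
    rw [hz, mul_pow, ← Complex.exp_nat_mul, ← Complex.ofReal_natCast, Complex.im_ofReal_mul,
      ← Complex.ofReal_pow, Complex.im_ofReal_mul, Complex.exp_im]
    simp
    ring
  · have hs := Real.sin_sq_add_cos_sq θ
    set D := 1 + E ^ 2 - 2 * ε * E * Real.cos θ with hD
    have hns : Complex.normSq (1 - z) = D := by
      rw [Complex.normSq_apply]
      simp only [Complex.sub_re, Complex.sub_im, Complex.one_re, Complex.one_im, hre, him]
      linear_combination ε ^ 2 * E ^ 2 * hs + E ^ 2 * hε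
    have hD0 : D ≠ 0 := by
      rw [← hns]
      refine Complex.normSq_eq_zero.not.2 fun h0 => ?_
      rw [← sub_eq_zero.1 h0] at hzn
      simp at hzn
    have e1 : Real.exp τ = E⁻¹ := by rw [hE, Real.exp_neg, inv_inv]
    have hq : (E⁻¹ + E) / 2 - ε * Real.cos θ = D / (2 * E) := by
      rw [hD]; field_simp
    have hw : z / (1 - z) ^ 2 = z * (starRingEnd ℂ (1 - z)) ^ 2 * ((D ^ 2)⁻¹ : ℝ) := by
      have hz1 : 1 - z ≠ 0 := fun h0 => hD0 (by rw [← hns, h0, map_zero])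
      have hm : (1 - z) * starRingEnd ℂ (1 - z) = (D : ℂ) := by rw [Complex.mul_conj, hns]
      have hDc : (D : ℂ) ≠ 0 := Complex.ofReal_ne_zero.2 hD0
      rw [div_eq_iff (pow_ne_zero 2 hz1)]
      push_cast
      rw [mul_right_comm, mul_assoc z, ← mul_pow, mul_comm (starRingEnd ℂ _), hm]
      field_simp
    rw [hw, mul_comm _ (((D ^ 2)⁻¹ : ℝ) : ℂ), Complex.im_ofReal_mul]
    unfold stripB
    rw [Real.cosh_eq, Real.sinh_eq, e1, ← hE, hq]
    simp only [pow_two (starRingEnd ℂ _), Complex.mul_im, Complex.mul_re, Complex.conj_re,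
      Complex.conj_im, Complex.sub_re, Complex.sub_im, Complex.one_re, Complex.one_im, hre, him]
    field_simp
    have he4 : ε ^ 4 = 1 := by linear_combination (ε ^ 2 + 1) * hε
    linear_combination 4 * Real.sin θ * E ^ 2 * ε ^ 4 * hs - 4 * Real.sin θ * hε +
      4 * Real.sin θ * E ^ 2 * he4

lemma integral_sin_mul_sin (n m : ℕ) (hn : n ≠ 0) :
    ∫ θ in (0 : ℝ)..Real.pi, Real.sin (n * θ) * Real.sin (m * θ) =
      if n = m then Real.pi / 2 else 0 := by
  have hcos : ∀ k : ℤ, k ≠ 0 → ∫ θ in (0 : ℝ)..Real.pi, Real.cos (k * θ) = 0 := by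
    intro k hk
    have hk' : (k : ℝ) ≠ 0 := by exact_mod_cast hk
    rw [intervalIntegral.integral_comp_mul_left _ hk', integral_cos, Real.sin_int_mul_pi]
    simp
  have h : ∀ θ : ℝ, Real.sin (n * θ) * Real.sin (m * θ) =
      (Real.cos (((n - m : ℤ) : ℝ) * θ) - Real.cos (((n + m : ℤ) : ℝ) * θ)) / 2 := by
    intro θ
    push_cast
    rw [sub_mul, add_mul, Real.cos_sub, Real.cos_add]
    ring
  simp_rw [h]
  rw [intervalIntegral.integral_div, intervalIntegral.integral_sub
    (Continuous.intervalIntegrable (by fun_prop) _ _)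
    (Continuous.intervalIntegrable (by fun_prop) _ _), hcos (n + m) (by omega)]
  split_ifs with hnm
  · subst hnm
    simp
  · rw [hcos (n - m) (by omega)]
    simp

lemma hasSum_integral_mul_sin {a : ℕ → ℝ} (ha : Summable fun n => |a n|) {g : ℝ → ℝ}
    (hg : Continuous g) :
    HasSum (fun n => a n * ∫ θ in (0 : ℝ)..Real.pi, Real.sin (n * θ) * g θ)
      (∫ θ in (0 : ℝ)..Real.pi, (∑' n, a n * Real.sin (n * θ)) * g θ) := by
  obtain ⟨C, hC⟩ := (isCompact_Icc (a := (0 : ℝ)) (b := Real.pi)).exists_bound_of_continuousOn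
    hg.continuousOn
  have hb : ∀ (n : ℕ) (θ : ℝ), |a n * Real.sin (n * θ)| ≤ |a n| := by
    intro n θ
    rw [abs_mul]
    exact mul_le_of_le_one_right (abs_nonneg _) (Real.abs_sin_le_one _)
  have h1 : ∀ n : ℕ, AEStronglyMeasurable (fun θ : ℝ => a n * Real.sin (n * θ) * g θ)
      (volume.restrict (Set.uIoc 0 Real.pi)) := fun n =>
    (((Real.continuous_sin.comp (continuous_const.mul continuous_id)).const_mul
      (a n)).mul hg).aestronglyMeasurable
  have h2 : ∀ n : ℕ, ∀ᵐ θ : ℝ, θ ∈ Set.uIoc 0 Real.pi →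
      ‖a n * Real.sin (n * θ) * g θ‖ ≤ |a n| * C := fun n =>
    Filter.Eventually.of_forall fun θ hθ => by
      rw [Set.uIoc_of_le Real.pi_pos.le] at hθ
      rw [norm_mul]
      exact mul_le_mul (hb n θ) (hC θ ⟨hθ.1.le, hθ.2⟩) (norm_nonneg _) (abs_nonneg _)
  have h3 : ∀ᵐ θ : ℝ, θ ∈ Set.uIoc 0 Real.pi → HasSum (fun n : ℕ => a n * Real.sin (n * θ) * g θ)
      ((∑' n : ℕ, a n * Real.sin (n * θ)) * g θ) :=
    Filter.Eventually.of_forall fun θ _ => by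
      have hs : Summable fun n : ℕ => a n * Real.sin (n * θ) :=
        Summable.of_abs (Summable.of_nonneg_of_le (fun _ => abs_nonneg _) (fun n => hb n θ) ha)
      exact hs.hasSum.mul_right _
  have h := intervalIntegral.hasSum_integral_of_dominated_convergence
    (fun n _ => |a n| * C) h1 h2
    (Filter.Eventually.of_forall fun θ _ => ha.mul_right C) intervalIntegrable_const h3
  have h4 : (fun n : ℕ => a n * ∫ θ in (0 : ℝ)..Real.pi, Real.sin (n * θ) * g θ) =
      fun n : ℕ => ∫ θ in (0 : ℝ)..Real.pi, a n * Real.sin (n * θ) * g θ := by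
    funext n
    rw [← intervalIntegral.integral_const_mul]
    simp_rw [mul_assoc]
  rw [h4]
  exact h

lemma integral_sine_series_mul {a b : ℕ → ℝ} (ha : Summable fun n => |a n|)
    (hb : Summable fun n => |b n|) (a0 : a 0 = 0) :
    ∫ θ in (0 : ℝ)..Real.pi, (∑' n, a n * Real.sin (n * θ)) * ∑' n, b n * Real.sin (n * θ) =
      Real.pi / 2 * ∑' n, a n * b n := by
  have hcont : Continuous fun θ : ℝ => ∑' n : ℕ, b n * Real.sin (n * θ) := by
    refine continuous_tsum (fun n => by fun_prop) hb fun n θ => ?_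
    rw [Real.norm_eq_abs, abs_mul]
    exact mul_le_of_le_one_right (abs_nonneg _) (Real.abs_sin_le_one _)
  rw [← (hasSum_integral_mul_sin ha hcont).tsum_eq, ← tsum_mul_left]
  refine tsum_congr fun n => ?_
  rcases eq_or_ne n 0 with rfl | hn
  · simp [a0]
  have h := (hasSum_integral_mul_sin hb (g := fun θ => Real.sin (n * θ)) (by fun_prop)).tsum_eq
  have h2 : ∀ m : ℕ, b m * ∫ θ in (0 : ℝ)..Real.pi, Real.sin (m * θ) * Real.sin (n * θ) =
      if m = n then b n * (Real.pi / 2) else 0 := by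
    intro m
    simp_rw [mul_comm (Real.sin (m * _))]
    rw [integral_sin_mul_sin n m hn]
    split_ifs with h1 h2 h2
    · rw [h1]
    · exact absurd h1.symm h2
    · exact absurd h2.symm h1
    · simp
  simp_rw [h2] at h
  rw [tsum_ite_eq] at h
  simp_rw [mul_comm (Real.sin _)]
  rw [← h]
  ring

lemma lintegral_sine_series_mul {a b : ℕ → ℝ} (ha : Summable fun n => |a n|)
    (hb : Summable fun n => |b n|) (a0 : a 0 = 0) {f g : ℝ → ℝ}
    (hf : ∀ θ, HasSum (fun n : ℕ => a n * Real.sin (n * θ)) (f θ))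
    (hg : ∀ θ, HasSum (fun n : ℕ => b n * Real.sin (n * θ)) (g θ))
    (hf0 : ∀ θ ∈ Set.Ioo 0 Real.pi, 0 ≤ f θ) (hg0 : ∀ θ ∈ Set.Ioo 0 Real.pi, 0 ≤ g θ) :
    ∫⁻ θ in Set.Ioo 0 Real.pi, ENNReal.ofReal (f θ) * ENNReal.ofReal (g θ) =
      ENNReal.ofReal (Real.pi / 2 * ∑' n, a n * b n) := by
  have hcont : ∀ {c : ℕ → ℝ} {h : ℝ → ℝ}, Summable (fun n => |c n|) →
      (∀ θ, HasSum (fun n : ℕ => c n * Real.sin (n * θ)) (h θ)) → Continuous h := by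
    intro c h hc hh
    have : h = fun θ : ℝ => ∑' n : ℕ, c n * Real.sin (n * θ) := funext fun θ => (hh θ).tsum_eq.symm
    rw [this]
    refine continuous_tsum (fun n => by fun_prop) hc fun n θ => ?_
    rw [Real.norm_eq_abs, abs_mul]
    exact mul_le_of_le_one_right (abs_nonneg _) (Real.abs_sin_le_one _)
  have hfc := hcont ha hf
  have hgc := hcont hb hg
  have hi : IntervalIntegrable (fun θ => f θ * g θ) volume 0 Real.pi :=
    (hfc.mul hgc).intervalIntegrable _ _
  have h1 : ∫⁻ θ in Set.Ioo 0 Real.pi, ENNReal.ofReal (f θ) * ENNReal.ofReal (g θ) =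
      ∫⁻ θ in Set.Ioo 0 Real.pi, ENNReal.ofReal (f θ * g θ) :=
    setLIntegral_congr_fun measurableSet_Ioo fun θ hθ => (ENNReal.ofReal_mul (hf0 θ hθ)).symm
  rw [h1, ← ofReal_integral_eq_lintegral_ofReal (hi.1.mono_set Set.Ioo_subset_Ioc_self)
    ((ae_restrict_iff' measurableSet_Ioo).2 (Filter.Eventually.of_forall fun θ hθ =>
      mul_nonneg (hf0 θ hθ) (hg0 θ hθ))), ← integral_Ioc_eq_integral_Ioo,
    ← intervalIntegral.integral_of_le Real.pi_pos.le, ← integral_sine_series_mul ha hb a0]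
  congr 1
  refine intervalIntegral.integral_congr fun θ _ => ?_
  rw [(hf θ).tsum_eq, (hg θ).tsum_eq]

lemma summable_natCast_pow_mul_exp (k : ℕ) {τ : ℝ} (hτ : 0 < τ) :
    Summable fun n : ℕ => (n : ℝ) ^ k * Real.exp (-(n * τ)) := by
  have h := summable_pow_mul_geometric_of_norm_lt_one k (r := Real.exp (-τ))
    (by rw [Real.norm_eq_abs, abs_of_pos (Real.exp_pos _), Real.exp_lt_one_iff]; linarith)
  refine h.congr fun n => ?_
  rw [← Real.exp_nat_mul]
  ring_nf

lemma summable_poissonDiff_coeff {τ : ℝ} (hτ : 0 < τ) (θ : ℝ) :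
    Summable fun n : ℕ => |Real.exp (-(n * τ)) * Real.sin (n * θ)| := by
  refine Summable.of_nonneg_of_le (fun _ => abs_nonneg _) (fun n => ?_)
    (summable_natCast_pow_mul_exp 0 hτ)
  rw [abs_mul, abs_of_pos (Real.exp_pos _), pow_zero, one_mul]
  exact mul_le_of_le_one_right (Real.exp_pos _).le (Real.abs_sin_le_one _)

lemma summable_stripB_coeff {ε τ : ℝ} (hε : ε ^ 2 = 1) (hτ : 0 < τ) :
    Summable fun n : ℕ => |4 * n * ε ^ (n + 1) * Real.exp (-(n * τ))| := by
  have hεa : |ε| = 1 :=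
    (pow_left_inj₀ (abs_nonneg ε) zero_le_one two_ne_zero).1 (by rw [sq_abs, hε, one_pow])
  have h : Summable fun n : ℕ => 4 * ((n : ℝ) ^ 1 * Real.exp (-(n * τ))) :=
    (summable_natCast_pow_mul_exp 1 hτ).mul_left 4
  refine h.congr fun n => ?_
  rw [abs_mul, abs_mul, abs_pow, hεa, one_pow, abs_of_pos (Real.exp_pos _), mul_one, abs_of_nonneg
    (by positivity)]
  ring

lemma lintegral_poissonDiff_mul_stripB {ε τ τ' θ : ℝ} (hε : ε ^ 2 = 1) (hτ : 0 < τ) (hτ' : 0 < τ')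
    (hθ : θ ∈ Set.Ioo 0 Real.pi) :
    ∫⁻ θ' in Set.Ioo 0 Real.pi,
      ENNReal.ofReal (poissonDiff τ θ θ') * ENNReal.ofReal (stripB ε τ' θ') =
      ENNReal.ofReal (Real.pi / 2) * ENNReal.ofReal (stripB ε (τ + τ') θ) := by
  rw [lintegral_sine_series_mul (summable_poissonDiff_coeff hτ θ) (summable_stripB_coeff hε hτ')
    (by simp) (hasSum_poissonDiff hτ θ) (hasSum_stripB hε hτ')
    (fun θ' hθ' => poissonDiff_nonneg hτ hθ hθ') (fun θ' hθ' => stripB_nonneg hτ' hθ'),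
    ← ENNReal.ofReal_mul (by positivity), ← (hasSum_stripB hε (add_pos hτ hτ') θ).tsum_eq]
  congr 2
  refine tsum_congr fun n => ?_
  rw [mul_add, neg_add, Real.exp_add]
  ring

/-- The function of `σ + τ` which, up to the factor `8π`, is the pairing of `stripB 1 σ` and
`stripB ε τ` over `(0, π)`. -/
noncomputable def stripQ (ε τ : ℝ) : ℝ := ∑' n : ℕ, (n : ℝ) ^ 2 * ε ^ (n + 1) * Real.exp (-(n * τ))

lemma lintegral_stripB_mul_stripB {ε σ τ : ℝ} (hε : ε ^ 2 = 1) (hσ : 0 < σ) (hτ : 0 < τ) :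
    ∫⁻ θ in Set.Ioo 0 Real.pi,
      ENNReal.ofReal (stripB 1 σ θ) * ENNReal.ofReal (stripB ε τ θ) =
      ENNReal.ofReal (8 * Real.pi) * ENNReal.ofReal (stripQ ε (σ + τ)) := by
  rw [lintegral_sine_series_mul (summable_stripB_coeff (one_pow 2) hσ) (summable_stripB_coeff hε hτ)
    (by simp) (hasSum_stripB (one_pow 2) hσ) (hasSum_stripB hε hτ)
    (fun θ' hθ' => stripB_nonneg hσ hθ') (fun θ' hθ' => stripB_nonneg hτ hθ'),
    ← ENNReal.ofReal_mul (by positivity), stripQ, ← tsum_mul_left, ← tsum_mul_left]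
  congr 1
  refine tsum_congr fun n => ?_
  rw [mul_add, neg_add, Real.exp_add, one_pow]
  ring

/-- The indicator of the strict triangle inequalities between `σ`, `s` and `τ`. -/
noncomputable def stripK (σ s τ : ℝ) : ℝ≥0∞ :=
  if 0 < s ∧ |σ - s| < τ ∧ τ < σ + s then 1 else 0

lemma measurable_stripK : Measurable fun p : ℝ × ℝ × ℝ => stripK p.1 p.2.1 p.2.2 := by
  have h1 : MeasurableSet {p : ℝ × ℝ × ℝ | 0 < p.2.1} :=
    measurableSet_lt measurable_const (by fun_prop)
  have h2 : MeasurableSet {p : ℝ × ℝ × ℝ | |p.1 - p.2.1| < p.2.2} :=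
    measurableSet_lt (measurable_fst.sub measurable_snd.fst).norm (by fun_prop)
  have h3 : MeasurableSet {p : ℝ × ℝ × ℝ | p.2.2 < p.1 + p.2.1} :=
    measurableSet_lt (by fun_prop) (by fun_prop)
  exact Measurable.ite (h1.inter (h2.inter h3)) measurable_const measurable_const

lemma lintegral_stripK_mul (σ : ℝ) (f : ℝ → ℝ → ℝ≥0∞) :
    ∫⁻ s, ∫⁻ τ, stripK σ s τ * f s τ =
      ∫⁻ s in Set.Ioi 0, ∫⁻ τ in Set.Ioo |σ - s| (σ + s), f s τ := by
  rw [← lintegral_indicator measurableSet_Ioi]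
  refine lintegral_congr fun s => ?_
  by_cases hs : 0 < s
  · rw [Set.indicator_of_mem (Set.mem_Ioi.2 hs), ← lintegral_indicator measurableSet_Ioo]
    refine lintegral_congr fun τ => ?_
    rw [Set.indicator_apply, stripK]
    simp [hs]
  · rw [Set.indicator_of_notMem (by simpa using hs)]
    simp [stripK, hs]

/-- The iterated averaging operator on functions of the variable dual to the strip. -/
noncomputable def stripL : ℕ → (ℝ → ℝ≥0∞) → ℝ → ℝ≥0∞
  | 0, q, σ => q σ
  | k + 1, q, σ => ∫⁻ s, ∫⁻ τ, stripK σ s τ * stripL k (fun x => q (x + τ)) s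

lemma stripL_succ (k : ℕ) (q : ℝ → ℝ≥0∞) (σ : ℝ) : stripL (k + 1) q σ =
    ∫⁻ s, ∫⁻ τ, stripK σ s τ * stripL k (fun x => q (x + τ)) s := rfl

lemma measurable_uncurry_shift {α : Type*} [MeasurableSpace α] {Q : α → ℝ → ℝ≥0∞}
    (hQ : Measurable (Function.uncurry Q)) :
    Measurable (Function.uncurry fun (p : α × ℝ) x => Q p.1 (x + p.2)) :=
  hQ.comp (measurable_fst.fst.prodMk (measurable_snd.add measurable_fst.snd))

lemma measurable_stripL {α : Type*} [MeasurableSpace α] (k : ℕ) {Q : α → ℝ → ℝ≥0∞}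
    (hQ : Measurable (Function.uncurry Q)) :
    Measurable fun p : α × ℝ => stripL k (Q p.1) p.2 := by
  induction k generalizing α with
  | zero => exact hQ
  | succ k ih =>
    simp only [stripL_succ]
    have h := ih (measurable_uncurry_shift hQ)
    refine Measurable.lintegral_prod_right (f := fun (p : α × ℝ) s =>
      ∫⁻ τ, stripK p.2 s τ * stripL k (fun x => Q p.1 (x + τ)) s) ?_
    refine Measurable.lintegral_prod_right (f := fun (p : (α × ℝ) × ℝ) τ =>
      stripK p.1.2 p.2 τ * stripL k (fun x => Q p.1.1 (x + τ)) p.2) ?_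
    refine Measurable.mul ?_ ?_
    · exact measurable_stripK.comp (measurable_fst.fst.snd.prodMk
        (measurable_fst.snd.prodMk measurable_snd))
    · exact h.comp ((measurable_fst.fst.fst.prodMk measurable_snd).prodMk measurable_fst.snd)

lemma stripL_lintegral {α : Type*} [MeasurableSpace α] (μ : Measure α) [SFinite μ] (k : ℕ)
    {Q : α → ℝ → ℝ≥0∞} (hQ : Measurable (Function.uncurry Q)) (σ : ℝ) :
    stripL k (fun x => ∫⁻ a, Q a x ∂μ) σ = ∫⁻ a, stripL k (Q a) σ ∂μ := by
  induction k generalizing Q σ with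
  | zero => rfl
  | succ k ih =>
    simp only [stripL_succ]
    have hs := measurable_stripL k (measurable_uncurry_shift hQ)
    have hm : Measurable fun p : α × ℝ × ℝ =>
        stripK σ p.2.1 p.2.2 * stripL k (fun x => Q p.1 (x + p.2.2)) p.2.1 := by
      refine Measurable.mul ?_ ?_
      · exact measurable_stripK.comp (measurable_const.prodMk measurable_snd)
      · exact hs.comp ((measurable_fst.prodMk measurable_snd.snd).prodMk measurable_snd.fst)
    symm
    rw [lintegral_lintegral_swap]
    · refine lintegral_congr fun s => ?_
      rw [lintegral_lintegral_swap]
      · refine lintegral_congr fun τ => ?_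
        rw [ih (Q := fun a x => Q a (x + τ))
          (hQ.comp (measurable_fst.prodMk (measurable_snd.add_const τ))), lintegral_const_mul]
        exact hs.comp ((measurable_id.prodMk measurable_const).prodMk measurable_const)
      · exact (hm.comp (measurable_fst.prodMk
          (measurable_const.prodMk measurable_snd))).aemeasurable
    · refine (Measurable.lintegral_prod_right (f := fun (p : α × ℝ) τ =>
        stripK σ p.2 τ * stripL k (fun x => Q p.1 (x + τ)) p.2) ?_).aemeasurable
      exact hm.comp (measurable_fst.fst.prodMk (measurable_fst.snd.prodMk measurable_snd))

lemma stripL_const_mul (k : ℕ) {q : ℝ → ℝ≥0∞} (hq : Measurable q) (c : ℝ≥0∞) (σ : ℝ) :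
    stripL k (fun x => c * q x) σ = c * stripL k q σ := by
  have h := stripL_lintegral (c • Measure.dirac ()) k (Q := fun _ => q)
    (hq.comp measurable_snd) σ
  simpa only [lintegral_smul_measure, lintegral_dirac, smul_eq_mul] using h

lemma stripL_tsum {ι : Type*} [Countable ι] (k : ℕ) {q : ι → ℝ → ℝ≥0∞}
    (hq : ∀ i, Measurable (q i)) (σ : ℝ) :
    stripL k (fun x => ∑' i, q i x) σ = ∑' i, stripL k (q i) σ := by
  let _ : MeasurableSpace ι := ⊤
  have h := stripL_lintegral (Measure.count : Measure ι) k (Q := q)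
    (measurable_from_prod_countable_right hq) σ
  simpa only [lintegral_count] using h

lemma stripL_add (k : ℕ) {q r : ℝ → ℝ≥0∞} (hq : Measurable q) (hr : Measurable r) (σ : ℝ) :
    stripL k (fun x => q x + r x) σ = stripL k q σ + stripL k r σ := by
  have h := stripL_tsum k (q := fun b : Bool => if b then q else r)
    (fun b => by cases b <;> simpa) σ
  simpa [tsum_bool, add_comm] using h

lemma stripL_congr (k : ℕ) {q r : ℝ → ℝ≥0∞} (h : ∀ x, 0 < x → q x = r x) {σ : ℝ} (hσ : 0 < σ) :
    stripL k q σ = stripL k r σ := by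
  induction k generalizing q r σ with
  | zero => exact h σ hσ
  | succ k ih =>
    rw [stripL_succ, stripL_succ]
    refine lintegral_congr fun s => lintegral_congr fun τ => ?_
    rw [stripK]
    split_ifs with hc
    · rw [ih (r := fun x => r (x + τ)) (fun x hx => h _ ?_) hc.1]
      have := (abs_nonneg _).trans_lt hc.2.1
      linarith
    · simp

lemma measurable_uncurry_stripB (ε : ℝ) :
    Measurable (Function.uncurry fun θ x => ENNReal.ofReal (stripB ε x θ)) :=
  ENNReal.measurable_ofReal.comp (measurable_stripB measurable_snd measurable_fst)

lemma measurable_poissonDiff {α : Type*} [MeasurableSpace α] {u v w : α → ℝ} (hu : Measurable u)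
    (hv : Measurable v) (hw : Measurable w) :
    Measurable fun x => ENNReal.ofReal (poissonDiff (u x) (v x) (w x)) := by
  unfold poissonDiff
  fun_prop

lemma measurable_stripL_left {α : Type*} [MeasurableSpace α] (k : ℕ) {Q : α → ℝ → ℝ≥0∞}
    (hQ : Measurable (Function.uncurry Q)) (σ : ℝ) : Measurable fun a => stripL k (Q a) σ := by
  have h : Measurable fun a : α => (a, σ) := measurable_id.prodMk measurable_const
  exact (measurable_stripL k hQ).comp h

lemma lintegral_poissonDiff_mul_stripL {ε : ℝ} (hε : ε ^ 2 = 1) (k : ℕ) {a b s θ : ℝ} (ha : 0 ≤ a)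
    (hs : 0 < s) (hθ : θ ∈ Set.Ioo 0 Real.pi) :
    ∫⁻ θ' in Set.Ioo 0 Real.pi, (∫⁻ τ in Set.Ioo a b, ENNReal.ofReal (poissonDiff τ θ θ')) *
      stripL k (fun x => ENNReal.ofReal (stripB ε x θ')) s =
    ENNReal.ofReal (Real.pi / 2) * ∫⁻ τ in Set.Ioo a b,
      stripL k (fun x => ENNReal.ofReal (stripB ε (x + τ) θ)) s := by
  have hL : Measurable fun θ' => stripL k (fun x => ENNReal.ofReal (stripB ε x θ')) s :=
    measurable_stripL_left k (measurable_uncurry_stripB ε) s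
  have hB : ∀ τ, Measurable fun x => ENNReal.ofReal (stripB ε (x + τ) θ) := fun τ =>
    ENNReal.measurable_ofReal.comp (measurable_stripB (measurable_id.add_const τ) measurable_const)
  have hB0 : ∀ θ', Measurable fun x => ENNReal.ofReal (stripB ε x θ') := fun θ' =>
    ENNReal.measurable_ofReal.comp (measurable_stripB measurable_id measurable_const)
  have h1 : ∀ θ', (∫⁻ τ in Set.Ioo a b, ENNReal.ofReal (poissonDiff τ θ θ')) *
      stripL k (fun x => ENNReal.ofReal (stripB ε x θ')) s =
      ∫⁻ τ in Set.Ioo a b, ENNReal.ofReal (poissonDiff τ θ θ') *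
      stripL k (fun x => ENNReal.ofReal (stripB ε x θ')) s := fun θ' =>
    (lintegral_mul_const _
      (measurable_poissonDiff measurable_id measurable_const measurable_const)).symm
  rw [lintegral_congr h1, lintegral_lintegral_swap,
    ← lintegral_const_mul' _ _ ENNReal.ofReal_ne_top]
  · refine setLIntegral_congr_fun measurableSet_Ioo fun τ hτ => ?_
    have hτ0 : 0 < τ := ha.trans_lt hτ.1
    have hP : Measurable fun θ' => ENNReal.ofReal (poissonDiff τ θ θ') :=
      measurable_poissonDiff measurable_const measurable_const measurable_id
    have h2 : ∀ θ', ENNReal.ofReal (poissonDiff τ θ θ') *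
        stripL k (fun x => ENNReal.ofReal (stripB ε x θ')) s = stripL k (fun x =>
          ENNReal.ofReal (poissonDiff τ θ θ') * ENNReal.ofReal (stripB ε x θ')) s := fun θ' =>
      (stripL_const_mul k (hB0 θ') _ s).symm
    refine (lintegral_congr h2).trans ?_
    rw [← stripL_const_mul k (hB τ),
      ← stripL_lintegral (volume.restrict (Set.Ioo 0 Real.pi)) k (Q := fun θ' x =>
      ENNReal.ofReal (poissonDiff τ θ θ') * ENNReal.ofReal (stripB ε x θ'))]
    · refine stripL_congr k (fun x hx => ?_) hs
      rw [lintegral_poissonDiff_mul_stripB hε hτ0 hx hθ, add_comm]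
    · exact (hP.comp measurable_fst).mul (measurable_uncurry_stripB ε)
  · have h3 : Measurable fun p : ℝ × ℝ => ENNReal.ofReal (poissonDiff p.2 θ p.1) :=
      measurable_poissonDiff measurable_snd measurable_const measurable_fst
    exact (h3.mul (hL.comp measurable_fst)).aemeasurable

lemma neg_one_pow_sq (k : ℕ) : ((-1 : ℝ) ^ k) ^ 2 = 1 := by
  rw [← pow_mul, mul_comm, pow_mul, neg_one_sq, one_pow]

lemma stripRep_opT0_iterate (k : ℕ) : StripRep ((opT0 pole)^[k] (nk 2)) fun σ θ =>
    ENNReal.ofReal (2 * Real.pi ^ 2) ^ k *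
      stripL k (fun x => ENNReal.ofReal (stripB ((-1) ^ (k + 1)) x θ)) σ := by
  induction k with
  | zero => simpa [stripL] using stripRep_nk_two
  | succ k ih =>
    rw [Function.iterate_succ_apply']
    have h := stripRep_opT0 (measurable_opT0_iterate (measurable_nk 2) k)
      (axial_opT0_iterate (axial_nk 2) k) ih
    intro σ hσ θ hθ
    rw [h σ hσ θ hθ]
    congr 1
    simp_rw [stripB_pi_sub]
    have hε : -(-1 : ℝ) ^ (k + 1) = (-1) ^ (k + 1 + 1) := by ring
    rw [hε]
    have h1 : ∀ s ∈ Set.Ioi (0 : ℝ), ∫⁻ θ' in Set.Ioo 0 Real.pi,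
        (∫⁻ τ in Set.Ioo |σ - s| (σ + s), ENNReal.ofReal (poissonDiff τ θ θ')) *
          (ENNReal.ofReal (2 * Real.pi ^ 2) ^ k *
            stripL k (fun x => ENNReal.ofReal (stripB ((-1) ^ (k + 1 + 1)) x θ')) s) =
        (ENNReal.ofReal (2 * Real.pi ^ 2) ^ k * ENNReal.ofReal (Real.pi / 2)) *
          ∫⁻ τ in Set.Ioo |σ - s| (σ + s),
            stripL k (fun x => ENNReal.ofReal (stripB ((-1) ^ (k + 1 + 1)) (x + τ) θ)) s := by
      intro s hs
      rw [mul_assoc, ← lintegral_poissonDiff_mul_stripL (neg_one_pow_sq _) k (abs_nonneg _) hs hθ,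
        ← lintegral_const_mul' _ _ (ENNReal.pow_ne_top ENNReal.ofReal_ne_top)]
      exact lintegral_congr fun θ' => by ring
    rw [setLIntegral_congr_fun measurableSet_Ioi h1, lintegral_const_mul' _ _ (ENNReal.mul_ne_top
      (ENNReal.pow_ne_top ENNReal.ofReal_ne_top) ENNReal.ofReal_ne_top), stripL_succ,
      lintegral_stripK_mul σ (fun s τ =>
        stripL k (fun x => ENNReal.ofReal (stripB ((-1) ^ (k + 1 + 1)) (x + τ) θ)) s),
      ← mul_assoc]
    congr 1
    rw [pow_succ, mul_left_comm, ← ENNReal.ofReal_mul (by positivity)]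
    ring_nf

/-- The weighted total mass of `stripL k` applied to the translates of `q`. -/
noncomputable def stripE (k : ℕ) (q : ℝ → ℝ≥0∞) : ℝ≥0∞ :=
  ∫⁻ σ in Set.Ioi 0, stripL k (fun x => q (σ + x)) σ

lemma measurable_stripL_shift (k : ℕ) {q : ℝ → ℝ≥0∞} (hq : Measurable q) :
    Measurable fun σ => stripL k (fun x => q (σ + x)) σ :=
  (measurable_stripL k (Q := fun σ x => q (σ + x))
    (hq.comp (measurable_fst.add measurable_snd))).comp (measurable_id.prodMk measurable_id)

lemma stripE_const_mul (k : ℕ) {q : ℝ → ℝ≥0∞} (hq : Measurable q) (c : ℝ≥0∞) :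
    stripE k (fun x => c * q x) = c * stripE k q := by
  unfold stripE
  rw [← lintegral_const_mul _ (measurable_stripL_shift k hq)]
  exact lintegral_congr fun σ =>
    stripL_const_mul k (hq.comp (measurable_const.add measurable_id)) c σ

lemma stripE_add (k : ℕ) {q r : ℝ → ℝ≥0∞} (hq : Measurable q) (hr : Measurable r) :
    stripE k (fun x => q x + r x) = stripE k q + stripE k r := by
  unfold stripE
  rw [← lintegral_add_left (measurable_stripL_shift k hq)]
  exact lintegral_congr fun σ => stripL_add k (hq.comp (measurable_const.add measurable_id))
    (hr.comp (measurable_const.add measurable_id)) σ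

lemma stripE_tsum {ι : Type*} [Countable ι] (k : ℕ) {q : ι → ℝ → ℝ≥0∞}
    (hq : ∀ i, Measurable (q i)) : stripE k (fun x => ∑' i, q i x) = ∑' i, stripE k (q i) := by
  unfold stripE
  rw [← lintegral_tsum fun i => (measurable_stripL_shift k (hq i)).aemeasurable]
  exact lintegral_congr fun σ => stripL_tsum k
    (fun i => (hq i).comp (measurable_const.add measurable_id)) σ

lemma stripE_congr (k : ℕ) {q r : ℝ → ℝ≥0∞} (h : ∀ x, 0 < x → q x = r x) :
    stripE k q = stripE k r :=
  setLIntegral_congr_fun measurableSet_Ioi fun _ hσ =>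
    stripL_congr k (fun _ hx => h _ (add_pos hσ hx)) hσ

lemma measurable_stripQ (ε : ℝ) : Measurable fun x => ENNReal.ofReal (stripQ ε x) := by
  unfold stripQ
  refine ENNReal.measurable_ofReal.comp ?_
  fun_prop

lemma lintegral_opT0_iterate_eq_stripE (k : ℕ) :
    ∫⁻ y, nk 3 (pole - y) * nk 1 y * (opT0 pole)^[k] (nk 2) y =
      ENNReal.ofReal (32 * Real.pi ^ 2) * ENNReal.ofReal (2 * Real.pi ^ 2) ^ k *
        stripE k fun x => ENNReal.ofReal (stripQ ((-1) ^ (k + 1)) x) := by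
  have hε := neg_one_pow_sq (k + 1)
  rw [lintegral_stripRep (measurable_opT0_iterate (measurable_nk 2) k)
      (axial_opT0_iterate (axial_nk 2) k) (stripRep_opT0_iterate k)]
  set ε : ℝ := (-1) ^ (k + 1)
  have h : ∀ σ ∈ Set.Ioi (0 : ℝ), ∫⁻ θ in Set.Ioo 0 Real.pi, ENNReal.ofReal (stripB 1 σ θ) *
      (ENNReal.ofReal (2 * Real.pi ^ 2) ^ k * stripL k (fun x => ENNReal.ofReal (stripB ε x θ)) σ) =
      (ENNReal.ofReal (2 * Real.pi ^ 2) ^ k * ENNReal.ofReal (8 * Real.pi)) *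
        stripL k (fun x => ENNReal.ofReal (stripQ ε (σ + x))) σ := by
    intro σ hσ
    have h1 : Measurable fun θ => ENNReal.ofReal (stripB 1 σ θ) :=
      ENNReal.measurable_ofReal.comp (measurable_stripB measurable_const measurable_id)
    have h2 : Measurable fun x => ENNReal.ofReal (stripQ ε (σ + x)) :=
      (measurable_stripQ ε).comp (measurable_const.add measurable_id)
    have h3 : ∀ θ, Measurable fun x => ENNReal.ofReal (stripB ε x θ) := fun θ =>
      ENNReal.measurable_ofReal.comp (measurable_stripB measurable_id measurable_const)
    rw [mul_assoc, ← stripL_const_mul k h2,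
      stripL_congr k (fun x hx => (lintegral_stripB_mul_stripB hε hσ hx).symm) hσ,
      stripL_lintegral _ k (Q := fun θ x =>
        ENNReal.ofReal (stripB 1 σ θ) * ENNReal.ofReal (stripB ε x θ))
        ((h1.comp measurable_fst).mul (measurable_uncurry_stripB ε)),
      ← lintegral_const_mul' _ _ (ENNReal.pow_ne_top ENNReal.ofReal_ne_top)]
    refine lintegral_congr fun θ => ?_
    rw [stripL_const_mul k (h3 θ)]
    ring
  rw [setLIntegral_congr_fun measurableSet_Ioi h, lintegral_const_mul' _ _ (ENNReal.mul_ne_top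
      (ENNReal.pow_ne_top ENNReal.ofReal_ne_top) ENNReal.ofReal_ne_top), ← mul_assoc]
  congr 1
  rw [mul_left_comm, ← ENNReal.ofReal_mul (by positivity), mul_comm]
  ring_nf

/-- The normalised monomial of degree `j` in `2 * p * s`. -/
noncomputable def expMono (p : ℝ) (j : ℕ) (s : ℝ) : ℝ := (2 * p * s) ^ j / j.factorial

lemma continuous_expMono (p : ℝ) (j : ℕ) : Continuous (expMono p j) := by
  unfold expMono
  fun_prop

lemma expMono_nonneg {p s : ℝ} (hp : 0 < p) (hs : 0 ≤ s) (j : ℕ) : 0 ≤ expMono p j s := by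
  unfold expMono
  positivity

lemma hasDerivAt_expMono_succ (p : ℝ) (j : ℕ) (s : ℝ) :
    HasDerivAt (expMono p (j + 1)) (2 * p * expMono p j s) s := by
  have h := (((hasDerivAt_id s).const_mul (2 * p)).pow (j + 1)).div_const ((j + 1).factorial : ℝ)
  have h' : HasDerivAt (expMono p (j + 1)) _ s := h
  refine h'.congr_deriv ?_
  have h1 : ((j + 1 : ℕ) : ℝ) ≠ 0 := by positivity
  have h2 : (j.factorial : ℝ) ≠ 0 := by positivity
  rw [Nat.factorial_succ, expMono]
  push_cast at h1 ⊢
  simp only [id]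
  field_simp

lemma hasDerivAt_exp_neg_mul (c s : ℝ) :
    HasDerivAt (fun s => Real.exp (-(c * s))) (-c * Real.exp (-(c * s))) s := by
  have h : HasDerivAt (fun s => -(c * s)) (-(c * 1)) s := ((hasDerivAt_id s).const_mul c).neg
  refine h.exp.congr_deriv ?_
  ring

lemma hasDerivAt_exp_mul_sum_expMono {p : ℝ} (hp : 0 < p) (j : ℕ) (s : ℝ) :
    HasDerivAt (fun s => -(Real.exp (-(2 * p * s)) * ∑ i ∈ Finset.range (j + 1), expMono p i s
      / (2 * p))) (Real.exp (-(2 * p * s)) * expMono p j s) s := by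
  have he := hasDerivAt_exp_neg_mul (2 * p) s
  induction j with
  | zero =>
    have h := (he.div_const (2 * p)).neg
    convert! h using 1
    · funext s
      simp [expMono]
      field_simp
    · simp only [expMono]
      field_simp
      simp
  | succ j ih =>
    have h := ih.sub (he.mul ((hasDerivAt_expMono_succ p j s).div_const (2 * p)))
    convert! h using 1
    · funext s
      rw [Finset.sum_range_succ _ (j + 1)]
      simp only [Pi.sub_apply, Pi.mul_apply]
      ring
    · field_simp
      ring

lemma tendsto_exp_mul_sum_expMono {p : ℝ} (hp : 0 < p) (j : ℕ) :
    Filter.Tendsto (fun s => -(Real.exp (-(2 * p * s)) * ∑ i ∈ Finset.range (j + 1), expMono p i s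
      / (2 * p))) Filter.atTop (nhds 0) := by
  have h1 : Filter.Tendsto (fun s : ℝ => 2 * p * s) Filter.atTop Filter.atTop :=
    Filter.tendsto_id.const_mul_atTop (by positivity)
  have h2 : ∀ i ∈ Finset.range (j + 1), Filter.Tendsto
      (fun s => Real.exp (-(2 * p * s)) * (expMono p i s / (2 * p))) Filter.atTop (nhds 0) := by
    intro i _
    have h := ((Real.tendsto_pow_mul_exp_neg_atTop_nhds_zero i).comp h1).div_const
      (i.factorial * (2 * p))
    rw [zero_div] at h
    refine h.congr fun s => ?_
    simp only [Function.comp, expMono]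
    field_simp
  have h3 := (tendsto_finsetSum _ h2).neg
  simp only [Finset.sum_const_zero, neg_zero] at h3
  refine h3.congr fun s => ?_
  rw [Finset.mul_sum]

lemma integrableOn_exp_mul_expMono {p a : ℝ} (hp : 0 < p) (ha : 0 ≤ a) (j : ℕ) :
    IntegrableOn (fun s => Real.exp (-(2 * p * s)) * expMono p j s) (Set.Ioi a) :=
  integrableOn_Ioi_deriv_of_nonneg' (fun _ _ => hasDerivAt_exp_mul_sum_expMono hp j _)
    (fun _ hs => mul_nonneg (Real.exp_pos _).le (expMono_nonneg hp (ha.trans (le_of_lt hs)) j))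
    (tendsto_exp_mul_sum_expMono hp j)

lemma integral_exp_mul_expMono {p a : ℝ} (hp : 0 < p) (ha : 0 ≤ a) (j : ℕ) :
    ∫ s in Set.Ioi a, Real.exp (-(2 * p * s)) * expMono p j s =
      Real.exp (-(2 * p * a)) * ∑ i ∈ Finset.range (j + 1), expMono p i a / (2 * p) := by
  rw [integral_Ioi_of_hasDerivAt_of_nonneg' (fun s _ => hasDerivAt_exp_mul_sum_expMono hp j _)
    (fun _ hs => mul_nonneg (Real.exp_pos _).le (expMono_nonneg hp (ha.trans (le_of_lt hs)) j))
    (tendsto_exp_mul_sum_expMono hp j)]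
  ring

lemma integral_exp_mul_expMono_zero {p : ℝ} (hp : 0 < p) (j : ℕ) :
    ∫ s in Set.Ioi 0, Real.exp (-(2 * p * s)) * expMono p j s = 1 / (2 * p) := by
  rw [integral_exp_mul_expMono hp le_rfl, Finset.sum_range_succ']
  simp [expMono]

lemma integral_Ioc_expMono {p σ : ℝ} (hp : 0 < p) (hσ : 0 ≤ σ) (j : ℕ) :
    ∫ s in Set.Ioc 0 σ, expMono p j s = expMono p (j + 1) σ / (2 * p) := by
  rw [← intervalIntegral.integral_of_le hσ, intervalIntegral.integral_eq_sub_of_hasDerivAt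
    (f := fun s => expMono p (j + 1) s / (2 * p))]
  · simp [expMono]
  · intro s _
    refine ((hasDerivAt_expMono_succ p j s).div_const (2 * p)).congr_deriv ?_
    field_simp
  · exact (continuous_expMono p j).intervalIntegrable _ _

lemma lintegral_exp_Ioo {p a b : ℝ} (hp : 0 < p) (hab : a ≤ b) :
    ∫⁻ τ in Set.Ioo a b, ENNReal.ofReal (Real.exp (-(p * τ))) =
      ENNReal.ofReal ((Real.exp (-(p * a)) - Real.exp (-(p * b))) / p) := by
  have hc : Continuous fun τ => Real.exp (-(p * τ)) := by fun_prop
  rw [← ofReal_integral_eq_lintegral_ofReal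
      ((hc.integrableOn_Icc (a := a) (b := b)).mono_set Set.Ioo_subset_Icc_self)
      (Filter.Eventually.of_forall fun τ => (Real.exp_pos _).le), ← integral_Ioc_eq_integral_Ioo,
    ← intervalIntegral.integral_of_le hab, intervalIntegral.integral_eq_sub_of_hasDerivAt
    (f := fun τ => -(Real.exp (-(p * τ)) / p)) _ (hc.intervalIntegrable _ _)]
  · congr 1
    ring
  · intro τ _
    refine ((hasDerivAt_exp_neg_mul p τ).div_const p).neg.congr_deriv ?_
    field_simp

lemma lintegral_kernel_mul_expMono {p σ : ℝ} (hp : 0 < p) (hσ : 0 < σ) (j : ℕ) :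
    ∫⁻ s in Set.Ioi 0,
      ENNReal.ofReal ((Real.exp (-(p * |σ - s|)) - Real.exp (-(p * (σ + s)))) / p) *
      ENNReal.ofReal (Real.exp (-(p * s)) * expMono p j s) =
    ENNReal.ofReal (1 / (2 * p ^ 2) *
      ∑ i ∈ Finset.range (j + 1), Real.exp (-(p * σ)) * expMono p (i + 1) σ) := by
  have hk : ∀ s ∈ Set.Ioi (0 : ℝ),
      0 ≤ (Real.exp (-(p * |σ - s|)) - Real.exp (-(p * (σ + s)))) / p := by
    intro s hs
    replace hs : 0 < s := hs
    refine div_nonneg (sub_nonneg.2 (Real.exp_le_exp.2 (neg_le_neg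
      (mul_le_mul_of_nonneg_left ?_ hp.le)))) hp.le
    rw [abs_le]
    constructor <;> linarith
  have h0 : ∀ s ∈ Set.Ioi (0 : ℝ), 0 ≤ Real.exp (-(p * s)) * expMono p j s := fun s hs =>
    mul_nonneg (Real.exp_pos _).le (expMono_nonneg hp (le_of_lt hs) j)
  have h1 := setLIntegral_congr_fun (μ := volume) measurableSet_Ioi fun s hs =>
    (ENNReal.ofReal_mul (q := Real.exp (-(p * s)) * expMono p j s) (hk s hs)).symm
  refine h1.trans ?_
  set h : ℝ → ℝ := fun s => Real.exp (-(p * σ)) / p * (Real.exp (-(2 * p * s)) * expMono p j s)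
  set f : ℝ → ℝ := fun s => Real.exp (-(p * |σ - s|)) / p * (Real.exp (-(p * s)) * expMono p j s)
  have hfh : ∀ s, (Real.exp (-(p * |σ - s|)) - Real.exp (-(p * (σ + s)))) / p *
      (Real.exp (-(p * s)) * expMono p j s) = f s - h s := by
    intro s
    have : Real.exp (-(p * (σ + s))) * Real.exp (-(p * s)) =
        Real.exp (-(p * σ)) * Real.exp (-(2 * p * s)) := by
      rw [← Real.exp_add, ← Real.exp_add]
      ring_nf
    simp only [f, h]
    linear_combination (-expMono p j s / p) * this
  have hf1 : Set.EqOn f (fun s => Real.exp (-(p * σ)) / p * expMono p j s) (Set.Ioc 0 σ) := by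
    intro s hs
    have : Real.exp (-(p * (σ - s))) * Real.exp (-(p * s)) = Real.exp (-(p * σ)) := by
      rw [← Real.exp_add]
      ring_nf
    simp only [f]
    rw [abs_of_nonneg (sub_nonneg.2 hs.2)]
    linear_combination (expMono p j s / p) * this
  have hf2 : Set.EqOn f (fun s => Real.exp (p * σ) / p * (Real.exp (-(2 * p * s)) * expMono p j s))
      (Set.Ioi σ) := by
    intro s hs
    replace hs : σ < s := hs
    have : Real.exp (-(p * -(σ - s))) * Real.exp (-(p * s)) =
        Real.exp (p * σ) * Real.exp (-(2 * p * s)) := by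
      rw [← Real.exp_add, ← Real.exp_add]
      ring_nf
    simp only [f]
    rw [abs_of_nonpos (by linarith)]
    linear_combination (expMono p j s / p) * this
  have hi1 : IntegrableOn f (Set.Ioc 0 σ) := by
    refine IntegrableOn.congr_fun ?_ hf1.symm measurableSet_Ioc
    exact (((continuous_expMono p j).const_mul _).integrableOn_Icc).mono_set Set.Ioc_subset_Icc_self
  have hi2 : IntegrableOn f (Set.Ioi σ) :=
    IntegrableOn.congr_fun ((integrableOn_exp_mul_expMono hp hσ.le j).const_mul _) hf2.symm
      measurableSet_Ioi
  have hu : Set.Ioi (0 : ℝ) = Set.Ioc 0 σ ∪ Set.Ioi σ := (Set.Ioc_union_Ioi_eq_Ioi hσ.le).symm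
  have hif : IntegrableOn f (Set.Ioi 0) := by
    rw [hu]
    exact hi1.union hi2
  have hih : IntegrableOn h (Set.Ioi 0) := (integrableOn_exp_mul_expMono hp le_rfl j).const_mul _
  have h_int : ∫ s in Set.Ioi 0, (f s - h s) = 1 / (2 * p ^ 2) *
      ∑ i ∈ Finset.range (j + 1), Real.exp (-(p * σ)) * expMono p (i + 1) σ := by
    rw [integral_sub hif hih]
    simp only [h]
    rw [integral_const_mul, integral_exp_mul_expMono_zero hp, hu, setIntegral_union
      (Set.Ioc_disjoint_Ioi le_rfl) measurableSet_Ioi hi1 hi2,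
      setIntegral_congr_fun measurableSet_Ioc hf1, setIntegral_congr_fun measurableSet_Ioi hf2,
      integral_const_mul, integral_const_mul, integral_Ioc_expMono hp hσ.le,
      integral_exp_mul_expMono hp hσ.le, ← Finset.mul_sum, ← Finset.sum_div]
    have he : Real.exp (p * σ) * Real.exp (-(2 * p * σ)) = Real.exp (-(p * σ)) := by
      rw [← Real.exp_add]
      ring_nf
    have he2 : Real.exp (p * σ) / p * (Real.exp (-(2 * p * σ)) *
        ((∑ i ∈ Finset.range (j + 1), expMono p i σ) / (2 * p))) = Real.exp (-(p * σ)) / p *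
        ((∑ i ∈ Finset.range (j + 1), expMono p i σ) / (2 * p)) := by
      rw [← he]
      ring
    rw [he2]
    have hs : ∑ i ∈ Finset.range (j + 1), expMono p i σ + expMono p (j + 1) σ =
        ∑ i ∈ Finset.range (j + 1), expMono p (i + 1) σ + 1 := by
      rw [← Finset.sum_range_succ, Finset.sum_range_succ']
      simp [expMono]
    field_simp
    linear_combination hs
  rw [← h_int, ofReal_integral_eq_lintegral_ofReal (f := fun s => f s - h s) (hif.sub hih)]
  · simp only [hfh]
  · refine (ae_restrict_iff' measurableSet_Ioi).2 (Filter.Eventually.of_forall fun s hs => ?_)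
    simp only [← hfh, Pi.zero_apply]
    exact mul_nonneg (hk s hs) (h0 s hs)

/-- The entries of the Catalan triangle. -/
noncomputable def ballot (m r : ℕ) : ℝ :=
  (m + 1 - r) * (m + r).factorial / ((m + 1).factorial * r.factorial)

lemma ballot_nonneg {m r : ℕ} (h : r ≤ m + 1) : 0 ≤ ballot m r := by
  have : (r : ℝ) ≤ m + 1 := by exact_mod_cast h
  unfold ballot
  refine div_nonneg (mul_nonneg (by linarith) (by positivity)) (by positivity)

lemma sum_range_ballot (m r : ℕ) :
    ∑ i ∈ Finset.range (r + 1), ballot m i = ballot (m + 1) r := by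
  induction r with
  | zero =>
    simp only [zero_add, Finset.range_one, Finset.sum_singleton, ballot]
    rw [Nat.factorial_succ (m + 1), add_zero, add_zero, Nat.factorial_succ m]
    have : (m.factorial : ℝ) ≠ 0 := by positivity
    push_cast
    field_simp
    ring
  | succ r ih =>
    rw [Finset.sum_range_succ, ih]
    simp only [ballot]
    rw [Nat.factorial_succ (m + 1), Nat.factorial_succ r, show m + 1 + r = m + r + 1 by ring,
      show m + (r + 1) = m + r + 1 by ring, show m + 1 + (r + 1) = m + r + 1 + 1 by ring,
        Nat.factorial_succ (m + r + 1), Nat.factorial_succ (m + r), Nat.factorial_succ m]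
    have h1 : (m.factorial : ℝ) ≠ 0 := by positivity
    have h2 : (r.factorial : ℝ) ≠ 0 := by positivity
    have h3 : (m : ℝ) + 1 + 1 ≠ 0 := by positivity
    push_cast
    field_simp
    ring

lemma ballot_self_succ (m : ℕ) : ballot m (m + 1) = 0 := by
  simp [ballot]

lemma sum_ballot_mul_sum (m : ℕ) (g : ℕ → ℝ) :
    ∑ r ∈ Finset.range (m + 2), ballot m r * ∑ i ∈ Finset.range (m + 1 - r + 1), g (i + 1) =
      ∑ r ∈ Finset.range (m + 2), ballot (m + 1) r * g (m + 2 - r) := by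
  have h1 : ∀ r ∈ Finset.Ico 0 (m + 2), ballot m r * ∑ i ∈ Finset.range (m + 1 - r + 1), g (i + 1) =
      ∑ j ∈ Finset.Ico r (m + 2), ballot m r * g (m + 2 - j) := by
    intro r hr
    have hr' := (Finset.mem_Ico.1 hr).2
    rw [← Finset.mul_sum, Finset.sum_Ico_eq_sum_range, show m + 2 - r = m + 1 - r + 1 by omega,
      ← Finset.sum_range_reflect]
    congr 1
    refine Finset.sum_congr rfl fun i hi => ?_
    rw [Finset.mem_range] at hi
    congr 1
    omega
  rw [Finset.range_eq_Ico, Finset.sum_congr rfl h1, Finset.sum_Ico_Ico_comm]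
  refine Finset.sum_congr rfl fun j _ => ?_
  rw [← Finset.sum_mul, ← Finset.range_eq_Ico, sum_range_ballot]

/-- The image of `exp (-p σ)` under iterates of `stripL`: an exponential times a polynomial. -/
noncomputable def expPoly (p : ℝ) (m : ℕ) (σ : ℝ) : ℝ :=
  (1 / (2 * p ^ 2)) ^ (m + 1) *
    ∑ r ∈ Finset.range (m + 2), ballot m r * (Real.exp (-(p * σ)) * expMono p (m + 1 - r) σ)

lemma stripL_succ_exp (k : ℕ) {p σ : ℝ} (hp : 0 < p) (hσ : 0 < σ) :
    stripL (k + 1) (fun x => ENNReal.ofReal (Real.exp (-(p * x)))) σ =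
      ∫⁻ s in Set.Ioi 0,
        ENNReal.ofReal ((Real.exp (-(p * |σ - s|)) - Real.exp (-(p * (σ + s)))) / p) *
        stripL k (fun x => ENNReal.ofReal (Real.exp (-(p * x)))) s := by
  have hm : Measurable fun x => ENNReal.ofReal (Real.exp (-(p * x))) := by fun_prop
  rw [stripL_succ, lintegral_stripK_mul σ (fun s τ =>
    stripL k (fun x => ENNReal.ofReal (Real.exp (-(p * (x + τ))))) s)]
  refine setLIntegral_congr_fun measurableSet_Ioi fun s hs => ?_
  replace hs : 0 < s := hs
  have h1 : ∀ τ, stripL k (fun x => ENNReal.ofReal (Real.exp (-(p * (x + τ))))) s =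
      ENNReal.ofReal (Real.exp (-(p * τ))) *
        stripL k (fun x => ENNReal.ofReal (Real.exp (-(p * x)))) s := by
    intro τ
    rw [← stripL_const_mul k hm]
    congr 1
    funext x
    rw [← ENNReal.ofReal_mul (Real.exp_pos _).le, ← Real.exp_add]
    ring_nf
  refine (lintegral_congr h1).trans ?_
  rw [lintegral_mul_const _ (by fun_prop), lintegral_exp_Ioo hp]
  rw [abs_le]
  constructor <;> linarith

lemma ofReal_expPoly {p σ : ℝ} (hp : 0 < p) (hσ : 0 < σ) (m : ℕ) :
    ENNReal.ofReal (expPoly p m σ) = ∑ r ∈ Finset.range (m + 2),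
      ENNReal.ofReal ((1 / (2 * p ^ 2)) ^ (m + 1) * ballot m r) *
        ENNReal.ofReal (Real.exp (-(p * σ)) * expMono p (m + 1 - r) σ) := by
  have hb : ∀ r ∈ Finset.range (m + 2), 0 ≤ (1 / (2 * p ^ 2)) ^ (m + 1) * ballot m r := fun r hr =>
    mul_nonneg (by positivity) (ballot_nonneg (by rw [Finset.mem_range] at hr; omega))
  have he : ∀ j, 0 ≤ Real.exp (-(p * σ)) * expMono p j σ := fun j =>
    mul_nonneg (Real.exp_pos _).le (expMono_nonneg hp hσ.le j)
  rw [expPoly, Finset.mul_sum, ENNReal.ofReal_sum_of_nonneg]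
  · refine Finset.sum_congr rfl fun r hr => ?_
    rw [← ENNReal.ofReal_mul (hb r hr), mul_assoc]
  · intro r hr
    rw [← mul_assoc]
    exact mul_nonneg (hb r hr) (he _)

lemma stripL_exp {p σ : ℝ} (hp : 0 < p) (hσ : 0 < σ) (m : ℕ) :
    stripL (m + 1) (fun x => ENNReal.ofReal (Real.exp (-(p * x)))) σ =
      ENNReal.ofReal (expPoly p m σ) := by
  induction m generalizing σ with
  | zero =>
    rw [stripL_succ_exp 0 hp hσ]
    have h := lintegral_kernel_mul_expMono hp hσ 0
    simp only [expMono, pow_zero, Nat.factorial_zero, Nat.cast_one, div_one, mul_one] at h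
    refine h.trans ?_
    simp [expPoly, ballot, expMono, Finset.sum_range_succ]
  | succ m ih =>
    rw [stripL_succ_exp (m + 1) hp hσ]
    have h1 : ∀ s ∈ Set.Ioi (0 : ℝ),
        ENNReal.ofReal ((Real.exp (-(p * |σ - s|)) - Real.exp (-(p * (σ + s)))) / p) *
          stripL (m + 1) (fun x => ENNReal.ofReal (Real.exp (-(p * x)))) s =
        ∑ r ∈ Finset.range (m + 2), ENNReal.ofReal ((1 / (2 * p ^ 2)) ^ (m + 1) * ballot m r) *
          (ENNReal.ofReal ((Real.exp (-(p * |σ - s|)) - Real.exp (-(p * (σ + s)))) / p) *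
            ENNReal.ofReal (Real.exp (-(p * s)) * expMono p (m + 1 - r) s)) := by
      intro s hs
      rw [ih hs, ofReal_expPoly hp hs, Finset.mul_sum]
      exact Finset.sum_congr rfl fun r _ => by ring
    have hc := continuous_expMono p
    have hM : ∀ j, Measurable fun s : ℝ =>
        ENNReal.ofReal ((Real.exp (-(p * |σ - s|)) - Real.exp (-(p * (σ + s)))) / p) *
          ENNReal.ofReal (Real.exp (-(p * s)) * expMono p j s) := by
      intro j
      have h2 : Continuous fun s : ℝ =>
          (Real.exp (-(p * |σ - s|)) - Real.exp (-(p * (σ + s)))) / p := by fun_prop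
      have h3 : Continuous fun s : ℝ => Real.exp (-(p * s)) * expMono p j s :=
        (by fun_prop : Continuous fun s : ℝ => Real.exp (-(p * s))).mul (hc j)
      exact h2.measurable.ennreal_ofReal.mul h3.measurable.ennreal_ofReal
    have hb : ∀ r ∈ Finset.range (m + 2), 0 ≤ (1 / (2 * p ^ 2)) ^ (m + 1) * ballot m r :=
      fun r hr => mul_nonneg (by positivity)
        (ballot_nonneg (by rw [Finset.mem_range] at hr; omega))
    have he : ∀ j, 0 ≤ Real.exp (-(p * σ)) * expMono p j σ := fun j =>
      mul_nonneg (Real.exp_pos _).le (expMono_nonneg hp hσ.le j)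
    rw [setLIntegral_congr_fun measurableSet_Ioi h1,
      lintegral_finsetSum _ fun r _ => (hM _).const_mul _]
    simp_rw [lintegral_const_mul _ (hM _), lintegral_kernel_mul_expMono hp hσ]
    have h4 : ∀ r ∈ Finset.range (m + 2),
        ENNReal.ofReal ((1 / (2 * p ^ 2)) ^ (m + 1) * ballot m r) *
        ENNReal.ofReal (1 / (2 * p ^ 2) * ∑ i ∈ Finset.range (m + 1 - r + 1),
          Real.exp (-(p * σ)) * expMono p (i + 1) σ) =
        ENNReal.ofReal ((1 / (2 * p ^ 2)) ^ (m + 2) * (ballot m r *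
          ∑ i ∈ Finset.range (m + 1 - r + 1), Real.exp (-(p * σ)) * expMono p (i + 1) σ)) := by
      intro r hr
      rw [← ENNReal.ofReal_mul (hb r hr)]
      congr 1
      ring
    rw [Finset.sum_congr rfl h4, ← ENNReal.ofReal_sum_of_nonneg, ← Finset.mul_sum,
      sum_ballot_mul_sum m (fun i => Real.exp (-(p * σ)) * expMono p i σ), expPoly,
      Finset.sum_range_succ _ (m + 2), ballot_self_succ, zero_mul, add_zero]
    intro r hr
    refine mul_nonneg (by positivity) (mul_nonneg
      (ballot_nonneg (by rw [Finset.mem_range] at hr; omega)) (Finset.sum_nonneg fun i _ => he _))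

lemma stripE_exp {p : ℝ} (hp : 0 < p) (m : ℕ) :
    stripE (m + 1) (fun x => ENNReal.ofReal (Real.exp (-(p * x)))) =
      ENNReal.ofReal ((2 * m + 2).factorial / ((m + 2).factorial * (m + 1).factorial) /
        (2 ^ (m + 2) * p ^ (2 * m + 3))) := by
  have hc := continuous_expMono p
  have hM : ∀ j, Measurable fun s : ℝ =>
      ENNReal.ofReal (Real.exp (-(2 * p * s)) * expMono p j s) := by
    intro j
    have h3 : Continuous fun s : ℝ => Real.exp (-(2 * p * s)) * expMono p j s :=
      (by fun_prop : Continuous fun s : ℝ => Real.exp (-(2 * p * s))).mul (hc j)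
    exact h3.measurable.ennreal_ofReal
  have hb : ∀ r ∈ Finset.range (m + 2), 0 ≤ (1 / (2 * p ^ 2)) ^ (m + 1) * ballot m r :=
    fun r hr => mul_nonneg (by positivity)
      (ballot_nonneg (by rw [Finset.mem_range] at hr; omega))
  have h1 : ∀ σ ∈ Set.Ioi (0 : ℝ),
      stripL (m + 1) (fun x => ENNReal.ofReal (Real.exp (-(p * (σ + x))))) σ =
      ∑ r ∈ Finset.range (m + 2), ENNReal.ofReal ((1 / (2 * p ^ 2)) ^ (m + 1) * ballot m r) *
          ENNReal.ofReal (Real.exp (-(2 * p * σ)) * expMono p (m + 1 - r) σ) := by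
    intro σ hσ
    have h2 : (fun x => ENNReal.ofReal (Real.exp (-(p * (σ + x))))) = fun x =>
        ENNReal.ofReal (Real.exp (-(p * σ))) * ENNReal.ofReal (Real.exp (-(p * x))) := by
      funext x
      rw [← ENNReal.ofReal_mul (Real.exp_pos _).le, ← Real.exp_add]
      ring_nf
    rw [h2, stripL_const_mul (m + 1) (by fun_prop), stripL_exp hp hσ, ofReal_expPoly hp hσ,
      Finset.mul_sum]
    refine Finset.sum_congr rfl fun r _ => ?_
    rw [mul_left_comm, ← ENNReal.ofReal_mul (Real.exp_pos _).le, ← mul_assoc (Real.exp _),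
      ← Real.exp_add]
    ring_nf
  have h5 : ∀ j, ∫⁻ σ in Set.Ioi 0, ENNReal.ofReal (Real.exp (-(2 * p * σ)) * expMono p j σ) =
      ENNReal.ofReal (1 / (2 * p)) := by
    intro j
    rw [← integral_exp_mul_expMono_zero hp j,
      ofReal_integral_eq_lintegral_ofReal (integrableOn_exp_mul_expMono hp le_rfl j)]
    exact (ae_restrict_iff' measurableSet_Ioi).2 (Filter.Eventually.of_forall fun s hs =>
      mul_nonneg (Real.exp_pos _).le (expMono_nonneg hp (le_of_lt hs) j))
  rw [stripE, setLIntegral_congr_fun measurableSet_Ioi h1,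
      lintegral_finsetSum _ fun r _ => (hM _).const_mul _]
  simp_rw [lintegral_const_mul _ (hM _), h5]
  rw [← Finset.sum_mul, ← ENNReal.ofReal_sum_of_nonneg hb, ← ENNReal.ofReal_mul
    (Finset.sum_nonneg hb), ← Finset.mul_sum, sum_range_ballot, ballot]
  congr 1
  rw [show m + 1 + (m + 1) = 2 * m + 2 by ring]
  push_cast
  have hp' := hp.ne'
  rw [one_div_pow, mul_pow, ← pow_mul]
  field_simp
  ring

lemma summable_stripQ {ε x : ℝ} (hε : ε ^ 2 = 1) (hx : 0 < x) :
    Summable fun n : ℕ => (n : ℝ) ^ 2 * ε ^ (n + 1) * Real.exp (-(n * x)) := by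
  have hεa : |ε| = 1 :=
    (pow_left_inj₀ (abs_nonneg ε) zero_le_one two_ne_zero).1 (by rw [sq_abs, hε, one_pow])
  refine Summable.of_abs ((summable_natCast_pow_mul_exp 2 hx).congr fun n => ?_)
  rw [abs_mul, abs_mul, abs_pow, abs_pow, hεa, one_pow, abs_of_pos (Real.exp_pos _), mul_one,
    Nat.abs_cast]

lemma stripQ_nonneg {ε x : ℝ} (hε : ε ^ 2 = 1) (hx : 0 < x) : 0 ≤ stripQ ε x := by
  have hx2 : 0 < x / 2 := by positivity
  have h := integral_sine_series_mul (summable_stripB_coeff (one_pow 2) hx2)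
    (summable_stripB_coeff hε hx2) (by simp)
  have hB : ∀ ε' : ℝ, ∀ θ ∈ Set.Icc 0 Real.pi, 0 ≤ stripB ε' (x / 2) θ := by
    intro ε' θ hθ
    have h1 := Real.sin_nonneg_of_nonneg_of_le_pi hθ.1 hθ.2
    have h2 := Real.sinh_pos_iff.2 hx2
    unfold stripB
    positivity
  simp_rw [(hasSum_stripB (one_pow 2) hx2 _).tsum_eq, (hasSum_stripB hε hx2 _).tsum_eq] at h
  have h1 : ∑' n : ℕ, 4 * (n : ℝ) * 1 ^ (n + 1) * Real.exp (-(n * (x / 2))) *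
      (4 * n * ε ^ (n + 1) * Real.exp (-(n * (x / 2)))) = 16 * stripQ ε x := by
    rw [stripQ, ← tsum_mul_left]
    refine tsum_congr fun n => ?_
    have he : Real.exp (-(n * x)) = Real.exp (-(n * (x / 2))) * Real.exp (-(n * (x / 2))) := by
      rw [← Real.exp_add]
      ring_nf
    rw [he, one_pow]
    ring
  rw [h1] at h
  have h2 : 0 ≤ Real.pi / 2 * (16 * stripQ ε x) := by
    rw [← h]
    exact intervalIntegral.integral_nonneg Real.pi_pos.le fun θ hθ =>
      mul_nonneg (hB _ θ hθ) (hB _ θ hθ)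
  have h3 : 0 < Real.pi / 2 := by positivity
  have := nonneg_of_mul_nonneg_right h2 h3
  linarith

lemma stripQ_neg_one_add {x : ℝ} (hx : 0 < x) :
    stripQ (-1) x + 8 * stripQ 1 (2 * x) = stripQ 1 x := by
  have h1 := summable_stripQ (one_pow 2) hx
  have h2 := summable_stripQ (ε := -1) (by norm_num) hx
  have h3 : stripQ 1 x - stripQ (-1) x =
      ∑' n : ℕ, (n : ℝ) ^ 2 * (1 + (-1) ^ n) * Real.exp (-(n * x)) := by
    rw [stripQ, stripQ, ← h1.tsum_sub h2]
    refine tsum_congr fun n => ?_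
    rw [one_pow, pow_succ (-1 : ℝ)]
    ring
  have hs : Summable fun n : ℕ => (n : ℝ) ^ 2 * (1 + (-1) ^ n) * Real.exp (-(n * x)) :=
    (h1.sub h2).congr fun n => by
      rw [one_pow, pow_succ (-1 : ℝ)]
      ring
  have h4 := tsum_even_add_odd (f := fun n : ℕ =>
      (n : ℝ) ^ 2 * (1 + (-1) ^ n) * Real.exp (-(n * x)))
    (hs.comp_injective fun a b h => by simpa using h)
    (hs.comp_injective fun a b h => by simpa using h)
  have h5 : ∀ k : ℕ, ((2 * k + 1 : ℕ) : ℝ) ^ 2 * (1 + (-1) ^ (2 * k + 1)) *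
      Real.exp (-((2 * k + 1 : ℕ) * x)) = 0 := by
    intro k
    rw [pow_succ (-1 : ℝ), pow_mul]
    simp
  have h6 : ∀ k : ℕ, ((2 * k : ℕ) : ℝ) ^ 2 * (1 + (-1) ^ (2 * k)) *
      Real.exp (-((2 * k : ℕ) * x)) =
        8 * ((k : ℝ) ^ 2 * 1 ^ (k + 1) * Real.exp (-(k * (2 * x)))) := by
    intro k
    rw [pow_mul (-1 : ℝ), one_pow]
    push_cast
    rw [show (2 * k * x : ℝ) = k * (2 * x) by ring]
    norm_num
    ring
  simp only [h5, h6, tsum_zero, add_zero, tsum_mul_left] at h4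
  have h7 : 8 * stripQ 1 (2 * x) =
      ∑' n : ℕ, (n : ℝ) ^ 2 * (1 + (-1) ^ n) * Real.exp (-(n * x)) := h4
  linarith

lemma ofReal_stripQ_one {x : ℝ} (hx : 0 < x) : ENNReal.ofReal (stripQ 1 x) =
    ∑' n : ℕ, ENNReal.ofReal (((n : ℝ) + 1) ^ 2) * ENNReal.ofReal (Real.exp (-((n + 1) * x))) := by
  have h1 := summable_stripQ (one_pow 2) hx
  rw [stripQ, h1.tsum_eq_zero_add, ENNReal.ofReal_add, ENNReal.ofReal_tsum_of_nonneg]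
  · simp only [one_pow, mul_one, Nat.cast_zero, Nat.cast_add, Nat.cast_one]
    simp only [ne_eq, OfNat.ofNat_ne_zero, not_false_eq_true, zero_pow, zero_mul,
      ENNReal.ofReal_zero, zero_add]
    exact tsum_congr fun n => ENNReal.ofReal_mul (by positivity)
  · intro n
    positivity
  · exact (summable_nat_add_iff 1).2 h1
  · positivity
  · exact tsum_nonneg fun n => by positivity

lemma summable_one_div_add_one_pow {k : ℕ} (hk : 2 ≤ k) :
    Summable fun n : ℕ => 1 / ((n : ℝ) + 1) ^ k := by
  have h := (summable_nat_add_iff 1).2 (Real.summable_one_div_nat_pow.2 hk)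
  simpa using h

/-- The mass of `exp (-x)` under `stripE (m + 1)`. -/
noncomputable def stripC (m : ℕ) : ℝ :=
  (2 * m + 2).factorial / ((m + 2).factorial * (m + 1).factorial) / 2 ^ (m + 2)

lemma stripC_nonneg (m : ℕ) : 0 ≤ stripC m := by
  unfold stripC
  positivity

lemma stripE_stripQ_one_comp {m : ℕ} (hm : 1 ≤ m) {c : ℝ} (hc : 0 < c) :
    stripE (m + 1) (fun x => ENNReal.ofReal (stripQ 1 (c * x))) =
      ENNReal.ofReal (stripC m / c ^ (2 * m + 3) * ∑' n : ℕ, 1 / ((n : ℝ) + 1) ^ (2 * m + 1)) := by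
  have hM : ∀ n : ℕ, Measurable fun x => ENNReal.ofReal (Real.exp (-((n + 1) * c * x))) :=
    fun n => by fun_prop
  have h1 : ∀ x, 0 < x → ENNReal.ofReal (stripQ 1 (c * x)) =
      ∑' n : ℕ, ENNReal.ofReal (((n : ℝ) + 1) ^ 2) *
        ENNReal.ofReal (Real.exp (-((n + 1) * c * x))) := by
    intro x hx
    rw [ofReal_stripQ_one (mul_pos hc hx)]
    simp only [mul_assoc]
  rw [stripE_congr _ h1, stripE_tsum _ fun n => (hM n).const_mul _, ← tsum_mul_left,
    ENNReal.ofReal_tsum_of_nonneg _ ((summable_one_div_add_one_pow (by omega)).mul_left _)]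
  · refine tsum_congr fun n => ?_
    rw [stripE_const_mul _ (hM n), stripE_exp (by positivity), ← ENNReal.ofReal_mul (by positivity)]
    congr 1
    have h2 : (n : ℝ) + 1 ≠ 0 := by positivity
    rw [stripC, mul_pow]
    field_simp
    ring
  · intro n
    exact mul_nonneg (div_nonneg (stripC_nonneg m) (by positivity)) (by positivity)

lemma stripE_stripQ {m : ℕ} (hm : 1 ≤ m) :
    stripE (m + 1) (fun x => ENNReal.ofReal (stripQ ((-1) ^ m) x)) =
      ENNReal.ofReal (stripC m * (1 - (1 - (-1) ^ m) / 2 ^ (2 * m + 1)) *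
        ∑' n : ℕ, 1 / ((n : ℝ) + 1) ^ (2 * m + 1)) := by
  have h1 := stripE_stripQ_one_comp hm one_pos
  simp only [one_mul, one_pow, div_one] at h1
  rcases neg_one_pow_eq_or ℝ m with h | h
  · rw [h, h1]
    simp
  rw [h]
  have h2 := stripE_stripQ_one_comp hm two_pos
  set Z := ∑' n : ℕ, 1 / ((n : ℝ) + 1) ^ (2 * m + 1)
  have hZ : 0 ≤ Z := tsum_nonneg fun n => by positivity
  have hC := stripC_nonneg m
  have hadd : ∀ x, 0 < x → ENNReal.ofReal (stripQ 1 x) =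
      ENNReal.ofReal (stripQ (-1) x) + ENNReal.ofReal 8 * ENNReal.ofReal (stripQ 1 (2 * x)) := by
    intro x hx
    rw [← stripQ_neg_one_add hx, ENNReal.ofReal_add (stripQ_nonneg (by norm_num) hx)
      (mul_nonneg (by norm_num) (stripQ_nonneg (one_pow 2) (by positivity))),
      ENNReal.ofReal_mul (by norm_num)]
  have hM2 : Measurable fun x => ENNReal.ofReal (stripQ 1 (2 * x)) :=
    (measurable_stripQ 1).comp (measurable_const_mul 2)
  rw [stripE_congr _ hadd, stripE_add _ (measurable_stripQ _) (hM2.const_mul _),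
    stripE_const_mul _ hM2, h2, ← ENNReal.ofReal_mul (by norm_num)] at h1
  have hfin : ENNReal.ofReal (8 * (stripC m / 2 ^ (2 * m + 3) * Z)) ≠ ⊤ := ENNReal.ofReal_ne_top
  rw [ENNReal.eq_sub_of_add_eq hfin h1, ← ENNReal.ofReal_sub _ (by positivity)]
  congr 1
  field_simp
  ring

lemma measurable_kirchhoff_chart {V : Type*} [Fintype V] (G : SimpleGraph V) (e₀ : G.edgeSet) :
    Measurable fun u => kirchhoff G (chart G e₀ u) := by
  unfold kirchhoff
  refine Finset.measurable_sum _ fun T _ => Finset.measurable_prod _ fun e _ => ?_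
  split_ifs with h
  · exact measurable_const
  · unfold chart
    split_ifs
    · exact measurable_const
    · exact measurable_pi_apply _

lemma lintegral_kirchhoff_zigzag_eq {m : ℕ} (hm : 1 ≤ m) (e₀ : (zigzag (m + 2)).edgeSet)
    (he₀ : (e₀ : Sym2 (Fin (m + 2 + 1))) =
      s((0 : Fin (m + 2 + 1)), (⟨m + 2, Nat.lt_succ_self _⟩ : Fin (m + 2 + 1)))) :
    ∫⁻ u in {u : {e : (zigzag (m + 2)).edgeSet // e ≠ e₀} → ℝ | ∀ e, 0 < u e},
      ENNReal.ofReal ((kirchhoff (zigzag (m + 2)) (chart (zigzag (m + 2)) e₀ u))⁻¹ ^ 2) =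
    ENNReal.ofReal (4 * (2 * m + 2).factorial / ((m + 2).factorial * (m + 1).factorial) *
      (1 - (1 - (-1) ^ m) / 2 ^ (2 * m + 1)) * ∑' n : ℕ, 1 / ((n : ℝ) + 1) ^ (2 * m + 1)) := by
  have hm2 : 2 ≤ m + 1 := by omega
  have h1 := lintegral_kirchhoff_zigzag hm2 e₀ (Subtype.ext (by rw [he₀, coe_zzEquiv]; rfl))
  have h2 := lintegral_exp_mul_opT_iterate norm_pole (m + 1)
  rw [lintegral_opT0_iterate_eq_stripE, ← h1] at h2
  have hε : (-1 : ℝ) ^ (m + 1 + 1) = (-1) ^ m := by ring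
  rw [hε, stripE_stripQ hm] at h2
  set Z := ∑' n : ℕ, 1 / ((n : ℝ) + 1) ^ (2 * m + 1)
  have hc : 0 < 4 * Real.pi ^ (2 * (m + 1 + 1)) := by positivity
  rw [← mul_assoc, ← ENNReal.ofReal_mul (by norm_num), ← ENNReal.ofReal_pow (by positivity),
    ← ENNReal.ofReal_mul (by positivity), ← ENNReal.ofReal_mul (by positivity)] at h2
  have h3 : 32 * Real.pi ^ 2 * (2 * Real.pi ^ 2) ^ (m + 1) *
      (stripC m * (1 - (1 - (-1) ^ m) / 2 ^ (2 * m + 1)) * Z) = 4 * Real.pi ^ (2 * (m + 1 + 1)) *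
      (4 * (2 * m + 2).factorial / ((m + 2).factorial * (m + 1).factorial) *
      (1 - (1 - (-1) ^ m) / 2 ^ (2 * m + 1)) * Z) := by
    rw [stripC, mul_pow, ← pow_mul]
    field_simp
    ring
  rw [h3, ENNReal.ofReal_mul hc.le] at h2
  exact (ENNReal.mul_right_inj (by simpa using hc) ENNReal.ofReal_ne_top).1 h2

/-- The Feynman residue of the zig-zag graph `Z_n` (in the affine chart where
the edge `{0, n}` is set to `1`) is finite and equals
`4·(2n−2)!/(n!·(n−1)!)·(1 − (1 − (−1)ⁿ)/2^{2n−3})·ζ(2n−3)`. -/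
theorem feynmanResidue_zigzag (n : ℕ) (hn : 3 ≤ n)
    (e₀ : (zigzag n).edgeSet)
    (he₀ : (e₀ : Sym2 (Fin (n + 1))) =
      s((0 : Fin (n + 1)), (⟨n, Nat.lt_succ_self n⟩ : Fin (n + 1)))) :
    IntegrableOn (fun u : {e : (zigzag n).edgeSet // e ≠ e₀} → ℝ =>
        (kirchhoff (zigzag n) (chart (zigzag n) e₀ u))⁻¹ ^ 2)
      {u | ∀ e, 0 < u e} ∧
    ∫ u in {u : {e : (zigzag n).edgeSet // e ≠ e₀} → ℝ | ∀ e, 0 < u e},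
        (kirchhoff (zigzag n) (chart (zigzag n) e₀ u))⁻¹ ^ 2 =
      4 * ((2 * n - 2).factorial : ℝ) /
          ((n.factorial : ℝ) * ((n - 1).factorial : ℝ)) *
        (1 - (1 - (-1 : ℝ) ^ n) / 2 ^ (2 * n - 3)) *
        ∑' k : ℕ, 1 / ((k : ℝ) + 1) ^ (2 * n - 3) := by
  obtain ⟨m, rfl⟩ : ∃ m, n = m + 2 := ⟨n - 2, by omega⟩
  have h := lintegral_kirchhoff_zigzag_eq (by omega) e₀ he₀
  have hmeas : AEStronglyMeasurable (fun u : {e : (zigzag (m + 2)).edgeSet // e ≠ e₀} → ℝ =>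
      (kirchhoff (zigzag (m + 2)) (chart (zigzag (m + 2)) e₀ u))⁻¹ ^ 2)
      (volume.restrict {u | ∀ e, 0 < u e}) :=
    ((measurable_kirchhoff_chart _ e₀).inv.pow_const 2).aestronglyMeasurable
  have hpos : 0 ≤ᵐ[volume.restrict {u | ∀ e, 0 < u e}]
      fun u : {e : (zigzag (m + 2)).edgeSet // e ≠ e₀} → ℝ =>
        (kirchhoff (zigzag (m + 2)) (chart (zigzag (m + 2)) e₀ u))⁻¹ ^ 2 :=
    Filter.Eventually.of_forall fun u => sq_nonneg _
  refine ⟨⟨hmeas, ?_⟩, ?_⟩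
  · rw [hasFiniteIntegral_iff_ofReal hpos, h]
    exact ENNReal.ofReal_lt_top
  · rw [integral_eq_lintegral_of_nonneg_ae hpos hmeas, h, show 2 * (m + 2) - 2 = 2 * m + 2 by omega,
      show m + 2 - 1 = m + 1 by omega, show 2 * (m + 2) - 3 = 2 * m + 1 by omega,
      show (-1 : ℝ) ^ (m + 2) = (-1) ^ m by ring]
    refine ENNReal.toReal_ofReal ?_
    refine mul_nonneg (mul_nonneg (by positivity) ?_) (tsum_nonneg fun k => by positivity)
    rw [sub_nonneg, div_le_one (by positivity)]
    have h2 : (2 : ℝ) ^ 1 ≤ 2 ^ (2 * m + 1) := pow_le_pow_right₀ one_le_two (by omega)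
    rcases neg_one_pow_eq_or ℝ m with h3 | h3 <;> rw [h3] <;> linarith
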